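/- arXiv:math/0406284 — 3 statements merged into one kernel-verified Lean document; each statement's English description precedes it below -/
import Mathlib

section
/- Let g(n) denote the number of 3×3×3×3 magic cubes with magic sum n. Then the generating function ∑_{n≥0} g(n) t^n, as a formal power series with integer coefficients, equals r(t)/s(t); that is, s(t)·∑_{n≥0} g(n) t^n = r(t) holds in ℤ⟦t⟧, where s(t) = (t³+1)⁴ (t¹²+t⁹+t⁶+t³+1)(1−t³)⁹ (t⁶+t³+1) and r(t) = t⁵⁴+150t⁵¹+5837t⁴⁸+63127t⁴⁵+331124t⁴²+1056374t³⁹+2326380t³⁶+3842273t³³+5055138t³⁰+5512456t²⁷+5055138t²⁴+3842273t²¹+2326380t¹⁸+1056374t¹⁵+331124t¹²+63127t⁹+5837t⁶+150t³+1. -/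
/-!
Averaging the lines and diagonals shows that the centre of a magic cube is a third of its magic sum
(`centre_zero`), so the magic sum is `3 * m`, and the generating function is obtained by substituting
`t ^ 3` in the generating function of the number of magic cubes of sum `3 * m` (`expand_cubes`).

Subtracting `m` from every entry leaves an array with zero line and diagonal sums. These arrays form
a lattice of rank eight, parametrized by eight corner values (`eq_ent_params`). The cubes are sorted
by their four deviations from `m` next to the centre, one for each axis. The four deviations have
equal parity, and the permutations and reflections of the axes act on them by signed permutations, so
it suffices to count the cubes with descending nonnegative deviations, each such quadruple weighted
by the size of its orbit (`card_cubes_eq`). Those deviations are written as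
`2 * b₁ + 2 * b₂ + 2 * b₃ + l`, `2 * b₂ + 2 * b₃ + l`, `2 * b₃ + l`, `l`, and
`m = v + 2 * b₁ + 2 * b₂ + 2 * b₃ + l` with `v ≥ 0`.

For fixed `v, b₁, b₂, b₃, l` the cube is determined by the entries at four edge midpoints. They range
over the lattice points of a given parity in a four-dimensional box, each of whose sixteen corners is
cut off by a bound on the `ℓ¹` distance (`card_layer`); all other entries are then automatically
nonnegative. The cut off simplices overlap at most in pairs, at the two ends of an edge of the box, so
inclusion-exclusion counts these points (`incl_excl`). The count is a sum of functions of single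
linear forms in `v, b₁, b₂, b₃, l`, each a polynomial plus a multiple of a sign where the form is
nonnegative, and zero elsewhere (`fibre_card`).

The sum of such a function of a linear form over all `v, b₁, b₂, b₃, l`, graded by `m`, is a rational
function. Where the form has coefficients of both signs, Elliott's identity (`W_elliott`) splits the
sum into similar ones with a form of constant sign, for which the rational function is explicit.
Multiplied by a common denominator, the asserted identity becomes one between integer polynomials.
They agree because they take the same value at `2 ^ 160`, which is larger than the sum of the absolute
values of the coefficients of their difference (`series_eq`).
-/

open PowerSeries Finset

/-- The number of 3×3×3×3 magic cubes with magic sum `n`: arrays of nonnegative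
integers indexed by `{1,2,3}⁴` all of whose axis-parallel line sums and all of whose
8 main diagonal sums equal `n`.  A main diagonal is indexed by `ε ∈ {0,1}⁴` with
`ε₁ = 0`, the `j`-th index running forward if `ε j = 0` and backward if `ε j = 1`. -/
noncomputable def magicCube3333 (n : ℕ) : ℕ :=
  Nat.card {a : (Fin 4 → Fin 3) → ℕ //
    (∀ j : Fin 4, ∀ g : Fin 4 → Fin 3, ∑ t : Fin 3, a (Function.update g j t) = n) ∧
    (∀ ε : Fin 4 → Bool, ε 0 = false →
      ∑ t : Fin 3, a (fun j => if ε j then t.rev else t) = n)}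

namespace MagicCube

/-! ### Weighted geometric series -/

/-- For a list of generators `gᵢ = (dᵢ, vᵢ)`, the series `∑ H (∑ vᵢ jᵢ) X ^ (∑ (dᵢ + 1) jᵢ)`, summed
over all `j` with natural number entries.  A generator carries its degree minus one, so that degrees
are positive and every coefficient is a finite sum. -/
noncomputable def W : List (ℕ × ℤ) → (ℤ → ℤ) → PowerSeries ℤ
  | [], H => C (H 0)
  | g :: gs, H => mk fun n => ∑ j ∈ range (n + 1),
      coeff n (X ^ ((g.1 + 1) * j) * W gs fun k => H (k + g.2 * j))

theorem W_nil (H : ℤ → ℤ) : W [] H = C (H 0) := rfl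

/-- The bound on the new summation variable is immaterial once it exceeds `n`. -/
theorem coeff_W_cons (g : ℕ × ℤ) (gs : List (ℕ × ℤ)) (H : ℤ → ℤ) {n N : ℕ} (hN : n < N) :
    coeff n (W (g :: gs) H) = ∑ j ∈ range N,
      if (g.1 + 1) * j ≤ n then coeff (n - (g.1 + 1) * j) (W gs fun k => H (k + g.2 * j)) else 0 := by
  simp only [W, coeff_mk, coeff_X_pow_mul']
  refine sum_subset (by simpa using hN) fun j _ hj => if_neg ?_
  simp only [mem_range, not_lt] at hj
  nlinarith

/-- Geometric recursion: the exponent of the first generator is zero, or can be lowered by one. -/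
theorem W_cons (g : ℕ × ℤ) (gs : List (ℕ × ℤ)) (H : ℤ → ℤ) :
    W (g :: gs) H = W gs H + X ^ (g.1 + 1) * W (g :: gs) fun k => H (k + g.2) := by
  ext n
  rw [map_add, coeff_X_pow_mul', coeff_W_cons g gs H (Nat.lt_succ_self n), sum_range_succ']
  rw [add_comm]
  congr 1
  · simp
  split_ifs with h
  · rw [coeff_W_cons g gs _ (show n - (g.1 + 1) < n by omega)]
    refine sum_congr rfl fun j _ => ?_
    have e : (g.1 + 1) * (j + 1) = (g.1 + 1) * j + (g.1 + 1) := by ring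
    rw [e]
    have e3 : ((g.1 + 1) * j + (g.1 + 1) ≤ n) ↔ ((g.1 + 1) * j ≤ n - (g.1 + 1)) := by omega
    simp only [e3]
    split_ifs with h2
    · rw [Nat.sub_sub, add_comm ((g.1 + 1) * j)]
      congr 3
      funext k
      push_cast
      ring_nf
    · rfl
  · refine sum_eq_zero fun j _ => if_neg ?_
    nlinarith

/-- The recursion of `W_cons` determines a functional of `H`, since its error term is pushed to
arbitrarily high degree.  All identities between the series `W` are proved by it. -/
theorem W_unique (d : ℕ) (v : ℤ) (F F' B : (ℤ → ℤ) → PowerSeries ℤ)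
    (hF : ∀ H, F H = B H + X ^ (d + 1) * F fun k => H (k + v))
    (hF' : ∀ H, F' H = B H + X ^ (d + 1) * F' fun k => H (k + v)) (H : ℤ → ℤ) : F H = F' H := by
  ext n
  induction n using Nat.strong_induction_on generalizing H with
  | _ n ih =>
    rw [hF, hF', map_add, map_add, coeff_X_pow_mul', coeff_X_pow_mul']
    split_ifs with h
    · rw [ih _ (by omega)]
    · rfl

theorem W_swap (x y : ℕ × ℤ) (gs : List (ℕ × ℤ)) (H : ℤ → ℤ) :
    W (x :: y :: gs) H = W (y :: x :: gs) H := by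
  refine W_unique x.1 x.2 (W (x :: y :: gs)) (W (y :: x :: gs)) (W (y :: gs))
    (fun H => W_cons _ _ _) (fun H => ?_) H
  rw [← sub_eq_iff_eq_add]
  refine W_unique y.1 y.2
    (fun H => W (y :: x :: gs) H - X ^ (x.1 + 1) * W (y :: x :: gs) fun k => H (k + x.2))
    (W (y :: gs)) (W gs) (fun H => ?_) (fun H => W_cons _ _ _) H
  have h1 := W_cons y (x :: gs) H
  have h2 := W_cons y (x :: gs) (fun k => H (k + x.2))
  have h3 := W_cons x gs H
  simp only [add_right_comm _ _ x.2] at h2 ⊢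
  linear_combination h1 - X ^ (x.1 + 1) * h2 + h3

theorem W_congr_tail (g : ℕ × ℤ) {gs gs' : List (ℕ × ℤ)} (h : W gs = W gs') :
    W (g :: gs) = W (g :: gs') := by
  funext H
  exact W_unique g.1 g.2 (W (g :: gs)) (W (g :: gs')) (W gs) (fun H => W_cons _ _ _)
    (fun H => by rw [h]; exact W_cons _ _ _) H

theorem W_perm {gs gs' : List (ℕ × ℤ)} (h : gs.Perm gs') : W gs = W gs' := by
  induction h with
  | nil => rfl
  | cons x _ ih => exact W_congr_tail x ih
  | swap x y l => exact funext fun H => W_swap _ _ _ H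
  | trans _ _ ih1 ih2 => exact ih1.trans ih2

/-- Elliott's partial fraction identity
`1 / ((1 - x) (1 - y)) = (1 / (1 - x) + 1 / (1 - y) - 1) / (1 - x y)`, which trades two generators of
weights of opposite sign for lists in which one of them is replaced by their sum. -/
theorem W_elliott (x y : ℕ × ℤ) (gs : List (ℕ × ℤ)) (H : ℤ → ℤ) :
    W (x :: y :: gs) H = W ((x.1 + y.1 + 1, x.2 + y.2) :: x :: gs) H +
      W ((x.1 + y.1 + 1, x.2 + y.2) :: y :: gs) H - W ((x.1 + y.1 + 1, x.2 + y.2) :: gs) H := by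
  refine W_unique (x.1 + y.1 + 1) (x.2 + y.2) (W (x :: y :: gs))
    (fun H => W ((x.1 + y.1 + 1, x.2 + y.2) :: x :: gs) H +
      W ((x.1 + y.1 + 1, x.2 + y.2) :: y :: gs) H - W ((x.1 + y.1 + 1, x.2 + y.2) :: gs) H)
    (fun H => W (x :: gs) H + W (y :: gs) H - W gs H) (fun H => ?_) (fun H => ?_) H
  · have h1 := W_cons x (y :: gs) H
    have h2 := W_cons y (x :: gs) (fun k => H (k + x.2))
    have h3 := W_cons x gs H
    rw [← W_swap x y] at h2
    rw [← W_swap x y] at h2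
    have e : (fun k => H (k + (x.2 + y.2))) = fun k => H (k + y.2 + x.2) := by
      funext k; ring_nf
    rw [e]
    linear_combination h1 + X ^ (x.1 + 1) * h2 - h3
  · have h1 := W_cons (x.1 + y.1 + 1, x.2 + y.2) (x :: gs) H
    have h2 := W_cons (x.1 + y.1 + 1, x.2 + y.2) (y :: gs) H
    have h3 := W_cons (x.1 + y.1 + 1, x.2 + y.2) gs H
    simp only at h1 h2 h3 ⊢
    linear_combination h1 + h2 - h3

theorem W_congr_nonneg (gs : List (ℕ × ℤ)) (hg : ∀ g ∈ gs, 0 ≤ g.2) (H H' : ℤ → ℤ)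
    (h : ∀ k, 0 ≤ k → H k = H' k) : W gs H = W gs H' := by
  induction gs generalizing H H' with
  | nil => simp [W_nil, h 0 le_rfl]
  | cons g gs ih =>
    simp only [List.mem_cons, forall_eq_or_imp] at hg
    simp only [W]
    congr 1
    funext n
    refine sum_congr rfl fun j _ => ?_
    rw [ih hg.2 _ _ fun k hk => h _ (by have := hg.1; positivity)]

theorem W_eq_zero_of_nonpos (gs : List (ℕ × ℤ)) (hg : ∀ g ∈ gs, g.2 ≤ 0) (H : ℤ → ℤ)
    (h : ∀ k, k ≤ 0 → H k = 0) : W gs H = 0 := by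
  induction gs generalizing H with
  | nil => simp [W_nil, h 0 le_rfl]
  | cons g gs ih =>
    simp only [List.mem_cons, forall_eq_or_imp] at hg
    simp only [W]
    ext n
    rw [coeff_mk, map_zero]
    refine sum_eq_zero fun j _ => ?_
    rw [ih hg.2 _ fun k hk => h _ (by nlinarith [hg.1]), mul_zero, map_zero]

theorem W_linear (gs : List (ℕ × ℤ)) {ι : Type*} (s : Finset ι) (a : ι → ℤ) (H : ι → ℤ → ℤ) :
    W gs (fun k => ∑ i ∈ s, a i * H i k) = ∑ i ∈ s, C (a i) * W gs (H i) := by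
  induction gs generalizing H with
  | nil => simp [W_nil]
  | cons g gs ih =>
    ext n
    simp only [W, coeff_mk, map_sum, coeff_C_mul, ih]
    simp only [mul_sum]
    simp only [map_sum]
    rw [sum_comm]
    refine sum_congr rfl fun i _ => sum_congr rfl fun j _ => ?_
    rw [mul_left_comm, coeff_C_mul]

/-! ### Elliott reduction -/

/-- The function on `ℤ` vanishing on negative numbers and given for `k ≥ 0` by
`∑ j < 5, a j * (k.choose j) + a 5 * (-1) ^ k`. -/
def quasi (a : ℕ → ℤ) (k : ℤ) : ℤ :=
  if k < 0 then 0 else ∑ j ∈ range 5, a j * (k.toNat.choose j : ℤ) + a 5 * (-1) ^ k.toNat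

/-- Elliott reduction of the generator list `P ++ M ++ Z`, where `P`, `M`, `Z` hold the generators of
positive, negative and zero weight: a signed list of generator lists.  A list without positive
generators but with a negative one contributes nothing (when `H` vanishes on `k ≤ 0`).  The first
argument is fuel; when it runs out the list is returned as it stands. -/
def elliott : ℕ → List (ℕ × ℤ) → List (ℕ × ℤ) → List (ℕ × ℤ) → List (ℤ × List (ℕ × ℤ))
  | _, P, [], Z => [(1, P ++ Z)]
  | _, [], _ :: _, _ => []
  | 0, P, M, Z => [(1, P ++ M ++ Z)]
  | f + 1, x :: P, y :: M, Z =>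
    let g := (x.1 + y.1 + 1, x.2 + y.2)
    if 0 < g.2 then
      elliott f (g :: x :: P) M Z ++ elliott f (g :: P) (y :: M) Z ++
        (elliott f (g :: P) M Z).map fun l => (-l.1, l.2)
    else if g.2 < 0 then
      elliott f (x :: P) (g :: M) Z ++ elliott f P (g :: y :: M) Z ++
        (elliott f P (g :: M) Z).map fun l => (-l.1, l.2)
    else
      elliott f (x :: P) M (g :: Z) ++ elliott f P (y :: M) (g :: Z) ++
        (elliott f P M (g :: Z)).map fun l => (-l.1, l.2)

/-- The sum of the series `W · H` over a signed list of generator lists. -/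
noncomputable def leafSum (H : ℤ → ℤ) (l : List (ℤ × List (ℕ × ℤ))) : PowerSeries ℤ :=
  (l.map fun t => C t.1 * W t.2 H).sum

theorem leafSum_append (H : ℤ → ℤ) (l l' : List (ℤ × List (ℕ × ℤ))) :
    leafSum H (l ++ l') = leafSum H l + leafSum H l' := by simp [leafSum]

theorem leafSum_neg (H : ℤ → ℤ) (l : List (ℤ × List (ℕ × ℤ))) :
    leafSum H (l.map fun t => (-t.1, t.2)) = - leafSum H l := by
  induction l with
  | nil => simp [leafSum]
  | cons t l ih =>
    simp only [leafSum, List.map_cons, List.sum_cons] at ih ⊢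
    rw [ih]; simp; ring

theorem elliott_spec (H : ℤ → ℤ) (hH : ∀ k, k ≤ 0 → H k = 0) (f : ℕ)
    (P M Z : List (ℕ × ℤ)) (hM : ∀ g ∈ M, g.2 < 0) (hZ : ∀ g ∈ Z, g.2 = 0) :
    W (P ++ M ++ Z) H = leafSum H (elliott f P M Z) := by
  induction f generalizing P M Z with
  | zero =>
    match P, M with
    | P, [] => simp [elliott, leafSum]
    | [], y :: M =>
      rw [W_eq_zero_of_nonpos _ _ _ hH]
      · simp [elliott, leafSum]
      · intro g hg
        simp only [List.nil_append, List.mem_append] at hg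
        exact hg.elim (fun h => (hM g h).le) fun h => (hZ g h).le
    | x :: P, y :: M => simp [elliott, leafSum]
  | succ f ih =>
    match P, M with
    | P, [] => simp [elliott, leafSum]
    | [], y :: M =>
      rw [W_eq_zero_of_nonpos _ _ _ hH]
      · simp [elliott, leafSum]
      · intro g hg
        simp only [List.nil_append, List.mem_append] at hg
        exact hg.elim (fun h => (hM g h).le) fun h => (hZ g h).le
    | x :: P, y :: M =>
      have hy := hM y (by simp)
      have hM' : ∀ g ∈ M, g.2 < 0 := fun g hg => hM g (by simp [hg])
      have e : W (x :: P ++ y :: M ++ Z) = W (x :: y :: (P ++ M ++ Z)) := W_perm (by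
        simp only [List.cons_append, List.append_assoc]
        exact (List.perm_middle).cons x)
      rw [e, W_elliott, elliott]
      obtain ⟨g, hgg⟩ : ∃ g : ℕ × ℤ, g = (x.1 + y.1 + 1, x.2 + y.2) := ⟨_, rfl⟩
      have hg2 : x.2 + y.2 = g.2 := by rw [hgg]
      have hgg' : (x.1 + y.1 + 1, g.2) = g := by rw [hgg]
      simp only [hg2, hgg']
      split_ifs with h1 h2
      · rw [leafSum_append, leafSum_append, leafSum_neg, ← ih _ _ _ hM' hZ, ← ih _ _ _ hM hZ,
          ← ih _ _ _ hM' hZ, sub_eq_add_neg]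
        have e1 : W (g :: y :: (P ++ M ++ Z)) = W (g :: P ++ y :: M ++ Z) := W_perm (by
          simp only [List.cons_append, List.append_assoc]
          exact (List.perm_middle.symm).cons g)
        rw [e1]; rfl
      · have hM2 : ∀ t ∈ g :: M, t.2 < 0 := by
          simp only [List.mem_cons, forall_eq_or_imp]; exact ⟨h2, hM'⟩
        have hM3 : ∀ t ∈ g :: y :: M, t.2 < 0 := by
          simp only [List.mem_cons, forall_eq_or_imp]; exact ⟨h2, hy, hM'⟩
        rw [leafSum_append, leafSum_append, leafSum_neg, ← ih _ _ _ hM2 hZ, ← ih _ _ _ hM3 hZ,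
          ← ih _ _ _ hM2 hZ, sub_eq_add_neg]
        congr 1
        · congr 1
          · refine congrFun (W_perm ?_) H
            simp only [List.cons_append, List.append_assoc]
            exact (List.Perm.swap _ _ _).trans ((List.perm_middle.symm).cons x)
          · refine congrFun (W_perm ?_) H
            simp only [List.append_assoc, List.cons_append]
            exact (List.perm_middle.symm.cons g).trans List.perm_middle.symm
        · rw [W_perm]
          simp only [List.append_assoc, List.cons_append]
          exact List.perm_middle.symm
      · have hZ' : ∀ t ∈ g :: Z, t.2 = 0 := by
          simp only [List.mem_cons, forall_eq_or_imp]; exact ⟨by omega, hZ⟩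
        rw [leafSum_append, leafSum_append, leafSum_neg, ← ih _ _ _ hM' hZ', ← ih _ _ _ hM hZ',
          ← ih _ _ _ hM' hZ', sub_eq_add_neg]
        congr 1
        · congr 1
          · refine congrFun (W_perm ?_) H
            have := (List.perm_middle (a := g) (l₁ := x :: P ++ M) (l₂ := Z)).symm
            simpa using this
          · refine congrFun (W_perm ?_) H
            have h1 := (List.perm_middle (a := g) (l₁ := P ++ y :: M) (l₂ := Z)).symm
            have h2 := ((List.perm_middle (a := y) (l₁ := P) (l₂ := M ++ Z)).symm).cons g
            simp only [List.append_assoc, List.cons_append] at h1 h2 ⊢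
            exact h2.trans h1
        · rw [W_perm]
          exact (List.perm_middle (a := g) (l₁ := P ++ M) (l₂ := Z)).symm

/-! ### Numerical evaluation of the series at a power of two -/

/-- The exponents `m` of the factors `1 - X ^ m` of the common denominator. -/
def exps : List ℕ := [1, 2, 3, 4, 5, 6, 7, 8, 10, 12]

/-- The ring operations used to evaluate `den ^ 9 * W gs (quasi a)`, where
`den = ∏ m ∈ exps, (1 - X ^ m)`, left open so that the same program computes both the value of this
polynomial at `base` (`evalScheme`) and an upper bound for its length, the sum of the absolute values
of its coefficients (`boundScheme`). -/
structure Scheme where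
  /-- Stands for `den / (1 - X ^ (d + 1))`. -/
  c : ℕ → ℤ
  /-- Stands for `X ^ (d + 1) * den / (1 - X ^ (d + 1))`. -/
  y : ℕ → ℤ
  /-- Stands for `den / (1 + X ^ (d + 1))`. -/
  s : ℕ → ℤ
  /-- Stands for `den`. -/
  L : ℤ
  /-- Stands for an integer constant. -/
  σ : ℤ → ℤ

namespace Scheme
variable (S : Scheme)

/-- Multiplication of a polynomial `∑ i < 5, fᵢ z ^ i` by `1 / (1 - X ^ (d + 1) * (1 + z) ^ v)` modulo
`z ^ 5`, for the generator `g = (d, v)`; the coefficient of `z ^ i` is scaled by `den ^ (l + i)`, where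
`l` is the number of factors. -/
def step (g : ℕ × ℤ) (f : ℤ × ℤ × ℤ × ℤ × ℤ) : ℤ × ℤ × ℤ × ℤ × ℤ :=
  match f with
  | (f0, f1, f2, f3, f4) =>
    let c := S.c g.1
    let y := S.y g.1
    let v1 := (g.2.toNat : ℤ)
    let v2 := (g.2.toNat.choose 2 : ℤ) * S.L
    let v3 := (g.2.toNat.choose 3 : ℤ) * S.L ^ 2
    let v4 := (g.2.toNat.choose 4 : ℤ) * S.L ^ 3
    let g0 := c * f0
    let g1 := c * f1 + y * (v1 * g0)
    let g2 := c * f2 + y * (v1 * g1 + v2 * g0)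
    let g3 := c * f3 + y * (v1 * g2 + v2 * g1 + v3 * g0)
    let g4 := c * f4 + y * (v1 * g3 + v2 * g2 + v3 * g1 + v4 * g0)
    (g0, g1, g2, g3, g4)

/-- The first five coefficients in `z` of `∏ 1 / (1 - X ^ (d + 1) * (1 + z) ^ v)`, that is, the series
`W gs (·.choose i)` for `i < 5`, scaled as in `step`. -/
def poly : List (ℕ × ℤ) → ℤ × ℤ × ℤ × ℤ × ℤ
  | [] => (1, 0, 0, 0, 0)
  | g :: gs => S.step g (poly gs)

/-- The series `W gs ((-1) ^ ·)`, scaled by `den ^ gs.length`. -/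
def sgn : List (ℕ × ℤ) → ℤ
  | [] => 1
  | g :: gs => (if g.2 % 2 = 0 then S.c g.1 else S.s g.1) * sgn gs

/-- The polynomial `den ^ 9 * W gs (quasi a)` for a list `gs` of at most five generators with
nonnegative weights. -/
def leaf (a : ℕ → ℤ) (gs : List (ℕ × ℤ)) : ℤ :=
  match S.poly gs with
  | (g0, g1, g2, g3, g4) =>
    S.L ^ (5 - gs.length) * (S.σ (a 4) * g4 + S.L * (S.σ (a 3) * g3 + S.L * (S.σ (a 2) * g2 +
      S.L * (S.σ (a 1) * g1 + S.L * (S.σ (a 0) * g0)))) +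
      if a 5 = 0 then 0 else S.L ^ 4 * (S.σ (a 5) * S.sgn gs))

/-- The polynomial `den ^ 9 * leafSum (quasi a) l`. -/
def leaves (a : ℕ → ℤ) (l : List (ℤ × List (ℕ × ℤ))) : ℤ :=
  l.foldr (fun t r => S.σ t.1 * S.leaf a t.2 + r) 0

end Scheme

/-- The evaluation point: a polynomial of length below `base` that vanishes at `base` is zero. -/
def base : ℕ := 2 ^ 160

/-- Evaluation at `base`. -/
def evalScheme : Scheme where
  c d := ((exps.erase (d + 1)).map fun m => 1 - (base : ℤ) ^ m).prod
  y d := (base : ℤ) ^ (d + 1) * ((exps.erase (d + 1)).map fun m => 1 - (base : ℤ) ^ m).prod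
  s d := (1 - (base : ℤ) ^ (d + 1)) * ((exps.erase (2 * (d + 1))).map fun m => 1 - (base : ℤ) ^ m).prod
  L := (exps.map fun m => 1 - (base : ℤ) ^ m).prod
  σ z := z

/-- Bounds for lengths; `den` is a product of ten factors of length two. -/
def boundScheme : Scheme where
  c _ := 2 ^ 9
  y _ := 2 ^ 9
  s _ := 2 ^ 10
  L := 2 ^ 10
  σ z := |z|

/-! ### Polynomials known by their value at a large integer -/

/-- `F` is a polynomial with value `a` at `base`, and `b` bounds its length: `b` is the sum of the
coefficients of a polynomial `q` dominating `F` coefficientwise. -/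
def NumRep (F : PowerSeries ℤ) (a b : ℤ) : Prop :=
  ∃ p q : Polynomial ℤ, (p : PowerSeries ℤ) = F ∧ p.eval (base : ℤ) = a ∧
    (∀ i, |p.coeff i| ≤ q.coeff i) ∧ q.eval 1 = b

namespace NumRep

theorem add {F F' : PowerSeries ℤ} {a b a' b' : ℤ} (h : NumRep F a b) (h' : NumRep F' a' b') :
    NumRep (F + F') (a + a') (b + b') := by
  obtain ⟨p, q, rfl, rfl, hq, rfl⟩ := h
  obtain ⟨p', q', rfl, rfl, hq', rfl⟩ := h'
  refine ⟨p + p', q + q', by simp, by simp, fun i => ?_, by simp⟩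
  rw [Polynomial.coeff_add, Polynomial.coeff_add]
  exact (abs_add_le _ _).trans (add_le_add (hq i) (hq' i))

theorem mul {F F' : PowerSeries ℤ} {a b a' b' : ℤ} (h : NumRep F a b) (h' : NumRep F' a' b') :
    NumRep (F * F') (a * a') (b * b') := by
  obtain ⟨p, q, rfl, rfl, hq, rfl⟩ := h
  obtain ⟨p', q', rfl, rfl, hq', rfl⟩ := h'
  refine ⟨p * p', q * q', by simp, by simp, fun i => ?_, by simp⟩
  rw [Polynomial.coeff_mul, Polynomial.coeff_mul]
  refine (abs_sum_le_sum_abs _ _).trans (sum_le_sum fun x _ => ?_)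
  rw [abs_mul]
  exact mul_le_mul (hq _) (hq' _) (abs_nonneg _) ((abs_nonneg _).trans (hq _))

theorem const (z : ℤ) : NumRep (C z) z |z| := by
  refine ⟨Polynomial.C z, Polynomial.C |z|, Polynomial.coe_C z, by simp, fun i => ?_, by simp⟩
  rw [Polynomial.coeff_C, Polynomial.coeff_C]
  split_ifs <;> simp

theorem zero : NumRep 0 0 0 := by simpa using const 0

theorem one : NumRep 1 1 1 := by simpa using const 1

theorem natCast (n : ℕ) : NumRep (C (n : ℤ)) n n := by simpa using const (n : ℤ)

theorem X_pow (m : ℕ) : NumRep (X ^ m) ((base : ℤ) ^ m) 1 := by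
  refine ⟨Polynomial.X ^ m, Polynomial.X ^ m, by simp, by simp, fun i => ?_, by simp⟩
  rw [Polynomial.coeff_X_pow]
  split_ifs <;> simp

theorem sub {F F' : PowerSeries ℤ} {a b a' b' : ℤ} (h : NumRep F a b) (h' : NumRep F' a' b') :
    NumRep (F - F') (a - a') (b + b') := by
  have := h.add ((const (-1)).mul h')
  simpa [sub_eq_add_neg] using this

theorem pow {F : PowerSeries ℤ} {a b : ℤ} (h : NumRep F a b) (n : ℕ) : NumRep (F ^ n) (a ^ n) (b ^ n) := by
  induction n with
  | zero => simpa using one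
  | succ n ih => simpa only [pow_succ] using ih.mul h

theorem one_sub_X_pow (m : ℕ) : NumRep (1 - X ^ m) (1 - (base : ℤ) ^ m) 2 := one.sub (X_pow m)

theorem prod_one_sub (l : List ℕ) : NumRep (l.map fun m => (1 - X ^ m : PowerSeries ℤ)).prod
    (l.map fun m => 1 - (base : ℤ) ^ m).prod (2 ^ l.length) := by
  induction l with
  | nil => simpa using one
  | cons m l ih =>
    simp only [List.map_cons, List.prod_cons, List.length_cons, pow_succ']
    exact (one_sub_X_pow m).mul ih

end NumRep

/-- The coefficients are digits in base `N`, so the lowest one is divisible by `N` and hence zero. -/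
theorem poly_eq_zero_of_eval (N : ℤ) (p : Polynomial ℤ) (hp : ∀ i, |p.coeff i| < N)
    (h0 : p.eval N = 0) : p = 0 := by
  have key : ∀ n, ∀ p : Polynomial ℤ, (∀ i, |p.coeff i| < N) → p.eval N = 0 →
      p.coeff n = 0 := by
    have c0 : ∀ p : Polynomial ℤ, (∀ i, |p.coeff i| < N) → p.eval N = 0 → p.coeff 0 = 0 := by
      intro p hp h0
      rw [← Polynomial.divX_mul_X_add p] at h0
      simp only [Polynomial.eval_add, Polynomial.eval_mul, Polynomial.eval_X,
        Polynomial.eval_C] at h0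
      exact Int.eq_zero_of_abs_lt_dvd (m := N) ⟨-(p.divX.eval N), by linarith⟩ (hp 0)
    intro n
    induction n with
    | zero => exact c0
    | succ n ih =>
      intro p hp h0
      have hc := c0 p hp h0
      rw [← Polynomial.coeff_divX]
      refine ih _ (fun i => by rw [Polynomial.coeff_divX]; exact hp _) ?_
      rw [← Polynomial.divX_mul_X_add p, hc] at h0
      simp only [map_zero, add_zero, Polynomial.eval_mul, Polynomial.eval_X] at h0
      have hN : 0 < N := (abs_nonneg _).trans_lt (hp 0)
      exact (mul_eq_zero.mp h0).resolve_right hN.ne'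
  ext n
  simpa using key n p hp h0

theorem NumRep.eq_zero {F : PowerSeries ℤ} {b : ℤ} (h : NumRep F 0 b) (hb : b < base) : F = 0 := by
  obtain ⟨p, q, rfl, h0, hq, rfl⟩ := h
  have hq0 : ∀ i, 0 ≤ q.coeff i := fun i => (abs_nonneg _).trans (hq i)
  rw [poly_eq_zero_of_eval _ p (fun i => ?_) h0, Polynomial.coe_zero]
  refine (hq i).trans_lt (lt_of_le_of_lt ?_ hb)
  rw [Polynomial.eval_eq_sum_range]
  simp only [one_pow, mul_one]
  by_cases hi : i ∈ range (q.natDegree + 1)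
  · exact single_le_sum (f := fun i => q.coeff i) (fun i _ => hq0 i) hi
  · simp only [mem_range, not_lt] at hi
    rw [Polynomial.coeff_eq_zero_of_natDegree_lt (by omega)]
    exact sum_nonneg fun i _ => hq0 i

/-- The common denominator of all the rational functions in play. -/
noncomputable def den : PowerSeries ℤ := (exps.map fun m => (1 - X ^ m : PowerSeries ℤ)).prod

/-- The quotient `den / (1 - X ^ m)`, for `m ∈ exps`. -/
noncomputable def cof (m : ℕ) : PowerSeries ℤ :=
  ((exps.erase m).map fun m => (1 - X ^ m : PowerSeries ℤ)).prod

theorem cof_mul {m : ℕ} (hm : m ∈ exps) : cof m * (1 - X ^ m) = den := by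
  have := (List.perm_cons_erase hm).map (fun m => (1 - X ^ m : PowerSeries ℤ))
  rw [den, this.prod_eq, List.map_cons, List.prod_cons, mul_comm]
  rfl

theorem rep_den : NumRep den evalScheme.L boundScheme.L := NumRep.prod_one_sub exps

theorem rep_cof {m : ℕ} (hm : m ∈ exps) :
    NumRep (cof m) ((exps.erase m).map fun m => 1 - (base : ℤ) ^ m).prod (2 ^ 9) := by
  have := NumRep.prod_one_sub (exps.erase m)
  rwa [List.length_erase_of_mem hm] at this

theorem rep_c {d : ℕ} (hm : d + 1 ∈ exps) : NumRep (cof (d + 1)) (evalScheme.c d) (boundScheme.c d) :=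
  rep_cof hm

theorem rep_y {d : ℕ} (hm : d + 1 ∈ exps) :
    NumRep (X ^ (d + 1) * cof (d + 1)) (evalScheme.y d) (boundScheme.y d) := by
  have := (NumRep.X_pow (d + 1)).mul (rep_cof hm)
  rwa [one_mul] at this

theorem rep_s {d : ℕ} (hm : 2 * (d + 1) ∈ exps) :
    NumRep ((1 - X ^ (d + 1)) * cof (2 * (d + 1))) (evalScheme.s d) (boundScheme.s d) :=
  (NumRep.one_sub_X_pow (d + 1)).mul (rep_cof hm)

theorem rep_σ (z : ℤ) : NumRep (C z) (evalScheme.σ z) (boundScheme.σ z) := NumRep.const z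

/-- The binomial coefficient `k.choose j`, for `k ≥ 0`. -/
def binom (j : ℕ) (k : ℤ) : ℤ := (k.toNat.choose j : ℤ)

/-- `W_cons` for binomial weights, through Vandermonde's identity for `(k + v).choose j`. -/
theorem W_binom_cons (d : ℕ) (v : ℕ) (gs : List (ℕ × ℤ)) (hg : ∀ g ∈ gs, 0 ≤ g.2) (j : ℕ) :
    (1 - X ^ (d + 1)) * W ((d, (v : ℤ)) :: gs) (binom j) = W gs (binom j) +
      X ^ (d + 1) * ∑ i ∈ range j, C (v.choose (j - i) : ℤ) * W ((d, (v : ℤ)) :: gs) (binom i) := by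
  have h := W_cons (d, (v : ℤ)) gs (binom j)
  have h2 : W ((d, (v : ℤ)) :: gs) (fun k => binom j (k + v)) =
      W ((d, (v : ℤ)) :: gs) (fun k => ∑ i ∈ range (j + 1), (v.choose (j - i) : ℤ) * binom i k) := by
    refine W_congr_nonneg _ (by simpa using hg) _ _ fun k hk => ?_
    lift k to ℕ using hk
    simp only [binom, ← Nat.cast_add, Int.toNat_natCast]
    rw [Nat.add_choose_eq, Finset.Nat.sum_antidiagonal_eq_sum_range_succ_mk]
    push_cast
    exact sum_congr rfl fun i _ => mul_comm _ _
  simp only at h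
  rw [h2, W_linear, sum_range_succ] at h
  simp only [Nat.sub_self, Nat.choose_zero_right, Nat.cast_one, map_one, one_mul] at h
  linear_combination h

/-- The tuples `f` and `e` evaluate and bound the scaled series computed by `Scheme.poly`. -/
def PolyRep (gs : List (ℕ × ℤ)) (f e : ℤ × ℤ × ℤ × ℤ × ℤ) : Prop :=
  NumRep (den ^ gs.length * W gs (binom 0)) f.1 e.1 ∧
  NumRep (den ^ (gs.length + 1) * W gs (binom 1)) f.2.1 e.2.1 ∧
  NumRep (den ^ (gs.length + 2) * W gs (binom 2)) f.2.2.1 e.2.2.1 ∧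
  NumRep (den ^ (gs.length + 3) * W gs (binom 3)) f.2.2.2.1 e.2.2.2.1 ∧
  NumRep (den ^ (gs.length + 4) * W gs (binom 4)) f.2.2.2.2 e.2.2.2.2

theorem polyRep_step (g : ℕ × ℤ) (gs : List (ℕ × ℤ)) (hg : ∀ g ∈ gs, 0 ≤ g.2) (h0 : 0 ≤ g.2)
    (hd : g.1 + 1 ∈ exps) (f e : ℤ × ℤ × ℤ × ℤ × ℤ) (h : PolyRep gs f e) :
    PolyRep (g :: gs) (evalScheme.step g f) (boundScheme.step g e) := by
  obtain ⟨d, v⟩ := g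
  lift v to ℕ using h0
  obtain ⟨f0, f1, f2, f3, f4⟩ := f
  obtain ⟨e0, e1, e2, e3, e4⟩ := e
  obtain ⟨h0, h1, h2, h3, h4⟩ := h
  simp only at h0 h1 h2 h3 h4 hd
  have r := W_binom_cons d v gs hg
  have r0 := r 0
  have r1 := r 1
  have r2 := r 2
  have r3 := r 3
  have r4 := r 4
  simp only [sum_range_succ, range_zero, sum_empty, zero_add, Nat.reduceSub, Nat.choose_one_right,
    mul_zero, add_zero, Nat.sub_zero] at r0 r1 r2 r3 r4
  have hc := cof_mul hd
  have v1 := NumRep.natCast v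
  have v2 := (NumRep.natCast (v.choose 2)).mul rep_den
  have v3 := (NumRep.natCast (v.choose 3)).mul (rep_den.pow 2)
  have v4 := (NumRep.natCast (v.choose 4)).mul (rep_den.pow 3)
  have g0 := (rep_c hd).mul h0
  have g1 := ((rep_c hd).mul h1).add ((rep_y hd).mul (v1.mul g0))
  have g2 := ((rep_c hd).mul h2).add ((rep_y hd).mul ((v1.mul g1).add (v2.mul g0)))
  have g3 := ((rep_c hd).mul h3).add ((rep_y hd).mul (((v1.mul g2).add (v2.mul g1)).add (v3.mul g0)))
  have g4 := ((rep_c hd).mul h4).add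
    ((rep_y hd).mul ((((v1.mul g3).add (v2.mul g2)).add (v3.mul g1)).add (v4.mul g0)))
  have q0 : cof (d + 1) * (den ^ gs.length * W gs (binom 0)) =
      den ^ (gs.length + 1) * W ((d, (v : ℤ)) :: gs) (binom 0) := by
    linear_combination den ^ gs.length * W ((d, (v : ℤ)) :: gs) (binom 0) * hc -
      cof (d + 1) * den ^ gs.length * r0
  rw [q0] at g0 g1 g2 g3 g4
  have q1 : cof (d + 1) * (den ^ (gs.length + 1) * W gs (binom 1)) + X ^ (d + 1) * cof (d + 1) *
      (C (v : ℤ) * (den ^ (gs.length + 1) * W ((d, (v : ℤ)) :: gs) (binom 0))) =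
      den ^ (gs.length + 1 + 1) * W ((d, (v : ℤ)) :: gs) (binom 1) := by
    linear_combination den ^ (gs.length + 1) * W ((d, (v : ℤ)) :: gs) (binom 1) * hc -
      cof (d + 1) * den ^ (gs.length + 1) * r1
  rw [q1] at g1 g2 g3 g4
  have q2 : cof (d + 1) * (den ^ (gs.length + 2) * W gs (binom 2)) + X ^ (d + 1) * cof (d + 1) *
      (C (v : ℤ) * (den ^ (gs.length + 1 + 1) * W ((d, (v : ℤ)) :: gs) (binom 1)) +
      C (v.choose 2 : ℤ) * den * (den ^ (gs.length + 1) * W ((d, (v : ℤ)) :: gs) (binom 0))) =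
      den ^ (gs.length + 1 + 2) * W ((d, (v : ℤ)) :: gs) (binom 2) := by
    linear_combination den ^ (gs.length + 2) * W ((d, (v : ℤ)) :: gs) (binom 2) * hc -
      cof (d + 1) * den ^ (gs.length + 2) * r2
  rw [q2] at g2 g3 g4
  have q3 : cof (d + 1) * (den ^ (gs.length + 3) * W gs (binom 3)) + X ^ (d + 1) * cof (d + 1) *
      (C (v : ℤ) * (den ^ (gs.length + 1 + 2) * W ((d, (v : ℤ)) :: gs) (binom 2)) +
      C (v.choose 2 : ℤ) * den * (den ^ (gs.length + 1 + 1) * W ((d, (v : ℤ)) :: gs) (binom 1)) +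
      C (v.choose 3 : ℤ) * den ^ 2 * (den ^ (gs.length + 1) * W ((d, (v : ℤ)) :: gs) (binom 0))) =
      den ^ (gs.length + 1 + 3) * W ((d, (v : ℤ)) :: gs) (binom 3) := by
    linear_combination den ^ (gs.length + 3) * W ((d, (v : ℤ)) :: gs) (binom 3) * hc -
      cof (d + 1) * den ^ (gs.length + 3) * r3
  rw [q3] at g3 g4
  have q4 : cof (d + 1) * (den ^ (gs.length + 4) * W gs (binom 4)) + X ^ (d + 1) * cof (d + 1) *
      (C (v : ℤ) * (den ^ (gs.length + 1 + 3) * W ((d, (v : ℤ)) :: gs) (binom 3)) +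
      C (v.choose 2 : ℤ) * den * (den ^ (gs.length + 1 + 2) * W ((d, (v : ℤ)) :: gs) (binom 2)) +
      C (v.choose 3 : ℤ) * den ^ 2 * (den ^ (gs.length + 1 + 1) * W ((d, (v : ℤ)) :: gs) (binom 1)) +
      C (v.choose 4 : ℤ) * den ^ 3 * (den ^ (gs.length + 1) * W ((d, (v : ℤ)) :: gs) (binom 0))) =
      den ^ (gs.length + 1 + 4) * W ((d, (v : ℤ)) :: gs) (binom 4) := by
    linear_combination den ^ (gs.length + 4) * W ((d, (v : ℤ)) :: gs) (binom 4) * hc -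
      cof (d + 1) * den ^ (gs.length + 4) * r4
  rw [q4] at g4
  exact ⟨g0, g1, g2, g3, g4⟩

theorem polyRep (gs : List (ℕ × ℤ)) (hg : ∀ g ∈ gs, 0 ≤ g.2 ∧ g.1 + 1 ∈ exps) :
    PolyRep gs (evalScheme.poly gs) (boundScheme.poly gs) := by
  induction gs with
  | nil =>
    refine ⟨?_, ?_, ?_, ?_, ?_⟩
    · simpa [W_nil, binom, Scheme.poly] using NumRep.one
    all_goals simpa [W_nil, binom, Scheme.poly] using NumRep.zero
  | cons g gs ih =>
    simp only [List.mem_cons, forall_eq_or_imp] at hg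
    exact polyRep_step g gs (fun g h => (hg.2 g h).1) hg.1.1 hg.1.2 _ _ (ih hg.2)

/-- The sign `(-1) ^ k`, for `k ≥ 0`. -/
def signChar (k : ℤ) : ℤ := (-1) ^ k.toNat

theorem sgnRep (gs : List (ℕ × ℤ)) (hg : ∀ g ∈ gs, 0 ≤ g.2 ∧ g.1 + 1 ∈ exps)
    (hs : ∀ g ∈ gs, g.2 % 2 = 0 ∨ 2 * (g.1 + 1) ∈ exps) :
    NumRep (den ^ gs.length * W gs signChar) (evalScheme.sgn gs) (boundScheme.sgn gs) := by
  induction gs with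
  | nil => simpa [W_nil, signChar, Scheme.sgn] using NumRep.one
  | cons g gs ih =>
    simp only [List.mem_cons, forall_eq_or_imp] at hg hs
    obtain ⟨d, v⟩ := g
    obtain ⟨⟨hv, hd⟩, hg⟩ := hg
    simp only at hd hv hs
    lift v to ℕ using hv
    have h := W_cons (d, (v : ℤ)) gs signChar
    have h2 : W ((d, (v : ℤ)) :: gs) (fun k => signChar (k + v)) =
        C ((-1) ^ v) * W ((d, (v : ℤ)) :: gs) signChar := by
      have := W_linear ((d, (v : ℤ)) :: gs) (Finset.range 1) (fun _ => (-1) ^ v)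
        (fun _ => signChar)
      simp only [sum_range_one] at this
      rw [← this]
      refine W_congr_nonneg _ (by simpa using fun a b h => (hg (a, b) h).1) _ _ fun k hk => ?_
      lift k to ℕ using hk
      simp only [signChar, ← Nat.cast_add, Int.toNat_natCast, pow_add, mul_comm]
    simp only [h2] at h
    simp only [Scheme.sgn]
    have ih := ih hg hs.2
    split_ifs with hv
    · have hv' : Even v := by rw [Nat.even_iff]; omega
      rw [hv'.neg_one_pow, map_one, one_mul] at h
      convert (rep_c hd).mul ih using 1
      rw [List.length_cons, ← cof_mul hd]
      linear_combination (norm := skip) den ^ gs.length * cof (d + 1) * h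
      rw [← cof_mul hd]; ring
    · have hv' : Odd v := by rw [Nat.odd_iff]; omega
      have hd2 := hs.1.resolve_left hv
      rw [hv'.neg_one_pow, map_neg, map_one] at h
      convert (rep_s hd2).mul ih using 1
      rw [List.length_cons]
      have hc := cof_mul hd2
      linear_combination (-den ^ gs.length * W ((d, (v : ℤ)) :: gs) signChar) * hc +
        (1 - X ^ (d + 1)) * cof (2 * (d + 1)) * den ^ gs.length * h

theorem leafRep (a : ℕ → ℤ) (gs : List (ℕ × ℤ)) (hg : ∀ g ∈ gs, 0 ≤ g.2 ∧ g.1 + 1 ∈ exps)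
    (hs : a 5 = 0 ∨ ∀ g ∈ gs, g.2 % 2 = 0 ∨ 2 * (g.1 + 1) ∈ exps) (hl : gs.length ≤ 5) :
    NumRep (den ^ 9 * W gs (quasi a)) (evalScheme.leaf a gs) (boundScheme.leaf a gs) := by
  have e : W gs (quasi a) = C (a 0) * W gs (binom 0) + C (a 1) * W gs (binom 1) +
      C (a 2) * W gs (binom 2) + C (a 3) * W gs (binom 3) + C (a 4) * W gs (binom 4) +
      C (a 5) * W gs signChar := by
    have := W_linear gs (Finset.range 6) a fun i => if i < 5 then binom i else signChar
    simp only [sum_range_succ, range_zero, sum_empty, zero_add, Nat.reduceLT,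
      if_true, lt_irrefl, if_false] at this
    rw [← this]
    refine W_congr_nonneg _ (fun g h => (hg g h).1) _ _ fun k hk => ?_
    simp [quasi, not_lt.mpr hk, sum_range_succ, binom, signChar]
  obtain ⟨h0, h1, h2, h3, h4⟩ := polyRep gs hg
  have hL := rep_den
  obtain ⟨m, hm⟩ : ∃ m, m + gs.length = 5 := ⟨5 - gs.length, by omega⟩
  have hm' : 5 - gs.length = m := by omega
  have t := ((rep_σ (a 4)).mul h4).add (hL.mul (((rep_σ (a 3)).mul h3).add
    (hL.mul (((rep_σ (a 2)).mul h2).add (hL.mul (((rep_σ (a 1)).mul h1).add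
      (hL.mul ((rep_σ (a 0)).mul h0))))))))
  simp only [Scheme.leaf, hm', e]
  have e9 : den ^ 9 = den ^ m * den ^ gs.length * den ^ 4 := by
    rw [← pow_add, hm, ← pow_add]
  by_cases h5 : a 5 = 0
  · simp only [h5, if_true]
    convert (hL.pow m).mul (t.add NumRep.zero) using 1
    rw [e9, map_zero]; ring
  · simp only [if_neg h5]
    have h6 := sgnRep gs hg (hs.resolve_left h5)
    convert (hL.pow m).mul (t.add ((hL.pow 4).mul ((rep_σ (a 5)).mul h6))) using 1
    rw [e9]; ring

theorem leavesRep (a : ℕ → ℤ) (l : List (ℤ × List (ℕ × ℤ)))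
    (h : ∀ t ∈ l, (∀ g ∈ t.2, 0 ≤ g.2 ∧ g.1 + 1 ∈ exps) ∧
      (a 5 = 0 ∨ ∀ g ∈ t.2, g.2 % 2 = 0 ∨ 2 * (g.1 + 1) ∈ exps) ∧ t.2.length ≤ 5) :
    NumRep (den ^ 9 * leafSum (quasi a) l) (evalScheme.leaves a l) (boundScheme.leaves a l) := by
  induction l with
  | nil => simpa [leafSum, Scheme.leaves] using NumRep.zero
  | cons t l ih =>
    simp only [List.mem_cons, forall_eq_or_imp] at h
    obtain ⟨⟨h1, h2, h3⟩, h⟩ := h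
    have := ((rep_σ t.1).mul (leafRep a t.2 h1 h2 h3)).add (ih h)
    simp only [Scheme.leaves, List.foldr_cons, leafSum, List.map_cons, List.sum_cons] at this ⊢
    convert this using 1
    ring

/-! ### The generating function as an explicit rational function -/

/-- The values of a linear form in the five variables `v, b₁, b₂, b₃, l` on the basis vectors. -/
abbrev Vals := ℤ × ℤ × ℤ × ℤ × ℤ

/-- A coefficient list as a function on `ℕ`, extended by zero. -/
def coeffList (l : List ℤ) (i : ℕ) : ℤ := l.getD i 0

/-- Multiplicities and arguments of the ball counts of `fibre_card`, in the terms of `terms`. -/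
def hTerms : List (ℤ × Vals) :=
  [(-6, 2,3,2,1,0), (-3, 2,3,1,1,0), (-3, 2,3,1,-1,0), (-3, 2,2,1,1,1), (-3, 2,3,1,1,1),
   (-6, 2,3,2,1,1), (-6, 2,2,0,-1,0), (-3, 2,2,1,-1,0), (-3, 2,2,1,1,0), (-3, 2,3,1,-1,-1),
   (-3, 2,2,1,-1,-1), (-6, 2,2,0,-1,-1)]

/-- Multiplicities and arguments of the edge counts of `fibre_card`, in the terms of `terms`. -/
def kTerms : List (ℤ × Vals) :=
  [(768, 1,1,0,-1,-1), (576, 1,1,0,0,0), (96, 1,1,-1,-1,-1), (768, 1,1,0,-1,0),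
   (192, 1,1,0,-2,-1), (192, 1,1,-1,-2,-1), (96, 1,0,-1,-1,0), (96, 1,1,-1,-1,0),
   (192, 1,0,-1,-2,-1), (96, 1,0,-1,-1,-1)]

/-- The number of points of the parity box in `fibre_card`, expanded in powers of single linear forms and
their signs. -/
def boxTerms : List (ℤ × Vals × List ℤ) :=
  [(-2, (2,4,3,2,1), [1, 15, 50, 60, 24, 0]), (-2, (2,3,3,2,1), [1, 15, 50, 60, 24, 0]),
   (-4, (2,3,2,2,1), [1, 15, 50, 60, 24, 0]),
   (2, (4,7,6,4,2), [16, 65, 110, 84, 24, 0]), (4, (4,7,5,4,2), [16, 65, 110, 84, 24, 0]),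
   (4, (4,6,5,4,2), [16, 65, 110, 84, 24, 0]), (2, (4,6,4,4,2), [16, 65, 110, 84, 24, 0]),
   (-4, (6,10,8,6,3), [81, 175, 194, 108, 24, 0]), (-2, (6,10,7,6,3), [81, 175, 194, 108, 24, 0]),
   (-2, (6,9,7,6,3), [81, 175, 194, 108, 24, 0]), (2, (8,13,10,8,4), [256, 369, 302, 132, 24, 0]),
   (6, (0,0,0,1,0), [0, 0, 0, 0, 0, 1]), (6, (0,0,0,1,1), [0, 0, 0, 0, 0, 1]),
   (6, (0,0,1,1,0), [0, 0, 0, 0, 0, 1]), (6, (0,0,1,1,1), [0, 0, 0, 0, 0, 1]),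
   (6, (0,1,0,1,0), [0, 0, 0, 0, 0, 1]), (6, (0,1,0,1,1), [0, 0, 0, 0, 0, 1]),
   (6, (0,1,1,1,0), [0, 0, 0, 0, 0, 1]), (6, (0,1,1,1,1), [0, 0, 0, 0, 0, 1])]

/-- A triple `(c, x, a)` stands for the function `c * quasi a (x · (v, b₁, b₂, b₃, l))`; the sum of these
functions is `96` times the cardinality of `fibre v b₁ b₂ b₃ l`. -/
def terms : List (ℤ × Vals × List ℤ) :=
  (hTerms.map fun t => (t.1, t.2, [-1, 2, 28, 40, 16, 1])) ++
  (kTerms.map fun t => (t.1, t.2, [0, 0, 1, 2, 1, 0])) ++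
  boxTerms

/-- The weight of the gaps `b₁, b₂, b₃, l`, which depends only on which of them vanish, written as a
combination of the indicators of the coordinate subspaces: `false` imposes the vanishing of the
corresponding gap, and `true` imposes nothing. -/
def strata : List (ℤ × Bool × Bool × Bool × Bool) :=
  [(1, false, false, false, false), (-16, false, false, false, true),
   (-32, false, false, true, false), (64, false, false, true, true),
   (-24, false, true, false, false), (96, false, true, false, true),
   (96, false, true, true, false), (-192, false, true, true, true),
   (-8, true, false, false, false), (64, true, false, false, true),
   (96, true, false, true, false), (-192, true, false, true, true),
   (48, true, true, false, false), (-192, true, true, false, true),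
   (-192, true, true, true, false), (384, true, true, true, true)]

/-- The list `gs`, preceded by the generator `g` if `b` holds. -/
def optGen (b : Bool) (g : ℕ × ℤ) (gs : List (ℕ × ℤ)) : List (ℕ × ℤ) := if b then g :: gs else gs

/-- The generators for a linear form `x` on the coordinate subspace `z`; the variables
`v, b₁, b₂, b₃, l` have degrees `1, 2, 2, 2, 1`. -/
def gens (x : Vals) (z : Bool × Bool × Bool × Bool) : List (ℕ × ℤ) :=
  (0, x.1) :: optGen z.1 (1, x.2.1) (optGen z.2.1 (1, x.2.2.1) (optGen z.2.2.1 (1, x.2.2.2.1)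
    (optGen z.2.2.2 (0, x.2.2.2.2) [])))

/-- Elliott reduction of an arbitrary list of generators.  The fuel is ample for the lists in use, as
`items_ok` verifies. -/
def split (gs : List (ℕ × ℤ)) : List (ℤ × List (ℕ × ℤ)) :=
  elliott 40 (gs.filter fun g => 0 < g.2) (gs.filter fun g => g.2 < 0)
    (gs.filter fun g => g.2 = 0)

/-- The hypotheses of `W_split` and `leavesRep` for a term and a stratum. -/
def itemOK (t : ℤ × Vals × List ℤ) (z : ℤ × Bool × Bool × Bool × Bool) : Bool :=
  (coeffList t.2.2 0 + coeffList t.2.2 5 = 0 || (gens t.2.1 z.2).all fun g => 0 ≤ g.2) &&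
  (split (gens t.2.1 z.2)).all fun l => (l.2.length ≤ 5 &&
    l.2.all fun g => 0 ≤ g.2 && exps.contains (g.1 + 1)) &&
    (coeffList t.2.2 5 = 0 || l.2.all fun g => g.2 % 2 = 0 || exps.contains (2 * (g.1 + 1)))

/-- The value (or bound) attached to `den ^ 9 * series`. -/
def totalOf (S : Scheme) : ℤ :=
  (terms.map fun t => S.σ t.1 * (strata.map fun z => S.σ z.1 *
    S.leaves (coeffList t.2.2) (split (gens t.2.1 z.2))).sum).sum

/-- The generating function, in `m`, of `96` times the number of magic cubes of sum `3 * m`, before any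
simplification; see `series_eq_cubes`. -/
noncomputable def series : PowerSeries ℤ :=
  (terms.map fun t => C t.1 * (strata.map fun z => C z.1 *
    W (gens t.2.1 z.2) (quasi (coeffList t.2.2))).sum).sum

/-- The coefficients of the numerator, as a polynomial in `t ^ 3`. -/
def numCoeffs : List ℤ := [1, 150, 5837, 63127, 331124, 1056374, 2326380, 3842273, 5055138, 5512456,
  5055138, 3842273, 2326380, 1056374, 331124, 63127, 5837, 150, 1]

set_option maxRecDepth 100000 in
theorem items_ok : (terms.all fun t => strata.all fun z => itemOK t z) = true := by decide +kernel

set_option maxRecDepth 100000 in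
theorem total_bound : totalOf boundScheme < 2 ^ 120 := by decide +kernel

set_option maxRecDepth 100000 in
/-- The identity `series_eq`, cleared of denominators, at the point `base`. -/
theorem total_eval : ((base : ℤ) + 1) ^ 4 *
    ((base : ℤ) ^ 4 + (base : ℤ) ^ 3 + (base : ℤ) ^ 2 + (base : ℤ) + 1) * (1 - (base : ℤ)) ^ 9 *
    ((base : ℤ) ^ 2 + (base : ℤ) + 1) * totalOf evalScheme =
    96 * numCoeffs.foldr (fun c a => c + (base : ℤ) * a) 0 * evalScheme.L ^ 9 := by
  decide +kernel

theorem quasi_nonpos (a : ℕ → ℤ) (h : a 0 + a 5 = 0) (k : ℤ) (hk : k ≤ 0) : quasi a k = 0 := by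
  rcases hk.lt_or_eq with h' | rfl
  · simp [quasi, h']
  · simpa [quasi, sum_range_succ] using h

theorem perm_split (gs : List (ℕ × ℤ)) : gs.Perm ((gs.filter fun g => 0 < g.2) ++
    (gs.filter fun g => g.2 < 0) ++ gs.filter fun g => g.2 = 0) := by
  induction gs with
  | nil => simp
  | cons g gs ih =>
    rcases lt_trichotomy g.2 0 with h | h | h
    · rw [List.filter_cons_of_neg (by simp; omega), List.filter_cons_of_pos (by simpa using h),
        List.filter_cons_of_neg (by simp; omega), List.append_assoc, List.cons_append]
      refine (ih.cons g).trans ?_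
      rw [List.append_assoc]
      exact List.perm_middle.symm
    · rw [List.filter_cons_of_neg (by simp; omega), List.filter_cons_of_neg (by simp; omega),
        List.filter_cons_of_pos (by simpa using h)]
      exact (ih.cons g).trans List.perm_middle.symm
    · rw [List.filter_cons_of_pos (by simpa using h), List.filter_cons_of_neg (by simp; omega),
        List.filter_cons_of_neg (by simp; omega)]
      exact ih.cons g

/-- Elliott reduction applies if `quasi a` vanishes at `0`, and is trivial if no weight is negative. -/
theorem W_split (gs : List (ℕ × ℤ)) (a : ℕ → ℤ) (h : a 0 + a 5 = 0 ∨ ∀ g ∈ gs, 0 ≤ g.2) :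
    W gs (quasi a) = leafSum (quasi a) (split gs) := by
  rw [W_perm (perm_split gs), split]
  rcases h with h | h
  · exact elliott_spec _ (quasi_nonpos a h) _ _ _ _ (fun g hg => by simpa using (List.mem_filter.mp hg).2)
      (fun g hg => by simpa using (List.mem_filter.mp hg).2)
  · have : (gs.filter fun g => g.2 < 0) = [] := by simpa using fun a b h' => h (a, b) h'
    rw [this]
    simp [elliott, leafSum]

theorem NumRep.listSum {α : Type*} (l : List α) (F : α → PowerSeries ℤ) (f e : α → ℤ)
    (h : ∀ t ∈ l, NumRep (F t) (f t) (e t)) :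
    NumRep (l.map F).sum (l.map f).sum (l.map e).sum := by
  induction l with
  | nil => simpa using NumRep.zero
  | cons t l ih =>
    simp only [List.mem_cons, forall_eq_or_imp] at h
    simpa using h.1.add (ih h.2)

theorem series_rep : NumRep (den ^ 9 * series) (totalOf evalScheme) (totalOf boundScheme) := by
  rw [series, ← List.sum_map_mul_left]
  refine NumRep.listSum _ _ _ _ fun t ht => ?_
  rw [mul_left_comm, ← List.sum_map_mul_left]
  refine (rep_σ t.1).mul (NumRep.listSum _ _ _ _ fun z hz => ?_)
  rw [mul_left_comm]
  refine (rep_σ z.1).mul ?_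
  have h := items_ok
  rw [List.all_eq_true] at h
  have h := h t ht
  rw [List.all_eq_true] at h
  have h := h z hz
  simp only [itemOK, Bool.and_eq_true, Bool.or_eq_true, List.all_eq_true, decide_eq_true_eq,
    List.contains_iff_mem] at h
  rw [W_split _ _ h.1]
  exact leavesRep _ _ fun l hl => ⟨(h.2 l hl).1.2, (h.2 l hl).2, (h.2 l hl).1.1⟩

theorem den_ne_zero : den ≠ 0 := by
  refine List.prod_ne_zero fun h => ?_
  obtain ⟨m, hm, h0⟩ := List.mem_map.mp h
  have := congrArg (coeff 0) h0
  have hm0 : m ≠ 0 := by rintro rfl; exact absurd hm (by decide)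
  simp [hm0] at this

theorem numerator_rep (l : List ℤ) : NumRep (l.foldr (fun c a => C c + X * a) 0)
    (l.foldr (fun c a => c + (base : ℤ) * a) 0) (l.foldr (fun c a => |c| + 1 * a) 0) := by
  induction l with
  | nil => exact NumRep.zero
  | cons c l ih =>
    exact (NumRep.const c).add
      (((pow_one (X : PowerSeries ℤ)) ▸ (pow_one (base : ℤ)) ▸ NumRep.X_pow 1).mul ih)

/-- Both sides times `den ^ 9` are polynomials that agree at `base`; their lengths are too small for
them to differ. -/
theorem series_eq : (X + 1) ^ 4 * (X ^ 4 + X ^ 3 + X ^ 2 + X + 1) * (1 - X) ^ 9 *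
    (X ^ 2 + X + 1) * series = C 96 * numCoeffs.foldr (fun c a => C c + X * a) 0 := by
  have hX : NumRep X (base : ℤ) 1 := by simpa using NumRep.X_pow 1
  have h1 := NumRep.one
  have hs := ((((hX.add h1).pow 4).mul (((((hX.pow 4).add (hX.pow 3)).add (hX.pow 2)).add hX).add
    h1)).mul ((h1.sub hX).pow 9)).mul (((hX.pow 2).add hX).add h1)
  have h := (hs.mul series_rep).sub (((NumRep.const 96).mul (numerator_rep numCoeffs)).mul
    (rep_den.pow 9))
  rw [total_eval, sub_self] at h
  have h0 := h.eq_zero (by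
    have hn : numCoeffs.foldr (fun c a => |c| + 1 * a) 0 < 2 ^ 30 := by decide
    have hb := total_bound
    have hL : boundScheme.L = 2 ^ 10 := rfl
    rw [hL]
    have hbase : ((base : ℕ) : ℤ) = 2 ^ 160 := by norm_num [base]
    rw [hbase]
    norm_num at hn hb ⊢
    linarith)
  refine mul_left_cancel₀ (pow_ne_zero 9 den_ne_zero) ?_
  linear_combination h0

theorem coeff_W_optGen (b : Bool) (g : ℕ × ℤ) (gs : List (ℕ × ℤ)) (H : ℤ → ℤ) {n N : ℕ}
    (hN : n < N) : coeff n (W (optGen b g gs) H) = ∑ j ∈ range N,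
      if (g.1 + 1) * j ≤ n ∧ (b = false → j = 0) then
        coeff (n - (g.1 + 1) * j) (W gs fun k => H (k + g.2 * j)) else 0 := by
  cases b
  · rw [sum_eq_single_of_mem 0 (by simp; omega) (fun j _ hj => by simp [hj])]
    simp [optGen]
  · simp [optGen, coeff_W_cons g gs H hN]

theorem coeff_W_gens (x : Vals) (z : Bool × Bool × Bool × Bool) (H : ℤ → ℤ) (n : ℕ) :
    coeff n (W (gens x z) H) = ∑ v ∈ range (n + 1), ∑ b₁ ∈ range (n + 1), ∑ b₂ ∈ range (n + 1),
      ∑ b₃ ∈ range (n + 1), ∑ l ∈ range (n + 1),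
      if v + 2 * b₁ + 2 * b₂ + 2 * b₃ + l = n ∧ ((z.1 = false → b₁ = 0) ∧
        (z.2.1 = false → b₂ = 0) ∧ (z.2.2.1 = false → b₃ = 0) ∧ (z.2.2.2 = false → l = 0))
      then H (x.1 * v + x.2.1 * b₁ + x.2.2.1 * b₂ + x.2.2.2.1 * b₃ + x.2.2.2.2 * l) else 0 := by
  have hn : n < n + 1 := n.lt_succ_self
  rw [gens, coeff_W_cons _ _ _ hn]
  refine sum_congr rfl fun v _ => ?_
  by_cases h1 : v ≤ n
  swap
  · rw [if_neg (by simpa using h1)]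
    symm
    refine sum_eq_zero fun b₁ _ => sum_eq_zero fun b₂ _ => sum_eq_zero fun b₃ _ =>
      sum_eq_zero fun l _ => if_neg (by omega)
  rw [if_pos (by simpa using h1), coeff_W_optGen _ _ _ _ (N := n + 1) (by omega)]
  refine sum_congr rfl fun b₁ _ => ?_
  simp only [zero_add, one_mul, Nat.reduceAdd]
  by_cases h2 : 2 * b₁ ≤ n - v ∧ (z.1 = false → b₁ = 0)
  swap
  · rw [if_neg h2]
    symm
    exact sum_eq_zero fun b₂ _ => sum_eq_zero fun b₃ _ =>
      sum_eq_zero fun l _ => if_neg fun h => h2 ⟨by omega, h.2.1⟩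
  rw [if_pos h2, coeff_W_optGen _ _ _ _ (N := n + 1) (by omega)]
  refine sum_congr rfl fun b₂ _ => ?_
  simp only [Nat.reduceAdd]
  by_cases h3 : 2 * b₂ ≤ n - v - 2 * b₁ ∧ (z.2.1 = false → b₂ = 0)
  swap
  · rw [if_neg h3]
    symm
    exact sum_eq_zero fun b₃ _ =>
      sum_eq_zero fun l _ => if_neg fun h => h3 ⟨by omega, h.2.2.1⟩
  rw [if_pos h3, coeff_W_optGen _ _ _ _ (N := n + 1) (by omega)]
  refine sum_congr rfl fun b₃ _ => ?_
  simp only [Nat.reduceAdd]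
  by_cases h4 : 2 * b₃ ≤ n - v - 2 * b₁ - 2 * b₂ ∧ (z.2.2.1 = false → b₃ = 0)
  swap
  · rw [if_neg h4]
    symm
    exact sum_eq_zero fun l _ => if_neg fun h => h4 ⟨by omega, h.2.2.2.1⟩
  rw [if_pos h4, coeff_W_optGen _ _ _ _ (N := n + 1) (by omega)]
  refine sum_congr rfl fun l _ => ?_
  simp only [zero_add, one_mul, W_nil, coeff_C]
  by_cases h5 : l ≤ n - v - 2 * b₁ - 2 * b₂ - 2 * b₃ ∧ (z.2.2.2 = false → l = 0)
  swap
  · rw [if_neg h5, if_neg fun h => h5 ⟨by omega, h.2.2.2.2⟩]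
  rw [if_pos h5]
  by_cases h6 : n - v - 2 * b₁ - 2 * b₂ - 2 * b₃ - l = 0
  · rw [if_pos h6, if_pos ⟨by omega, h2.2, h3.2, h4.2, h5.2⟩]
    congr 1
    ring
  · rw [if_neg h6, if_neg fun h => h6 (by omega)]

/-! ### Lattice points of a box with truncated corners -/

/-- The quadruples of natural numbers whose sum lies in `S`. -/
def tuples (S : Finset ℕ) : Finset (Fin 4 → ℕ) := S.biUnion fun s => piAntidiag univ s

theorem mem_tuples {S : Finset ℕ} {e : Fin 4 → ℕ} : e ∈ tuples S ↔ ∑ i, e i ∈ S := by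
  simp [tuples]

theorem card_tuples (S : Finset ℕ) : #(tuples S) = ∑ s ∈ S, (s + 3).choose 3 := by
  rw [tuples, card_biUnion]
  · refine sum_congr rfl fun s _ => ?_
    have h := card_finsuppAntidiag_nat_eq_choose (s := (univ : Finset (Fin 4))) s
    simp only [finsuppAntidiag, card_map, card_attach, card_univ, Fintype.card_fin] at h
    rw [h, show 4 + s - 1 = s + 3 by omega, Nat.choose_symm_add]
  · intro s _ t _ hst
    rw [Function.onFun, disjoint_left]
    intro e he he'
    rw [mem_piAntidiag] at he he'
    exact hst (he.1.symm.trans he'.1)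

/-- The number of quadruples with sum less than `D` and congruent to `D` modulo `2`. -/
def ballCount (D : ℤ) : ℕ := #(tuples ((range D.toNat).filter fun s => ((s : ℤ) - D) % 2 = 0))

/-- The number of quadruples with sum less than `E - 1`. -/
def edgeCount (E : ℤ) : ℕ := #(tuples (range (E - 1).toNat))

theorem edgeCount_eq (E : ℤ) : (edgeCount E : ℤ) = quasi (coeffList [0, 0, 1, 2, 1, 0]) E := by
  have key : ∀ n : ℕ, ∑ s ∈ range n, (s + 3).choose 3 = (n + 3).choose 4 := by
    intro n
    induction n with
    | zero => rfl
    | succ n ih => rw [sum_range_succ, ih, add_right_comm n 1 3, Nat.choose_succ_succ' (n + 3) 3, add_comm]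
  rw [edgeCount, card_tuples, key, quasi]
  split_ifs with h
  · rw [Int.toNat_of_nonpos (by omega)]; rfl
  · lift E to ℕ using not_lt.mp h
    rcases E with _ | E
    · decide
    · have e1 : (((E + 1 : ℕ) : ℤ) - 1).toNat = E := by omega
      rw [e1]
      simp only [coeffList, sum_range_succ, range_zero, sum_empty, Int.toNat_natCast]
      simp only [Nat.choose_succ_succ']
      simp
      ring

theorem ballCount_eq (D : ℤ) :
    32 * (ballCount D : ℤ) = quasi (coeffList [-1, 2, 28, 40, 16, 1]) D := by
  have key : ∀ n : ℕ, ballCount (n + 2 : ℕ) = ballCount n + (n + 3).choose 3 := by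
    intro n
    simp only [ballCount, card_tuples, Int.toNat_natCast]
    rw [range_add_one, filter_insert, if_neg (by push_cast; omega), range_add_one, filter_insert,
      if_pos (by push_cast; omega), sum_insert (by simp), add_comm]
    congr 2
    ext s
    simp only [mem_filter, mem_range]
    push_cast
    omega
  have main : ∀ n : ℕ, 32 * (ballCount n : ℤ) = quasi (coeffList [-1, 2, 28, 40, 16, 1]) n ∧
      32 * (ballCount (n + 1 : ℕ) : ℤ) = quasi (coeffList [-1, 2, 28, 40, 16, 1]) (n + 1 : ℕ) := by
    intro n
    induction n with
    | zero => exact ⟨by decide, by decide⟩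
    | succ n ih =>
      refine ⟨ih.2, ?_⟩
      have h := ih.1
      rw [show n + 1 + 1 = n + 2 from rfl, key]
      simp only [quasi, coeffList, sum_range_succ, range_zero, sum_empty, Int.toNat_natCast] at h ⊢
      rw [if_neg (by omega)] at h ⊢
      simp [Nat.choose_succ_succ'] at h ⊢
      linear_combination h + pow_add (-1 : ℤ) n 2
  by_cases h : D < 0
  · rw [ballCount, Int.toNat_of_nonpos h.le]
    simp [quasi, h, tuples]
  · lift D to ℕ using not_lt.mp h
    exact (main D).1

/-- The coordinates of `f` in the box `[0, U]`, measured from the corner `T`. -/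
def reflect (U : Fin 4 → ℕ) (T : Fin 4 → Bool) (f : Fin 4 → ℕ) (l : Fin 4) : ℕ :=
  if T l then U l - f l else f l

/-- The `ℓ¹` distance from `f` to the corner `T` of the box. -/
def cornerDist (U : Fin 4 → ℕ) (T : Fin 4 → Bool) (f : Fin 4 → ℕ) : ℕ := ∑ l, reflect U T f l

/-- The lattice points of the box `[0, U]` whose coordinate sum is congruent to `π` modulo `2`. -/
def paritybox (U : Fin 4 → ℕ) (π : ℕ) : Finset (Fin 4 → ℕ) :=
  (Fintype.piFinset fun l => range (U l + 1)).filter fun f => (∑ l, f l + π) % 2 = 0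

theorem mem_paritybox {U : Fin 4 → ℕ} {π : ℕ} {f : Fin 4 → ℕ} :
    f ∈ paritybox U π ↔ (∀ l, f l ≤ U l) ∧ (∑ l, f l + π) % 2 = 0 := by
  simp [paritybox]

theorem reflect_le {U : Fin 4 → ℕ} {f : Fin 4 → ℕ} (T : Fin 4 → Bool) (hf : ∀ l, f l ≤ U l)
    (l : Fin 4) : reflect U T f l ≤ U l := by
  have := hf l
  unfold reflect
  split_ifs <;> omega

theorem reflect_reflect {U : Fin 4 → ℕ} {f : Fin 4 → ℕ} (T : Fin 4 → Bool) (hf : ∀ l, f l ≤ U l) :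
    reflect U T (reflect U T f) = f := by
  funext l
  have := hf l
  unfold reflect
  split_ifs <;> omega

theorem reflect_parity {U : Fin 4 → ℕ} {f : Fin 4 → ℕ} (T : Fin 4 → Bool) (hf : ∀ l, f l ≤ U l) :
    (cornerDist U T f + ∑ l, f l + ∑ l, if T l then U l else 0) % 2 = 0 := by
  rw [cornerDist, ← sum_add_distrib, ← sum_add_distrib]
  refine Nat.mod_eq_zero_of_dvd (dvd_sum fun l _ => ?_)
  have := hf l
  unfold reflect
  split_ifs <;> omega

theorem dist_update (U : Fin 4 → ℕ) (T : Fin 4 → Bool) {f : Fin 4 → ℕ} (l : Fin 4)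
    (hf : f l ≤ U l) (hl : T l = false) :
    (cornerDist U (Function.update T l true) f : ℤ) = cornerDist U T f + U l - 2 * f l := by
  simp only [cornerDist]
  rw [← add_sum_erase _ _ (mem_univ l), ← add_sum_erase _ (reflect U T f) (mem_univ l)]
  have : ∑ i ∈ univ.erase l, reflect U (Function.update T l true) f i =
      ∑ i ∈ univ.erase l, reflect U T f i := by
    refine sum_congr rfl fun i hi => ?_
    simp [reflect, Function.update_of_ne (ne_of_mem_erase hi)]
  rw [this]
  simp [reflect, hl]
  omega

/-- The point `f` violates the inequality `D T ≤ cornerDist U T f` that truncates the corner `T`. -/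
def Viol (U : Fin 4 → ℕ) (D : (Fin 4 → Bool) → ℤ) (f : Fin 4 → ℕ) (T : Fin 4 → Bool) : Prop :=
  (cornerDist U T f : ℤ) < D T

instance (U : Fin 4 → ℕ) (D : (Fin 4 → Bool) → ℤ) (f : Fin 4 → ℕ) (T : Fin 4 → Bool) :
    Decidable (Viol U D f T) := by unfold Viol; infer_instance

/-- The cut off corners are simplices, since `D T` is at most every side of the box. -/
theorem card_viol (U : Fin 4 → ℕ) (π : ℕ) (D : (Fin 4 → Bool) → ℤ)
    (hD : ∀ T l, D T ≤ U l)
    (hpar : ∀ T, (D T + π + ∑ l, if T l then (U l : ℤ) else 0) % 2 = 0)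
    (T : Fin 4 → Bool) :
    #((paritybox U π).filter fun f => Viol U D f T) = ballCount (D T) := by
  have hp := hpar T
  have hd := hD T
  have hcast : ((∑ l, if T l then U l else 0 : ℕ) : ℤ) = ∑ l, if T l then (U l : ℤ) else 0 := by
    push_cast; rfl
  rw [ballCount]
  refine card_nbij' (reflect U T) (reflect U T) ?_ ?_ ?_ ?_
  · intro f hf
    simp only [mem_coe, mem_filter, mem_paritybox] at hf
    obtain ⟨⟨hf, hm⟩, hv⟩ := hf
    unfold Viol at hv
    have := reflect_parity T hf
    simp only [mem_coe, mem_tuples, mem_filter, mem_range]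
    change cornerDist U T f < _ ∧ ((cornerDist U T f : ℤ) - D T) % 2 = 0
    omega
  · intro e he
    simp only [mem_coe, mem_tuples, mem_filter, mem_range] at he
    have he' : ∀ l, e l ≤ U l := fun l => by
      have := single_le_sum (f := e) (fun i _ => Nat.zero_le _) (mem_univ l)
      have := hd l
      omega
    have h1 := reflect_parity T (reflect_le T he')
    have h2 : cornerDist U T (reflect U T e) = ∑ l, e l := by rw [cornerDist, reflect_reflect T he']
    simp only [mem_coe, mem_filter, mem_paritybox]
    refine ⟨⟨reflect_le T he', ?_⟩, ?_⟩
    · omega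
    · unfold Viol; omega
  · intro f hf
    simp only [mem_coe, mem_filter, mem_paritybox] at hf
    exact reflect_reflect T hf.1.1
  · intro e he
    simp only [mem_coe, mem_tuples, mem_filter, mem_range] at he
    refine reflect_reflect T fun l => ?_
    have := single_le_sum (f := e) (fun i _ => Nat.zero_le _) (mem_univ l)
    have := hd l
    omega

theorem sum_update_cast (e : Fin 4 → ℕ) (l : Fin 4) (x : ℕ) :
    ∑ i, Function.update e l x i + e l = ∑ i, e i + x := by
  rw [← add_sum_erase _ _ (mem_univ l), ← add_sum_erase _ e (mem_univ l)]
  have : ∑ i ∈ univ.erase l, Function.update e l x i = ∑ i ∈ univ.erase l, e i :=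
    sum_congr rfl fun i hi => by rw [Function.update_of_ne (ne_of_mem_erase hi)]
  rw [this, Function.update_self]
  omega

/-- The points cut off at both ends of an edge.  With `c` the distance to the corner `T`, `x` the
coordinate along the edge and `y = (D T - 2 - c) / 2`, replacing `x` by `y` maps them onto a
simplex. -/
theorem card_edge (U : Fin 4 → ℕ) (π : ℕ) (D : (Fin 4 → Bool) → ℤ)
    (hD : ∀ T l, D T ≤ U l)
    (hpar : ∀ T, (D T + π + ∑ l, if T l then (U l : ℤ) else 0) % 2 = 0)
    (T : Fin 4 → Bool) (l : Fin 4) (hl : T l = false) :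
    #((paritybox U π).filter fun f => Viol U D f T ∧ Viol U D f (Function.update T l true)) =
      edgeCount ((D T + D (Function.update T l true) - U l) / 2) := by
  have hp := hpar T
  have hp' := hpar (Function.update T l true)
  have hd := hD T
  have hd' := hD (Function.update T l true) l
  have hcast : ((∑ l, if T l then U l else 0 : ℕ) : ℤ) = ∑ l, if T l then (U l : ℤ) else 0 := by
    push_cast; rfl
  have hup : (∑ i, if Function.update T l true i then (U i : ℤ) else 0) =
      (∑ i, if T i then (U i : ℤ) else 0) + U l := by
    rw [← add_sum_erase _ _ (mem_univ l), ← add_sum_erase _ (fun i => if T i then (U i : ℤ) else 0)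
      (mem_univ l)]
    have : ∑ i ∈ univ.erase l, (if Function.update T l true i then (U i : ℤ) else 0) =
        ∑ i ∈ univ.erase l, if T i then (U i : ℤ) else 0 :=
      sum_congr rfl fun i hi => by rw [Function.update_of_ne (ne_of_mem_erase hi)]
    rw [this]
    simp [hl, add_comm]
  rw [hup] at hp'
  generalize hD' : D (Function.update T l true) = D' at *
  have bd : ∀ e ∈ tuples (range ((D T + D' - U l) / 2 - 1).toNat), ∀ i,
      Function.update e l (D T - 2 - ∑ i, (e i : ℤ) - e l).toNat i ≤ U i := by
    -- the inverse map stays in the box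
    intro e he i
    rw [mem_tuples, mem_range] at he
    have h1 := single_le_sum (f := e) (fun i _ => Nat.zero_le _) (mem_univ i)
    have h2 := hd i
    by_cases hi : i = l
    · subst hi
      rw [Function.update_self]
      have : ((∑ i, e i : ℕ) : ℤ) = ∑ i, (e i : ℤ) := by push_cast; rfl
      omega
    · rw [Function.update_of_ne hi]
      omega
  rw [edgeCount]
  refine card_nbij'
    (fun f => Function.update (reflect U T f) l ((D T - 2 - cornerDist U T f) / 2).toNat)
    (fun e => reflect U T (Function.update e l (D T - 2 - ∑ i, (e i : ℤ) - e l).toNat)) ?_ ?_ ?_ ?_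
  · intro f hf
    simp only [mem_coe, mem_filter, mem_paritybox, Viol, hD'] at hf
    obtain ⟨⟨hf, hm⟩, hv, hv'⟩ := hf
    have h1 := reflect_parity T hf
    rw [dist_update U T l (hf l) hl] at hv'
    have h2 := sum_update_cast (reflect U T f) l ((D T - 2 - cornerDist U T f) / 2).toNat
    have h3 : reflect U T f l = f l := by simp [reflect, hl]
    change _ = cornerDist U T f + _ at h2
    simp only [mem_coe, mem_tuples, mem_range]
    have := hf l
    omega
  · intro e he
    have hb := bd e he
    have h5 := sum_update_cast e l (D T - 2 - ∑ i, (e i : ℤ) - e l).toNat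
    have h1 := reflect_parity T (reflect_le T hb)
    have h2 : cornerDist U T (reflect U T (Function.update e l (D T - 2 - ∑ i, (e i : ℤ) - e l).toNat)) =
      ∑ i, Function.update e l (D T - 2 - ∑ i, (e i : ℤ) - e l).toNat i := by
      rw [cornerDist, reflect_reflect T hb]
    have h3 : reflect U T (Function.update e l (D T - 2 - ∑ i, (e i : ℤ) - e l).toNat) l =
      (D T - 2 - ∑ i, (e i : ℤ) - e l).toNat := by simp [reflect, hl]
    have h4 : ((∑ i, e i : ℕ) : ℤ) = ∑ i, (e i : ℤ) := by push_cast; rfl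
    have h6 := single_le_sum (f := e) (fun i _ => Nat.zero_le _) (mem_univ l)
    simp only [mem_coe, mem_tuples, mem_range] at he
    have h7 := hd l
    simp only [mem_coe, mem_filter, mem_paritybox, Viol, hD']
    refine ⟨⟨reflect_le T hb, ?_⟩, ?_, ?_⟩
    · omega
    · omega
    · rw [dist_update U T l (reflect_le T hb l) hl]
      omega
  · intro f hf
    simp only [mem_coe, mem_filter, mem_paritybox, Viol, hD'] at hf
    obtain ⟨⟨hf, hm⟩, hv, hv'⟩ := hf
    have h1 := reflect_parity T hf
    rw [dist_update U T l (hf l) hl] at hv'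
    have h2 := sum_update_cast (reflect U T f) l ((D T - 2 - cornerDist U T f) / 2).toNat
    have h3 : reflect U T f l = f l := by simp [reflect, hl]
    change _ = cornerDist U T f + _ at h2
    simp only [Function.update_idem, Function.update_self, ← Nat.cast_sum]
    have : (D T - 2 - (∑ i, Function.update (reflect U T f) l ((D T - 2 - cornerDist U T f) / 2).toNat i : ℕ) -
      ((D T - 2 - (cornerDist U T f : ℤ)) / 2).toNat).toNat = reflect U T f l := by
      have := hf l
      omega
    rw [this, Function.update_eq_self, reflect_reflect T hf]
  · intro e he
    have hb := bd e he
    have h2 : cornerDist U T (reflect U T (Function.update e l (D T - 2 - ∑ i, (e i : ℤ) - e l).toNat)) =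
      ∑ i, Function.update e l (D T - 2 - ∑ i, (e i : ℤ) - e l).toNat i := by
      rw [cornerDist, reflect_reflect T hb]
    have h5 := sum_update_cast e l (D T - 2 - ∑ i, (e i : ℤ) - e l).toNat
    have h4 : ((∑ i, e i : ℕ) : ℤ) = ∑ i, (e i : ℤ) := by push_cast; rfl
    have h6 := single_le_sum (f := e) (fun i _ => Nat.zero_le _) (mem_univ l)
    simp only [mem_coe, mem_tuples, mem_range] at he
    have h7 := hd l
    simp only [h2]
    rw [reflect_reflect T hb, Function.update_idem]
    have : ((D T - 2 - (∑ i, Function.update e l (D T - 2 - ∑ i, (e i : ℤ) - e l).toNat i : ℕ)) / 2).toNat =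
      e l := by omega
    rw [this, Function.update_eq_self]

/-- Inclusion-exclusion at a point, where at most two corner inequalities are violated, and two only at
the ends of an edge. -/
theorem incl_excl_pointwise (P : (Fin 4 → Bool) → Prop) [DecidablePred P]
    (h : ∀ T T', P T → P T' → ∀ l l', T l ≠ T' l → T l' ≠ T' l' → l = l') :
    (if ∀ T, ¬ P T then 1 else 0 : ℤ) = 1 - ∑ T, (if P T then 1 else 0) +
      ∑ T, ∑ l, if T l = false then (if P T ∧ P (Function.update T l true) then 1 else 0) else 0 := by
  by_cases h0 : ∀ T, ¬ P T
  · simp [h0]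
  rw [if_neg h0]
  push Not at h0
  obtain ⟨T₀, hT₀⟩ := h0
  by_cases h1 : ∀ T, P T → T = T₀
  · have hP : ∀ T, P T ↔ T = T₀ := fun T => ⟨h1 T, fun h => h ▸ hT₀⟩
    simp only [hP, sum_ite_eq', mem_univ, if_true]
    rw [sum_eq_zero, sub_self, add_zero]
    intro T _
    refine sum_eq_zero fun l _ => ?_
    split_ifs with h2 h3
    · have := congrFun (h3.2.trans h3.1.symm) l
      simp [h2] at this
    all_goals rfl
  · have : ∃ T₀ T₁ l, P T₀ ∧ P T₁ ∧ T₀ l = false ∧ T₁ = Function.update T₀ l true := by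
      push Not at h1
      obtain ⟨T, hT, hne⟩ := h1
      obtain ⟨l, hl⟩ := Function.ne_iff.mp hne
      have heq : ∀ l', l' ≠ l → T l' = T₀ l' := fun l' hl' => by
        by_contra h'
        exact hl' (h T T₀ hT hT₀ l' l h' hl)
      rcases hb : T₀ l with _ | _
      · refine ⟨T₀, T, l, hT₀, hT, hb, ?_⟩
        funext i
        by_cases hi : i = l
        · subst hi; rw [hb] at hl; simpa using hl
        · rw [Function.update_of_ne hi, heq i hi]
      · refine ⟨T, T₀, l, hT, hT₀, by rw [hb] at hl; simpa using hl, ?_⟩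
        funext i
        by_cases hi : i = l
        · subst hi; simpa using hb
        · rw [Function.update_of_ne hi, heq i hi]
    obtain ⟨T₀, T₁, l, hT₀, hT₁, hl, rfl⟩ := this
    have hP : ∀ T, P T ↔ T = T₀ ∨ T = Function.update T₀ l true := by
      refine fun T => ⟨fun hT => ?_, by rintro (rfl | rfl) <;> assumption⟩
      by_contra hc
      push Not at hc
      obtain ⟨k, hk⟩ := Function.ne_iff.mp hc.1
      by_cases hkl : k = l
      · subst hkl
        obtain ⟨i, hi⟩ := Function.ne_iff.mp hc.2
        by_cases hik : i = k
        · subst hik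
          rw [hl] at hk
          simp at hi hk
          simp [hi] at hk
        · rw [Function.update_of_ne hik] at hi
          exact hik (h T T₀ hT hT₀ i k hi hk)
      · by_cases hT1 : T l = true
        · exact hkl (h T T₀ hT hT₀ k l hk (by simp [hl, hT1]))
        · exact hkl (h T _ hT hT₁ k l (by rwa [Function.update_of_ne hkl]) (by simp [hT1]))
    have hne : T₀ ≠ Function.update T₀ l true := fun h' => by
      have := congrFun h' l
      simp [hl] at this
    have s1 : ∑ T, (if P T then 1 else 0 : ℤ) = 2 := by
      rw [← sum_filter, sum_const]
      have : univ.filter P = {T₀, Function.update T₀ l true} := by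
        ext T; simp [hP]
      rw [this, card_pair hne]; rfl
    have s2 : ∑ T, ∑ l, (if T l = false then
        (if P T ∧ P (Function.update T l true) then 1 else 0) else 0 : ℤ) = 1 := by
      rw [sum_eq_single T₀, sum_eq_single l]
      · simp [hl, hT₀, hT₁]
      · intro k _ hk
        split_ifs with h2 h3
        · rcases (hP _).mp h3.2 with h4 | h4
          · have := congrFun h4 k
            simp [h2] at this
          · have := congrFun h4 k
            rw [Function.update_of_ne hk] at this
            simp [h2] at this
        all_goals rfl
      · simp
      · intro T _ hT
        refine sum_eq_zero fun k _ => ?_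
        split_ifs with h2 h3
        · obtain rfl := ((hP _).mp h3.1).resolve_left hT
          have hkl : k ≠ l := by rintro rfl; simp at h2
          rcases (hP _).mp h3.2 with h4 | h4
          · have := congrFun h4 l
            rw [Function.update_of_ne hkl.symm] at this
            simp [hl] at this
          · have := congrFun h4 k
            simp only [Function.update_self] at this
            rw [h2] at this
            simp at this
        all_goals rfl
      · simp
    rw [s1, s2]; norm_num

theorem viol_adjacent (U : Fin 4 → ℕ) (D : (Fin 4 → Bool) → ℤ) (hD : ∀ T l, D T ≤ U l)
    {f : Fin 4 → ℕ} (hf : ∀ l, f l ≤ U l) (T T' : Fin 4 → Bool)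
    (hT : Viol U D f T) (hT' : Viol U D f T') (l l' : Fin 4) (hl : T l ≠ T' l)
    (hl' : T l' ≠ T' l') : l = l' := by
  by_contra hne
  have key : ∀ i, T i ≠ T' i → reflect U T f i + reflect U T' f i = U i := by
    intro i hi
    have := hf i
    unfold reflect
    rcases h1 : T i <;> rcases h2 : T' i <;> simp_all
  have h1 : ∑ i ∈ {l, l'}, (reflect U T f i + reflect U T' f i) ≤
      ∑ i, (reflect U T f i + reflect U T' f i) :=
    sum_le_sum_of_subset (subset_univ _)
  rw [sum_pair hne, key l hl, key l' hl', sum_add_distrib] at h1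
  have h2 := hD T l
  have h3 := hD T' l'
  unfold Viol cornerDist at hT hT'
  omega

theorem incl_excl (U : Fin 4 → ℕ) (π : ℕ) (D : (Fin 4 → Bool) → ℤ)
    (hD : ∀ T l, D T ≤ U l)
    (hpar : ∀ T, (D T + π + ∑ l, if T l then (U l : ℤ) else 0) % 2 = 0) :
    (#((paritybox U π).filter fun f => ∀ T, ¬ Viol U D f T) : ℤ) =
    #(paritybox U π) - ∑ T, (ballCount (D T) : ℤ) + ∑ T, ∑ l, if T l = false then
      (edgeCount ((D T + D (Function.update T l true) - U l) / 2) : ℤ) else 0 := by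
  have e1 : (#((paritybox U π).filter fun f => ∀ T, ¬ Viol U D f T) : ℤ) =
      ∑ f ∈ paritybox U π, (if ∀ T, ¬ Viol U D f T then 1 else 0 : ℤ) := by
    rw [card_filter]; push_cast; rfl
  have e2 : ∀ T, (ballCount (D T) : ℤ) =
      ∑ f ∈ paritybox U π, (if Viol U D f T then 1 else 0 : ℤ) := fun T => by
    rw [← card_viol U π D hD hpar T, card_filter]; push_cast; rfl
  have e3 : ∀ T l, (if T l = false then
      (edgeCount ((D T + D (Function.update T l true) - U l) / 2) : ℤ) else 0) =
      ∑ f ∈ paritybox U π, if T l = false then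
        (if Viol U D f T ∧ Viol U D f (Function.update T l true) then 1 else 0 : ℤ) else 0 := by
    intro T l
    split_ifs with h
    · rw [← card_edge U π D hD hpar T l h, card_filter]; push_cast; rfl
    · simp
  simp only [e1, e2, e3]
  rw [sum_congr rfl fun f hf => incl_excl_pointwise (Viol U D f)
    (viol_adjacent U D hD (mem_paritybox.mp hf).1)]
  rw [sum_add_distrib, sum_sub_distrib, sum_const, sum_comm (s := paritybox U π),
    sum_comm (s := paritybox U π)]
  congr 1
  · simp
  · exact sum_congr rfl fun T _ => sum_comm

/-! ### The fibres and their cardinalities -/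

theorem sum_neg_one_pow_range (U : ℕ) :
    ∑ x ∈ range (U + 1), (-1 : ℤ) ^ x = if U % 2 = 0 then 1 else 0 := by
  induction U with
  | zero => simp
  | succ U ih =>
    rw [sum_range_succ, ih]
    rcases Nat.mod_two_eq_zero_or_one U with h | h
    · have : (U + 1) % 2 = 1 := by omega
      rw [if_pos h, this, Odd.neg_one_pow (Nat.odd_iff.mpr this)]; simp
    · have : (U + 1) % 2 = 0 := by omega
      rw [if_neg (by omega), this, Even.neg_one_pow (Nat.even_iff.mpr this)]; simp

/-- Averaging over the character `f ↦ (-1) ^ ∑ f`. -/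
theorem card_paritybox (U : Fin 4 → ℕ) (π : ℕ) : 2 * (#(paritybox U π) : ℤ) =
    ∏ l, ((U l : ℤ) + 1) + (-1) ^ π * ∏ l, (if U l % 2 = 0 then 1 else 0 : ℤ) := by
  have h : ∀ f : Fin 4 → ℕ, 2 * (if (∑ l, f l + π) % 2 = 0 then 1 else 0 : ℤ) =
      1 + (-1) ^ π * ∏ l, (-1 : ℤ) ^ f l := by
    intro f
    rw [prod_pow_eq_pow_sum, ← pow_add, add_comm π]
    rcases Nat.mod_two_eq_zero_or_one (∑ l, f l + π) with h | h
    · rw [if_pos h, Even.neg_one_pow (Nat.even_iff.mpr h)]; norm_num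
    · rw [if_neg (by omega), Odd.neg_one_pow (Nat.odd_iff.mpr h)]; norm_num
  rw [paritybox, card_filter]
  push_cast
  rw [mul_sum, sum_congr rfl fun f _ => h f, sum_add_distrib, ← mul_sum, ← prod_univ_sum]
  simp only [sum_neg_one_pow_range]
  congr 1
  simp

/-- The sides of the box containing `fibre v b₁ b₂ b₃ l`. -/
def boxSize (v b₁ b₂ b₃ l : ℕ) : Fin 4 → ℕ :=
  ![2 * v + 4 * b₁ + 3 * b₂ + 2 * b₃ + l, 2 * v + 3 * b₁ + 3 * b₂ + 2 * b₃ + l,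
    2 * v + 3 * b₁ + 2 * b₂ + 2 * b₃ + l, 2 * v + 3 * b₁ + 2 * b₂ + 2 * b₃ + l]

/-- The linear form in `v, b₁, b₂, b₃, l` giving the depth to which each corner is truncated. -/
def cornerForm : Bool → Bool → Bool → Bool → Vals
  | false, false, false, false => (2, 3, 2, 1, 0)
  | false, false, true, true => (2, 3, 2, 1, 0)
  | false, true, false, true => (2, 3, 1, 1, 0)
  | false, true, true, false => (2, 3, 1, -1, 0)
  | false, true, true, true => (2, 2, 1, 1, 1)
  | true, false, true, true => (2, 3, 1, 1, 1)
  | true, true, false, true => (2, 3, 2, 1, 1)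
  | true, true, true, false => (2, 3, 2, 1, 1)
  | true, true, true, true => (2, 2, 0, -1, 0)
  | true, true, false, false => (2, 2, 0, -1, 0)
  | true, false, true, false => (2, 2, 1, -1, 0)
  | true, false, false, true => (2, 2, 1, 1, 0)
  | true, false, false, false => (2, 3, 1, -1, -1)
  | false, true, false, false => (2, 2, 1, -1, -1)
  | false, false, true, false => (2, 2, 0, -1, -1)
  | false, false, false, true => (2, 2, 0, -1, -1)

/-- The value of the linear form `x` at `(v, b₁, b₂, b₃, l)`. -/
def pair (x : Vals) (v b₁ b₂ b₃ l : ℕ) : ℤ :=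
  x.1 * v + x.2.1 * b₁ + x.2.2.1 * b₂ + x.2.2.2.1 * b₃ + x.2.2.2.2 * l

/-- The depth to which the corner `T` of the box is truncated. -/
def cornerBound (v b₁ b₂ b₃ l : ℕ) (T : Fin 4 → Bool) : ℤ :=
  pair (cornerForm (T 0) (T 1) (T 2) (T 3)) v b₁ b₂ b₃ l

/-- The points of the parity box that survive the truncation of its sixteen corners.  They correspond to
the magic cubes of sum `3 * (v + 2 * b₁ + 2 * b₂ + 2 * b₃ + l)` whose axis deviations are
`gapVec b₁ b₂ b₃ l`; see `card_layer`. -/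
def fibre (v b₁ b₂ b₃ l : ℕ) : Finset (Fin 4 → ℕ) :=
  (paritybox (boxSize v b₁ b₂ b₃ l) (b₁ + b₃)).filter fun f =>
    ∀ T, ¬ Viol (boxSize v b₁ b₂ b₃ l) (cornerBound v b₁ b₂ b₃ l) f T

theorem forall_bool4 {P : (Fin 4 → Bool) → Prop} :
    (∀ T, P T) ↔ ∀ a b c d, P ![a, b, c, d] :=
  ⟨fun h a b c d => h _, fun h T => by
    have : T = ![T 0, T 1, T 2, T 3] := by ext i; fin_cases i <;> rfl
    rw [this]; exact h _ _ _ _⟩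

theorem sum_bool4 (F : (Fin 4 → Bool) → ℤ) : ∑ T, F T = ∑ a, ∑ b, ∑ c, ∑ d, F ![a, b, c, d] := by
  have : ∑ T, F T = ∑ x : Bool × Bool × Bool × Bool, F ![x.1, x.2.1, x.2.2.1, x.2.2.2] := by
    symm
    refine Fintype.sum_bijective (fun x : Bool × Bool × Bool × Bool => ![x.1, x.2.1, x.2.2.1, x.2.2.2])
      (by decide) _ _ fun _ => rfl
  rw [this]
  simp only [Fintype.sum_prod_type]

theorem choose_formulas (n : ℕ) : 2 * (n.choose 2 : ℤ) = n * (n - 1) ∧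
    6 * (n.choose 3 : ℤ) = n * (n - 1) * (n - 2) ∧
    24 * (n.choose 4 : ℤ) = n * (n - 1) * (n - 2) * (n - 3) := by
  induction n with
  | zero => simp
  | succ n ih =>
    obtain ⟨h2, h3, h4⟩ := ih
    rw [Nat.choose_succ_succ' n 1, Nat.choose_succ_succ' n 2, Nat.choose_succ_succ' n 3,
      Nat.choose_one_right]
    push_cast
    refine ⟨?_, ?_, ?_⟩
    · linear_combination h2
    · linear_combination h3 + 3 * h2
    · linear_combination h4 + 4 * h3

theorem quasi_natCast (a : ℕ → ℤ) (n : ℕ) : 24 * quasi a n =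
    24 * a 0 + 24 * a 1 * n + 12 * a 2 * (n * (n - 1)) + 4 * a 3 * (n * (n - 1) * (n - 2)) +
      a 4 * (n * (n - 1) * (n - 2) * (n - 3)) + 24 * a 5 * (-1) ^ n := by
  obtain ⟨h2, h3, h4⟩ := choose_formulas n
  have : ¬ ((n : ℤ) < 0) := by omega
  simp only [quasi, this, if_false, Int.toNat_natCast, sum_range_succ, range_zero, sum_empty,
    Nat.choose_zero_right, Nat.choose_one_right]
  push_cast
  linear_combination 12 * a 2 * h2 + 4 * a 3 * h3 + a 4 * h4

theorem quasi_pow_four {k : ℤ} (hk : 0 ≤ k) :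
    quasi (coeffList [1, 15, 50, 60, 24, 0]) k = (k + 1) ^ 4 ∧
    quasi (coeffList [16, 65, 110, 84, 24, 0]) k = (k + 2) ^ 4 ∧
    quasi (coeffList [81, 175, 194, 108, 24, 0]) k = (k + 3) ^ 4 ∧
    quasi (coeffList [256, 369, 302, 132, 24, 0]) k = (k + 4) ^ 4 := by
  lift k to ℕ using hk
  have key := fun a => quasi_natCast a k
  refine ⟨?_, ?_, ?_, ?_⟩ <;> refine mul_left_cancel₀ (by norm_num : (24 : ℤ) ≠ 0) ?_ <;>
    rw [key] <;> simp [coeffList] <;> ring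

theorem quasi_sign (n : ℕ) : quasi (coeffList [0, 0, 0, 0, 0, 1]) n = (-1) ^ n := by
  refine mul_left_cancel₀ (by norm_num : (24 : ℤ) ≠ 0) ?_
  rw [quasi_natCast]; simp [coeffList]

theorem cornerBound_le (v b₁ b₂ b₃ l : ℕ) (T : Fin 4 → Bool) (i : Fin 4) :
    cornerBound v b₁ b₂ b₃ l T ≤ boxSize v b₁ b₂ b₃ l i := by
  unfold cornerBound
  cases T 0 <;> cases T 1 <;> cases T 2 <;> cases T 3 <;> fin_cases i <;>
    simp [cornerForm, pair, boxSize] <;> omega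

theorem cornerBound_parity (v b₁ b₂ b₃ l : ℕ) (T : Fin 4 → Bool) :
    (cornerBound v b₁ b₂ b₃ l T + (b₁ + b₃ : ℕ) +
      ∑ i, if T i then (boxSize v b₁ b₂ b₃ l i : ℤ) else 0) % 2 = 0 := by
  rw [Fin.sum_univ_four]
  unfold cornerBound
  cases T 0 <;> cases T 1 <;> cases T 2 <;> cases T 3 <;>
    simp [cornerForm, pair, boxSize] <;> omega

theorem ball_sum (v b₁ b₂ b₃ l : ℕ) : 96 * ∑ T, (ballCount (cornerBound v b₁ b₂ b₃ l T) : ℤ) =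
    -(hTerms.map fun t => t.1 *
      quasi (coeffList [-1, 2, 28, 40, 16, 1]) (pair t.2 v b₁ b₂ b₃ l)).sum := by
  have h : ∀ T, 96 * (ballCount (cornerBound v b₁ b₂ b₃ l T) : ℤ) =
      3 * quasi (coeffList [-1, 2, 28, 40, 16, 1]) (cornerBound v b₁ b₂ b₃ l T) := fun T => by
    linear_combination 3 * ballCount_eq (cornerBound v b₁ b₂ b₃ l T)
  rw [mul_sum, sum_congr rfl fun T _ => h T, sum_bool4]
  generalize coeffList [-1, 2, 28, 40, 16, 1] = a
  simp only [Fintype.sum_bool, cornerBound, Matrix.cons_val, cornerForm, hTerms, List.map_cons,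
    List.map_nil, List.sum_cons, List.sum_nil]
  ring

theorem edge_sum (v b₁ b₂ b₃ l : ℕ) : 96 * (∑ T, ∑ i, if T i = false then
      (edgeCount ((cornerBound v b₁ b₂ b₃ l T + cornerBound v b₁ b₂ b₃ l (Function.update T i true)
        - boxSize v b₁ b₂ b₃ l i) / 2) : ℤ) else 0) =
    (kTerms.map fun t => t.1 * quasi (coeffList [0, 0, 1, 2, 1, 0]) (pair t.2 v b₁ b₂ b₃ l)).sum := by
  have key : ∀ (x : Vals) (e : ℤ), e = 2 * pair x v b₁ b₂ b₃ l → (edgeCount (e / 2) : ℤ) =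
      quasi (coeffList [0, 0, 1, 2, 1, 0]) (pair x v b₁ b₂ b₃ l) := fun x e he => by
    rw [edgeCount_eq, he, Int.mul_ediv_cancel_left _ (by norm_num)]
  rw [sum_bool4]
  generalize coeffList [0, 0, 1, 2, 1, 0] = a at key ⊢
  simp only [kTerms, List.map_cons, List.map_nil, List.sum_cons, List.sum_nil]
  -- the arguments of the edge counts, over all thirty-two edges of the box
  have k1 := key (1,1,0,-1,-1)
  have k2 := key (1,1,0,0,0)
  have k3 := key (1,1,-1,-1,-1)
  have k4 := key (1,1,0,-1,0)
  have k5 := key (1,1,0,-2,-1)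
  have k6 := key (1,1,-1,-2,-1)
  have k7 := key (1,0,-1,-1,0)
  have k8 := key (1,1,-1,-1,0)
  have k9 := key (1,0,-1,-2,-1)
  have k10 := key (1,0,-1,-1,-1)
  generalize quasi a (pair (1,1,0,-1,-1) v b₁ b₂ b₃ l) = q1 at *
  generalize quasi a (pair (1,1,0,0,0) v b₁ b₂ b₃ l) = q2 at *
  generalize quasi a (pair (1,1,-1,-1,-1) v b₁ b₂ b₃ l) = q3 at *
  generalize quasi a (pair (1,1,0,-1,0) v b₁ b₂ b₃ l) = q4 at *
  generalize quasi a (pair (1,1,0,-2,-1) v b₁ b₂ b₃ l) = q5 at *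
  generalize quasi a (pair (1,1,-1,-2,-1) v b₁ b₂ b₃ l) = q6 at *
  generalize quasi a (pair (1,0,-1,-1,0) v b₁ b₂ b₃ l) = q7 at *
  generalize quasi a (pair (1,1,-1,-1,0) v b₁ b₂ b₃ l) = q8 at *
  generalize quasi a (pair (1,0,-1,-2,-1) v b₁ b₂ b₃ l) = q9 at *
  generalize quasi a (pair (1,0,-1,-1,-1) v b₁ b₂ b₃ l) = q10 at *
  clear key
  simp only [pair] at k1 k2 k3 k4 k5 k6 k7 k8 k9 k10
  simp only [Fintype.sum_bool, Fin.sum_univ_four, cornerBound, Matrix.cons_val, cornerForm,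
    Function.update, boxSize, pair]
  simp
  simp (disch := (push_cast; ring1)) only [k1, k2, k3, k4, k5, k6, k7, k8, k9, k10]
  ring

theorem box_sign (v b₁ b₂ b₃ l : ℕ) :
    (8 : ℤ) * ((-1) ^ (b₁ + b₃) * ∏ i, (if boxSize v b₁ b₂ b₃ l i % 2 = 0 then 1 else 0)) =
    (-1) ^ b₃ * ((1 + (-1) ^ b₁) * (1 + (-1) ^ b₂) * (1 + (-1) ^ l)) := by
  rw [pow_add]
  simp only [Fin.prod_univ_four, boxSize, Matrix.cons_val]
  rcases Nat.even_or_odd b₁ with h1 | h1 <;> rcases Nat.even_or_odd b₂ with h2 | h2 <;>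
    rcases Nat.even_or_odd l with h3 | h3 <;> simp only [h1.neg_one_pow, h2.neg_one_pow, h3.neg_one_pow] <;>
    (simp only [Nat.even_iff, Nat.odd_iff] at h1 h2 h3
     have e1 : (2 * v + 4 * b₁ + 3 * b₂ + 2 * b₃ + l) % 2 = (b₂ % 2 + l % 2) % 2 := by omega
     have e2 : (2 * v + 3 * b₁ + 3 * b₂ + 2 * b₃ + l) % 2 = (b₁ % 2 + b₂ % 2 + l % 2) % 2 := by omega
     have e3 : (2 * v + 3 * b₁ + 2 * b₂ + 2 * b₃ + l) % 2 = (b₁ % 2 + l % 2) % 2 := by omega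
     simp [e1, e2, e3, h1, h2, h3]
     try ring)

/-- The product of the sides is expanded into fourth powers by polarization, and the parity correction
into signs of linear forms. -/
theorem box_sum (v b₁ b₂ b₃ l : ℕ) :
    96 * (#(paritybox (boxSize v b₁ b₂ b₃ l) (b₁ + b₃)) : ℤ) =
    (boxTerms.map fun t => t.1 * quasi (coeffList t.2.2) (pair t.2.1 v b₁ b₂ b₃ l)).sum := by
  have hsign := box_sign v b₁ b₂ b₃ l
  have h1 := fun {k : ℤ} (hk : 0 ≤ k) => (quasi_pow_four hk).1
  have h2 := fun {k : ℤ} (hk : 0 ≤ k) => (quasi_pow_four hk).2.1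
  have h3 := fun {k : ℤ} (hk : 0 ≤ k) => (quasi_pow_four hk).2.2.1
  have h4 := fun {k : ℤ} (hk : 0 ≤ k) => (quasi_pow_four hk).2.2.2
  have hs : ∀ s₁ s₂ s₃ : ℕ, quasi (coeffList [0, 0, 0, 0, 0, 1])
      (pair (0, s₁, s₂, 1, s₃) v b₁ b₂ b₃ l) =
      (-1) ^ b₃ * (((-1) ^ b₁) ^ s₁ * ((-1) ^ b₂) ^ s₂ * ((-1) ^ l) ^ s₃) := fun s₁ s₂ s₃ => by
    have : pair (0, s₁, s₂, 1, s₃) v b₁ b₂ b₃ l = (s₁ * b₁ + s₂ * b₂ + b₃ + s₃ * l : ℕ) := by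
      simp [pair]
    rw [this, quasi_sign]
    ring
  have s0 := hs 0 0 0
  have s1 := hs 0 0 1
  have s2 := hs 0 1 0
  have s3 := hs 0 1 1
  have s4 := hs 1 0 0
  have s5 := hs 1 0 1
  have s6 := hs 1 1 0
  have s7 := hs 1 1 1
  simp only [Nat.cast_zero, Nat.cast_one] at s0 s1 s2 s3 s4 s5 s6 s7
  have hc := card_paritybox (boxSize v b₁ b₂ b₃ l) (b₁ + b₃)
  simp only [boxTerms, List.map_cons, List.map_nil, List.sum_cons, List.sum_nil, s0, s1, s2, s3, s4, s5, s6, s7]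
  generalize quasi (coeffList [1, 15, 50, 60, 24, 0]) = Q₁ at *
  generalize quasi (coeffList [16, 65, 110, 84, 24, 0]) = Q₂ at *
  generalize quasi (coeffList [81, 175, 194, 108, 24, 0]) = Q₃ at *
  generalize quasi (coeffList [256, 369, 302, 132, 24, 0]) = Q₄ at *
  clear hs s0 s1 s2 s3 s4 s5 s6 s7
  simp only [pair]
  rw [h1 (by positivity), h1 (by positivity), h1 (by positivity), h2 (by positivity),
    h2 (by positivity), h2 (by positivity), h2 (by positivity), h3 (by positivity),
    h3 (by positivity), h3 (by positivity), h4 (by positivity)]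
  have hp : ∏ i, ((boxSize v b₁ b₂ b₃ l i : ℤ) + 1) =
      (2 * v + 4 * b₁ + 3 * b₂ + 2 * b₃ + l + 1) * (2 * v + 3 * b₁ + 3 * b₂ + 2 * b₃ + l + 1) *
      (2 * v + 3 * b₁ + 2 * b₂ + 2 * b₃ + l + 1) * (2 * v + 3 * b₁ + 2 * b₂ + 2 * b₃ + l + 1) := by
    simp only [Fin.prod_univ_four, boxSize, Matrix.cons_val]
    push_cast
    ring
  rw [hp] at hc
  linear_combination 48 * hc + 6 * hsign

/-- Inclusion-exclusion over the corners and edges of the box. -/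
theorem fibre_card (v b₁ b₂ b₃ l : ℕ) : 96 * (#(fibre v b₁ b₂ b₃ l) : ℤ) =
    (terms.map fun t => t.1 * quasi (coeffList t.2.2) (pair t.2.1 v b₁ b₂ b₃ l)).sum := by
  rw [fibre, incl_excl _ _ _ (cornerBound_le v b₁ b₂ b₃ l) (cornerBound_parity v b₁ b₂ b₃ l)]
  have h1 := ball_sum v b₁ b₂ b₃ l
  have h2 := edge_sum v b₁ b₂ b₃ l
  have h3 := box_sum v b₁ b₂ b₃ l
  have h4 : (terms.map fun t => t.1 * quasi (coeffList t.2.2) (pair t.2.1 v b₁ b₂ b₃ l)).sum =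
      (hTerms.map fun t => t.1 * quasi (coeffList [-1, 2, 28, 40, 16, 1]) (pair t.2 v b₁ b₂ b₃ l)).sum +
      (kTerms.map fun t => t.1 * quasi (coeffList [0, 0, 1, 2, 1, 0]) (pair t.2 v b₁ b₂ b₃ l)).sum +
      (boxTerms.map fun t => t.1 * quasi (coeffList t.2.2) (pair t.2.1 v b₁ b₂ b₃ l)).sum := by
    conv_lhs => rw [terms]
    rw [List.map_append, List.map_append, List.sum_append, List.sum_append, List.map_map, List.map_map]
    rfl
  rw [h4]
  linear_combination h3 - h1 + h2

/-- The number of signed permutations of the axis deviations `gapVec b₁ b₂ b₃ l`, as encoded by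
`strata`. -/
def weight (b₁ b₂ b₃ l : ℕ) : ℤ :=
  (strata.map fun z => if ((z.2.1 = false → b₁ = 0) ∧
        (z.2.2.1 = false → b₂ = 0) ∧ (z.2.2.2.1 = false → b₃ = 0) ∧ (z.2.2.2.2 = false → l = 0))
        then z.1 else 0).sum

theorem list_sum_finset_sum {α β : Type*} (L : List α) (S : Finset β) (F : α → β → ℤ) :
    (L.map fun a => ∑ b ∈ S, F a b).sum = ∑ b ∈ S, (L.map fun a => F a b).sum := by
  induction L with
  | nil => simp
  | cons a L ih => simp [ih, sum_add_distrib]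

theorem list_sum_mul {α : Type*} (L : List α) (F : α → ℤ) (c : ℤ) :
    (L.map fun a => F a * c).sum = (L.map F).sum * c := by
  induction L with
  | nil => simp
  | cons a L ih => simp [ih, add_mul]

theorem coeff_list_sum {α : Type*} (n : ℕ) (L : List α) (F : α → PowerSeries ℤ) :
    coeff n (L.map F).sum = (L.map fun a => coeff n (F a)).sum := by
  induction L with
  | nil => simp
  | cons a L ih => simp [ih]

theorem coeff_series (n : ℕ) : coeff n series =
    96 * ∑ v ∈ range (n + 1), ∑ b₁ ∈ range (n + 1), ∑ b₂ ∈ range (n + 1),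
      ∑ b₃ ∈ range (n + 1), ∑ l ∈ range (n + 1), if v + 2 * b₁ + 2 * b₂ + 2 * b₃ + l = n then
        weight b₁ b₂ b₃ l * #(fibre v b₁ b₂ b₃ l) else 0 := by
  simp only [series, coeff_list_sum, coeff_C_mul, coeff_W_gens, mul_sum, list_sum_finset_sum]
  refine sum_congr rfl fun v _ => sum_congr rfl fun b₁ _ => sum_congr rfl fun b₂ _ =>
    sum_congr rfl fun b₃ _ => sum_congr rfl fun l _ => ?_
  by_cases h : v + 2 * b₁ + 2 * b₂ + 2 * b₃ + l = n
  · simp only [h, true_and, if_true]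
    rw [mul_left_comm, fibre_card, mul_comm, ← list_sum_mul]
    congr 2
    ext t
    rw [mul_assoc, weight, mul_comm (quasi _ _), ← list_sum_mul]
    congr 3
    ext z
    unfold pair
    split_ifs <;> simp
  · simp [h]

/-! ### Coordinates on magic cubes -/

/-- Three integers with sum zero are determined by the first and the last: the value at position
`t` is `wt t false` times the first plus `wt t true` times the last. -/
def wt (t : Fin 3) (b : Bool) : ℤ := ![if b then 0 else 1, -1, if b then 1 else 0] t

/-- The sixteen corner values of an array with zero line and diagonal sums, in terms of eight of
them; `false` stands for index `0` and `true` for index `2`. The centre of such an array vanishes,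
so opposite corners carry opposite values. -/
def corner (p : Fin 8 → ℤ) : Bool → Bool → Bool → Bool → ℤ
  | false, false, false, false => p 0
  | true, false, false, false => p 1
  | false, true, false, false => p 2
  | false, false, true, false => p 3
  | false, false, false, true => p 4
  | true, true, false, false => p 5
  | true, false, true, false => p 6
  | true, false, false, true => p 7
  | false, true, true, false => -p 7
  | false, true, false, true => -p 6
  | false, false, true, true => -p 5
  | true, true, true, false => -p 4
  | true, true, false, true => -p 3
  | true, false, true, true => -p 2
  | false, true, true, true => -p 1
  | true, true, true, true => -p 0

/-- The array with zero line and diagonal sums whose corner values are given by `p`. -/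
def ent (p : Fin 8 → ℤ) (g : Fin 4 → Fin 3) : ℤ :=
  ∑ b₀, ∑ b₁, ∑ b₂, ∑ b₃, wt (g 0) b₀ * (wt (g 1) b₁ * (wt (g 2) b₂ * (wt (g 3) b₃ * corner p b₀ b₁ b₂ b₃)))

/-- The negatives of the entries of `ent p` next to the centre, at index `0` along the `k`-th axis
(see `ent_axis`). -/
def lform (p : Fin 8 → ℤ) : Fin 4 → ℤ :=
  ![p 0 - p 1 + p 2 + p 3 + p 4 - p 5 - p 6 - p 7, p 0 + p 1 - p 2 + p 3 + p 4 - p 5 + p 6 + p 7,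
    p 0 + p 1 + p 2 - p 3 + p 4 + p 5 - p 6 + p 7, p 0 + p 1 + p 2 + p 3 - p 4 + p 5 + p 6 - p 7]

theorem cornerDist_cast {U f : Fin 4 → ℕ} (hf : ∀ i, f i ≤ U i) (T : Fin 4 → Bool) :
    (cornerDist U T f : ℤ) = (if T 0 then (U 0 : ℤ) - f 0 else f 0) +
      (if T 1 then (U 1 : ℤ) - f 1 else f 1) + (if T 2 then (U 2 : ℤ) - f 2 else f 2) +
      (if T 3 then (U 3 : ℤ) - f 3 else f 3) := by
  have : ∀ i, (reflect U T f i : ℤ) = if T i then (U i : ℤ) - f i else f i := fun i => by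
    unfold reflect
    split_ifs
    · exact Nat.cast_sub (hf i)
    · rfl
  rw [cornerDist, Fin.sum_univ_four]
  push_cast
  simp only [this]

theorem forall_fin3 {P : (Fin 4 → Fin 3) → Prop} :
    (∀ g, P g) ↔ ∀ a b c d, P ![a, b, c, d] :=
  ⟨fun h a b c d => h _, fun h T => by
    have : T = ![T 0, T 1, T 2, T 3] := by ext i; fin_cases i <;> rfl
    rw [this]; exact h _ _ _ _⟩

/-- The descending vector with consecutive gaps `2 * b₁`, `2 * b₂`, `2 * b₃` and last entry `l`. -/
def gapVec (b₁ b₂ b₃ l : ℕ) : Fin 4 → ℤ :=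
  ![2 * (b₁ : ℤ) + 2 * b₂ + 2 * b₃ + l, 2 * (b₂ : ℤ) + 2 * b₃ + l, 2 * (b₃ : ℤ) + l, (l : ℤ)]

/-- For the magic cube `m + ent p` with `m = v + 2 * b₁ + 2 * b₂ + 2 * b₃ + l`: its deviations next
to the centre are `gapVec b₁ b₂ b₃ l`, and `f i` is its entry at the midpoint of the `i`-th edge
issuing from the corner `(0, 0, 0, 0)`. -/
structure Compat (v b₁ b₂ b₃ l : ℕ) (p : Fin 8 → ℤ) (f : Fin 4 → ℕ) : Prop where
  hL : lform p = gapVec b₁ b₂ b₃ l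
  f0 : (f 0 : ℤ) = v + 2 * b₁ + 2 * b₂ + 2 * b₃ + l - (p 0 + p 1)
  f1 : (f 1 : ℤ) = v + 2 * b₁ + 2 * b₂ + 2 * b₃ + l - (p 0 + p 2)
  f2 : (f 2 : ℤ) = v + 2 * b₁ + 2 * b₂ + 2 * b₃ + l - (p 0 + p 3)
  f3 : (f 3 : ℤ) = v + 2 * b₁ + 2 * b₂ + 2 * b₃ + l - (p 0 + p 4)

/-- The sixteen truncations of the box are the sixteen corner inequalities. The corner `c` of the
cube belongs to the corner of the box obtained from `c` by flipping all bits when `c` has an odd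
number of `true` bits. -/
theorem not_viol_iff {v b₁ b₂ b₃ l : ℕ} {p : Fin 8 → ℤ} {f : Fin 4 → ℕ}
    (h : Compat v b₁ b₂ b₃ l p f)
    (hU : ∀ i, f i ≤ boxSize v b₁ b₂ b₃ l i) (c₀ c₁ c₂ c₃ : Bool) :
    ¬ Viol (boxSize v b₁ b₂ b₃ l) (cornerBound v b₁ b₂ b₃ l) f
      ![c₀ ^^ (c₀ ^^ c₁ ^^ c₂ ^^ c₃), c₁ ^^ (c₀ ^^ c₁ ^^ c₂ ^^ c₃), c₂ ^^ (c₀ ^^ c₁ ^^ c₂ ^^ c₃),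
        c₃ ^^ (c₀ ^^ c₁ ^^ c₂ ^^ c₃)] ↔
    corner p c₀ c₁ c₂ c₃ ≤ v + 2 * b₁ + 2 * b₂ + 2 * b₃ + l := by
  obtain ⟨hL, f0, f1, f2, f3⟩ := h
  have l0 := congrFun hL 0
  have l1 := congrFun hL 1
  have l2 := congrFun hL 2
  have l3 := congrFun hL 3
  simp only [lform, gapVec, Matrix.cons_val] at l0 l1 l2 l3
  rw [Viol, cornerDist_cast hU]
  clear hU hL
  cases c₀ <;> cases c₁ <;> cases c₂ <;> cases c₃ <;>
    simp [cornerBound, pair, cornerForm, boxSize, corner, f0, f1, f2, f3] <;> omega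

theorem ent_corner (p : Fin 8 → ℤ) (c₀ c₁ c₂ c₃ : Bool) :
    ent p ![if c₀ then 2 else 0, if c₁ then 2 else 0, if c₂ then 2 else 0, if c₃ then 2 else 0] =
      corner p c₀ c₁ c₂ c₃ := by
  cases c₀ <;> cases c₁ <;> cases c₂ <;> cases c₃ <;> simp [ent, wt]

theorem corner_not (p : Fin 8 → ℤ) (c₀ c₁ c₂ c₃ : Bool) :
    corner p (!c₀) (!c₁) (!c₂) (!c₃) = -corner p c₀ c₁ c₂ c₃ := by
  cases c₀ <;> cases c₁ <;> cases c₂ <;> cases c₃ <;> simp [corner]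

theorem mem_fibre_of_nonneg {v b₁ b₂ b₃ l : ℕ} {p : Fin 8 → ℤ} {f : Fin 4 → ℕ}
    (h : Compat v b₁ b₂ b₃ l p f)
    (hp : ∀ g, 0 ≤ v + 2 * b₁ + 2 * b₂ + 2 * b₃ + l + ent p g) : f ∈ fibre v b₁ b₂ b₃ l := by
  have hc : ∀ c₀ c₁ c₂ c₃, corner p c₀ c₁ c₂ c₃ ≤ v + 2 * b₁ + 2 * b₂ + 2 * b₃ + l := by
    intro c₀ c₁ c₂ c₃
    have := hp _ |>.trans_eq (congrArg _ (ent_corner p (!c₀) (!c₁) (!c₂) (!c₃)))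
    rw [corner_not] at this
    linarith
  have hU : ∀ i, f i ≤ boxSize v b₁ b₂ b₃ l i := by
    obtain ⟨hL, f0, f1, f2, f3⟩ := id h
    have l0 := congrFun hL 0
    have l1 := congrFun hL 1
    have l2 := congrFun hL 2
    have l3 := congrFun hL 3
    simp only [lform, gapVec, Matrix.cons_val] at l0 l1 l2 l3
    clear hL
    -- the upper bounds of the box are the nonnegativity of four further edge midpoints
    have key : ∀ i, (f i : ℤ) ≤ boxSize v b₁ b₂ b₃ l i := by
      have e0 := hp ![1, 0, 0, 2]
      have e1 := hp ![0, 1, 0, 2]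
      have e2 := hp ![0, 0, 1, 2]
      have e3 := hp ![0, 0, 2, 1]
      simp [ent, wt, corner] at e0 e1 e2 e3
      intro i
      fin_cases i <;> simp [boxSize, f0, f1, f2, f3] <;> linarith
    exact fun i => by exact_mod_cast key i
  rw [fibre, mem_filter, mem_paritybox]
  refine ⟨⟨hU, ?_⟩, ?_⟩
  · obtain ⟨hL, f0, f1, f2, f3⟩ := h
    have l0 := congrFun hL 0
    have l1 := congrFun hL 1
    have l2 := congrFun hL 2
    have l3 := congrFun hL 3
    simp only [lform, gapVec, Matrix.cons_val] at l0 l1 l2 l3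
    rw [Fin.sum_univ_four]
    omega
  · rw [forall_bool4]
    intro t₀ t₁ t₂ t₃
    have := (not_viol_iff h hU (t₀ ^^ (t₀ ^^ t₁ ^^ t₂ ^^ t₃)) (t₁ ^^ (t₀ ^^ t₁ ^^ t₂ ^^ t₃))
      (t₂ ^^ (t₀ ^^ t₁ ^^ t₂ ^^ t₃)) (t₃ ^^ (t₀ ^^ t₁ ^^ t₂ ^^ t₃))).2 (hc _ _ _ _)
    have e : ∀ t₀ t₁ t₂ t₃ : Bool, (let s := t₀ ^^ t₁ ^^ t₂ ^^ t₃
        let s' := (t₀ ^^ s) ^^ (t₁ ^^ s) ^^ (t₂ ^^ s) ^^ (t₃ ^^ s)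
        ![(t₀ ^^ s) ^^ s', (t₁ ^^ s) ^^ s', (t₂ ^^ s) ^^ s', (t₃ ^^ s) ^^ s']) =
        ![t₀, t₁, t₂, t₃] := by decide
    rwa [show _ = ![t₀, t₁, t₂, t₃] from e t₀ t₁ t₂ t₃] at this

set_option maxHeartbeats 4000000 in
/-- The corner inequalities and the bounds of the box already force all 81 entries to be
nonnegative: each entry is a nonnegative combination of the quantities bounded below. -/
theorem nonneg_of_mem_fibre {v b₁ b₂ b₃ l : ℕ} {p : Fin 8 → ℤ} {f : Fin 4 → ℕ}
    (h : Compat v b₁ b₂ b₃ l p f) (hf : f ∈ fibre v b₁ b₂ b₃ l) (g : Fin 4 → Fin 3) :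
    0 ≤ v + 2 * b₁ + 2 * b₂ + 2 * b₃ + l + ent p g := by
  rw [fibre, mem_filter, mem_paritybox] at hf
  obtain ⟨⟨hU, -⟩, hV⟩ := hf
  have hc : ∀ c₀ c₁ c₂ c₃, corner p c₀ c₁ c₂ c₃ ≤ v + 2 * b₁ + 2 * b₂ + 2 * b₃ + l :=
    fun c₀ c₁ c₂ c₃ => (not_viol_iff h hU c₀ c₁ c₂ c₃).1 (hV _)
  obtain ⟨hL, f0, f1, f2, f3⟩ := h
  have l0 := congrFun hL 0
  have l1 := congrFun hL 1
  have l2 := congrFun hL 2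
  have l3 := congrFun hL 3
  have u0 : (f 0 : ℤ) ≤ _ := Int.ofNat_le.2 (hU 0)
  have u1 : (f 1 : ℤ) ≤ _ := Int.ofNat_le.2 (hU 1)
  have u2 : (f 2 : ℤ) ≤ _ := Int.ofNat_le.2 (hU 2)
  have u3 : (f 3 : ℤ) ≤ _ := Int.ofNat_le.2 (hU 3)
  simp only [boxSize, Matrix.cons_val] at u0 u1 u2 u3
  push_cast at u0 u1 u2 u3
  simp only [lform, gapVec, Matrix.cons_val] at l0 l1 l2 l3
  have c0 := hc false false false false
  have c1 := hc true false false false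
  have c2 := hc false true false false
  have c3 := hc false false true false
  have c4 := hc false false false true
  have c5 := hc true true false false
  have c6 := hc true false true false
  have c7 := hc true false false true
  have d0 := hc true true true true
  have d1 := hc false true true true
  have d2 := hc true false true true
  have d3 := hc true true false true
  have d4 := hc true true true false
  have d5 := hc false false true true
  have d6 := hc false true false true
  have d7 := hc false true true false
  have e0 : (0 : ℤ) ≤ f 0 := by positivity
  have e1 : (0 : ℤ) ≤ f 1 := by positivity
  have e2 : (0 : ℤ) ≤ f 2 := by positivity
  have e3 : (0 : ℤ) ≤ f 3 := by positivity
  rw [f0] at u0 e0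
  rw [f1] at u1 e1
  rw [f2] at u2 e2
  rw [f3] at u3 e3
  have hv : (0 : ℤ) ≤ v := by positivity
  have hb1 : (0 : ℤ) ≤ b₁ := by positivity
  have hb2 : (0 : ℤ) ≤ b₂ := by positivity
  have hb3 : (0 : ℤ) ≤ b₃ := by positivity
  have hl : (0 : ℤ) ≤ l := by positivity
  clear hc hV hU hL f0 f1 f2 f3
  simp only [corner] at c0 c1 c2 c3 c4 c5 c6 c7 d0 d1 d2 d3 d4 d5 d6 d7
  generalize (v : ℤ) = v at *
  generalize (b₁ : ℤ) = b₁ at *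
  generalize (b₂ : ℤ) = b₂ at *
  generalize (b₃ : ℤ) = b₃ at *
  generalize (l : ℤ) = l at *
  revert g
  rw [forall_fin3]
  intro g₀ g₁ g₂ g₃
  fin_cases g₀ <;> fin_cases g₁ <;> fin_cases g₂ <;> fin_cases g₃ <;>
    simp [ent, wt, corner] <;> linarith

/-- All axis-parallel line sums of `A` equal `s`. -/
def LineSum (s : ℤ) (A : (Fin 4 → Fin 3) → ℤ) : Prop :=
  ∀ (j : Fin 4) (g : Fin 4 → Fin 3), ∑ t : Fin 3, A (Function.update g j t) = s

/-- All main diagonal sums of `A` equal `s`. Here `ε` is not normalised by `ε 0 = false`, so every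
diagonal is listed in both directions. -/
def DiagSum (s : ℤ) (A : (Fin 4 → Fin 3) → ℤ) : Prop :=
  ∀ ε : Fin 4 → Bool, ∑ t : Fin 3, A (fun j => if ε j then t.rev else t) = s

theorem update_vec (a b c d t : Fin 3) : Function.update ![a, b, c, d] 0 t = ![t, b, c, d] ∧
    Function.update ![a, b, c, d] 1 t = ![a, t, c, d] ∧
    Function.update ![a, b, c, d] 2 t = ![a, b, t, d] ∧
    Function.update ![a, b, c, d] 3 t = ![a, b, c, t] := by
  refine ⟨?_, ?_, ?_, ?_⟩ <;> ext i <;> fin_cases i <;> rfl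

/-- The end of a line selected by a bit. -/
def cor (b : Bool) : Fin 3 := if b then 2 else 0

theorem expand_line (h : Fin 3 → ℤ) (hs : ∑ t, h t = 0) (t : Fin 3) :
    h t = ∑ b, wt t b * h (cor b) := by
  rw [Fin.sum_univ_three] at hs
  fin_cases t <;> simp [wt, cor] <;> linarith

theorem line_expand {A : (Fin 4 → Fin 3) → ℤ} (h : LineSum 0 A) (g₀ g₁ g₂ g₃ : Fin 3) :
    A ![g₀, g₁, g₂, g₃] = ∑ b₀, ∑ b₁, ∑ b₂, ∑ b₃, wt g₀ b₀ * (wt g₁ b₁ * (wt g₂ b₂ *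
      (wt g₃ b₃ * A ![cor b₀, cor b₁, cor b₂, cor b₃]))) := by
  have h0 : ∀ a b c d, A ![a, b, c, d] = ∑ x, wt a x * A ![cor x, b, c, d] := fun a b c d =>
    expand_line (fun t => A ![t, b, c, d]) (by simpa only [(update_vec _ _ _ _ _).1] using h 0 ![a, b, c, d]) a
  have h1 : ∀ a b c d, A ![a, b, c, d] = ∑ x, wt b x * A ![a, cor x, c, d] := fun a b c d =>
    expand_line (fun t => A ![a, t, c, d]) (by simpa only [(update_vec _ _ _ _ _).2.1] using h 1 ![a, b, c, d]) b
  have h2 : ∀ a b c d, A ![a, b, c, d] = ∑ x, wt c x * A ![a, b, cor x, d] := fun a b c d =>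
    expand_line (fun t => A ![a, b, t, d]) (by simpa only [(update_vec _ _ _ _ _).2.2.1] using h 2 ![a, b, c, d]) c
  have h3 : ∀ a b c d, A ![a, b, c, d] = ∑ x, wt d x * A ![a, b, c, cor x] := fun a b c d =>
    expand_line (fun t => A ![a, b, c, t]) (by simpa only [(update_vec _ _ _ _ _).2.2.2] using h 3 ![a, b, c, d]) d
  rw [h0]
  simp only [h1 (cor _) g₁, h2 (cor _) (cor _) g₂, h3 (cor _) (cor _) (cor _) g₃, mul_sum]

theorem diag_expand {A : (Fin 4 → Fin 3) → ℤ} (h : DiagSum 0 A) (c₀ c₁ c₂ c₃ : Bool) :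
    A ![cor c₀, cor c₁, cor c₂, cor c₃] + A ![1, 1, 1, 1] +
      A ![cor (!c₀), cor (!c₁), cor (!c₂), cor (!c₃)] = 0 := by
  rw [← h ![c₀, c₁, c₂, c₃], Fin.sum_univ_three]
  congr 3
  all_goals
    ext i
    fin_cases i <;> cases c₀ <;> cases c₁ <;> cases c₂ <;> cases c₃ <;> rfl

/-- The lines give the centre as the sum of the sixteen corners, and the diagonals give that sum as
minus eight times the centre. -/
theorem centre_zero {A : (Fin 4 → Fin 3) → ℤ} (h : LineSum 0 A) (hd : DiagSum 0 A) :
    A ![1, 1, 1, 1] = 0 := by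
  have h1 := line_expand h 1 1 1 1
  have hd := diag_expand hd
  have d0 := hd false false false false
  have d1 := hd true false false false
  have d2 := hd false true false false
  have d3 := hd false false true false
  have d4 := hd false false false true
  have d5 := hd true true false false
  have d6 := hd true false true false
  have d7 := hd true false false true
  simp [wt] at h1
  simp at d0 d1 d2 d3 d4 d5 d6 d7
  linarith

/-- The eight corner values that determine an array with zero line and diagonal sums. -/
def params (A : (Fin 4 → Fin 3) → ℤ) : Fin 8 → ℤ :=
  ![A ![0, 0, 0, 0], A ![2, 0, 0, 0], A ![0, 2, 0, 0], A ![0, 0, 2, 0], A ![0, 0, 0, 2],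
    A ![2, 2, 0, 0], A ![2, 0, 2, 0], A ![2, 0, 0, 2]]

theorem eq_ent_params {A : (Fin 4 → Fin 3) → ℤ} (h : LineSum 0 A) (hd : DiagSum 0 A) :
    A = ent (params A) := by
  have key : ∀ c₀ c₁ c₂ c₃, A ![cor c₀, cor c₁, cor c₂, cor c₃] = corner (params A) c₀ c₁ c₂ c₃ := by
    have hc := centre_zero h hd
    intro c₀ c₁ c₂ c₃
    have h1 := diag_expand hd c₀ c₁ c₂ c₃
    rw [hc] at h1
    cases c₀ <;> cases c₁ <;> cases c₂ <;> cases c₃ <;> simp [corner, params, cor] at * <;> linarith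
  funext g
  revert g
  rw [forall_fin3]
  intro g₀ g₁ g₂ g₃
  rw [line_expand h, ent]
  simp only [key, Matrix.cons_val]

theorem ent_line (p : Fin 8 → ℤ) : LineSum 0 (ent p) := by
  have hw : ∀ b, wt 2 b = -wt 0 b - wt 1 b := by intro b; cases b <;> simp [wt]
  intro j
  rw [forall_fin3]
  intro g₀ g₁ g₂ g₃
  simp only [ent]
  fin_cases j <;> simp [Fin.sum_univ_three, hw, sub_mul, mul_sub] <;> ring

theorem ent_diag (p : Fin 8 → ℤ) : DiagSum 0 (ent p) := by
  rw [DiagSum, forall_bool4]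
  intro c₀ c₁ c₂ c₃
  simp only [ent, Fin.sum_univ_three]
  cases c₀ <;> cases c₁ <;> cases c₂ <;> cases c₃ <;> simp [wt, corner, Fin.rev] <;> ring

theorem ent_axis (p : Fin 8 → ℤ) (k : Fin 4) :
    ent p (Function.update (fun _ => 1) k 0) = -lform p k := by
  fin_cases k <;> simp [ent, wt, corner, lform, Function.update] <;> ring

theorem ent_edge (p : Fin 8 → ℤ) : ent p ![1, 0, 0, 0] = -(p 0 + p 1) ∧
    ent p ![0, 1, 0, 0] = -(p 0 + p 2) ∧ ent p ![0, 0, 1, 0] = -(p 0 + p 3) ∧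
    ent p ![0, 0, 0, 1] = -(p 0 + p 4) := by
  refine ⟨?_, ?_, ?_, ?_⟩ <;> simp [ent, wt, corner] <;> ring

/-! ### Layers of magic cubes -/

/-- `a` is a magic cube with magic sum `n`, expressed over the integers. -/
def Magic (n : ℕ) (a : (Fin 4 → Fin 3) → ℕ) : Prop :=
  LineSum n (fun g => (a g : ℤ)) ∧ DiagSum n (fun g => (a g : ℤ))

theorem magic_iff {m : ℕ} {a : (Fin 4 → Fin 3) → ℕ} : Magic (3 * m) a ↔
    LineSum 0 (fun g => (a g : ℤ) - m) ∧ DiagSum 0 (fun g => (a g : ℤ) - m) := by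
  simp only [Magic, LineSum, DiagSum, sum_sub_distrib, sum_const, card_univ, Fintype.card_fin,
    sub_eq_zero, nsmul_eq_mul]
  push_cast
  rfl

theorem magic_le {n : ℕ} {a : (Fin 4 → Fin 3) → ℕ} (h : Magic n a) (g : Fin 4 → Fin 3) : a g ≤ n := by
  have h1 := h.1 0 g
  have h2 : (a (Function.update g 0 (g 0)) : ℤ) ≤ ∑ t : Fin 3, (a (Function.update g 0 t) : ℤ) :=
    single_le_sum (f := fun t => (a (Function.update g 0 t) : ℤ)) (fun t _ => by positivity) (mem_univ _)
  rw [h1, Function.update_eq_self] at h2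
  exact_mod_cast h2

open Classical in
/-- The finite set of magic cubes with magic sum `3 * m`. -/
noncomputable def cubes (m : ℕ) : Finset ((Fin 4 → Fin 3) → ℕ) :=
  (Fintype.piFinset fun _ => range (3 * m + 1)).filter (Magic (3 * m))

theorem mem_cubes {m : ℕ} {a : (Fin 4 → Fin 3) → ℕ} : a ∈ cubes m ↔ Magic (3 * m) a := by
  simp only [cubes, mem_filter, Fintype.mem_piFinset, mem_range, and_iff_right_iff_imp]
  exact fun h g => Nat.lt_succ_of_le (magic_le h g)

/-- By how much the entry next to the centre at index `0` of the `k`-th axis falls short of the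
central value `m`. -/
def deflect (m : ℕ) (a : (Fin 4 → Fin 3) → ℕ) (k : Fin 4) : ℤ :=
  m - a (Function.update (fun _ => 1) k 0)

/-- The magic cubes of magic sum `3 * m` with prescribed deviations next to the centre. -/
noncomputable def layer (m : ℕ) (L : Fin 4 → ℤ) : Finset ((Fin 4 → Fin 3) → ℕ) :=
  (cubes m).filter fun a => deflect m a = L

/-- After subtracting `m`, a magic cube of magic sum `3 * m` is one of the arrays `ent p`. -/
theorem cube_eq_ent {m : ℕ} {a : (Fin 4 → Fin 3) → ℕ} (h : Magic (3 * m) a) :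
    ∃ p, (∀ g, (a g : ℤ) = m + ent p g) ∧ deflect m a = lform p := by
  rw [magic_iff] at h
  have h1 := eq_ent_params h.1 h.2
  have h2 : ∀ g, (a g : ℤ) = m + ent (params fun g => (a g : ℤ) - m) g := fun g => by
    rw [← h1]; ring
  refine ⟨_, h2, ?_⟩
  ext k
  rw [deflect, h2, ent_axis]
  ring

theorem Compat.eq {v b₁ b₂ b₃ l : ℕ} {p q : Fin 8 → ℤ} {f : Fin 4 → ℕ}
    (hp : Compat v b₁ b₂ b₃ l p f) (hq : Compat v b₁ b₂ b₃ l q f) : p = q := by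
  obtain ⟨hL, f0, f1, f2, f3⟩ := hp
  obtain ⟨hL', f0', f1', f2', f3'⟩ := hq
  have l0 := congrFun hL 0
  have l1 := congrFun hL 1
  have l2 := congrFun hL 2
  have l3 := congrFun hL 3
  have l0' := congrFun hL' 0
  have l1' := congrFun hL' 1
  have l2' := congrFun hL' 2
  have l3' := congrFun hL' 3
  simp only [lform, gapVec, Matrix.cons_val] at l0 l1 l2 l3 l0' l1' l2' l3'
  ext i
  fin_cases i <;> simp <;> linarith

/-- The corner parameters are recovered from the four edge midpoints and the deviations; the parity
condition on the box makes the value at the corner `(0, 0, 0, 0)` an integer. -/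
theorem exists_compat {v b₁ b₂ b₃ l : ℕ} {f : Fin 4 → ℕ} (hf : f ∈ fibre v b₁ b₂ b₃ l) :
    ∃ p, Compat v b₁ b₂ b₃ l p f := by
  rw [fibre, mem_filter, mem_paritybox, Fin.sum_univ_four] at hf
  have hpar := hf.1.2
  obtain ⟨x, hx⟩ : ∃ x : ℤ, 2 * x = 4 * (v + 2 * b₁ + 2 * b₂ + 2 * b₃ + l) -
      (f 0 + f 1 + f 2 + f 3) - (b₁ + 2 * b₂ + 3 * b₃ + 2 * l) :=
    ⟨(4 * (v + 2 * b₁ + 2 * b₂ + 2 * b₃ + l) -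
      (f 0 + f 1 + f 2 + f 3) - (b₁ + 2 * b₂ + 3 * b₃ + 2 * l)) / 2, by omega⟩
  obtain ⟨m, hm⟩ : ∃ m : ℤ, m = v + 2 * b₁ + 2 * b₂ + 2 * b₃ + l := ⟨_, rfl⟩
  refine ⟨![x, m - f 0 - x, m - f 1 - x, m - f 2 - x, m - f 3 - x,
    x + (m - f 2 - x) + (m - f 3 - x) - (b₁ + 2 * b₂ + 2 * b₃ + l),
    x + (m - f 1 - x) + (m - f 3 - x) - (b₁ + b₂ + 2 * b₃ + l),
    x + (m - f 1 - x) + (m - f 2 - x) - (b₁ + b₂ + b₃ + l)], ?_, ?_, ?_, ?_, ?_⟩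
  · ext i
    fin_cases i <;> simp [lform, gapVec] <;> linarith
  all_goals simp; linarith

/-- A magic cube with descending nonnegative deviations is determined by its four edge midpoints at
the corner `(0, 0, 0, 0)`, which range over `fibre`. -/
theorem card_layer {m v b₁ b₂ b₃ l : ℕ} (hm : m = v + 2 * b₁ + 2 * b₂ + 2 * b₃ + l) :
    #(layer m (gapVec b₁ b₂ b₃ l)) = #(fibre v b₁ b₂ b₃ l) := by
  have hm' : (m : ℤ) = v + 2 * b₁ + 2 * b₂ + 2 * b₃ + l := by rw [hm]; push_cast; ring
  have compat : ∀ {p} {a : (Fin 4 → Fin 3) → ℕ}, (∀ g, (a g : ℤ) = m + ent p g) → lform p = gapVec b₁ b₂ b₃ l →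
      Compat v b₁ b₂ b₃ l p ![a ![1, 0, 0, 0], a ![0, 1, 0, 0], a ![0, 0, 1, 0], a ![0, 0, 0, 1]] := by
    intro p a ha hL
    obtain ⟨e0, e1, e2, e3⟩ := ent_edge p
    refine ⟨hL, ?_, ?_, ?_, ?_⟩ <;> simp only [Matrix.cons_val, ha, e0, e1, e2, e3, ← hm'] <;> rfl
  refine card_bij (fun a _ => ![a ![1, 0, 0, 0], a ![0, 1, 0, 0], a ![0, 0, 1, 0], a ![0, 0, 0, 1]])
    ?_ ?_ ?_
  · intro a ha
    rw [layer, mem_filter, mem_cubes] at ha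
    obtain ⟨p, hp, hL⟩ := cube_eq_ent ha.1
    refine mem_fibre_of_nonneg (compat hp (hL ▸ ha.2)) fun g => ?_
    rw [← hm', ← hp]
    positivity
  · intro a ha a' ha' e
    rw [layer, mem_filter, mem_cubes] at ha ha'
    obtain ⟨p, hp, hL⟩ := cube_eq_ent ha.1
    obtain ⟨p', hp', hL'⟩ := cube_eq_ent ha'.1
    have c := compat hp (hL ▸ ha.2)
    have c' := compat hp' (hL' ▸ ha'.2)
    rw [e] at c
    have := c.eq c'
    subst this
    ext g
    have := (hp g).trans (hp' g).symm
    exact_mod_cast this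
  · intro f hf
    obtain ⟨p, c⟩ := exists_compat hf
    have hn := nonneg_of_mem_fibre c hf
    rw [← hm'] at hn
    have ha : ∀ g, (((m + ent p g).toNat : ℕ) : ℤ) = m + ent p g := fun g => Int.toNat_of_nonneg (hn g)
    refine ⟨fun g => (m + ent p g).toNat, ?_, ?_⟩
    · rw [layer, mem_filter, mem_cubes, magic_iff]
      simp only [ha, add_sub_cancel_left]
      refine ⟨⟨ent_line p, ent_diag p⟩, ?_⟩
      rw [← c.hL]
      ext k
      rw [deflect, ha, ent_axis]
      ring
    · have c' := compat ha c.hL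
      ext i
      have h0 := c.f0.trans c'.f0.symm
      have h1 := c.f1.trans c'.f1.symm
      have h2 := c.f2.trans c'.f2.symm
      have h3 := c.f3.trans c'.f3.symm
      fin_cases i
      · exact_mod_cast h0.symm
      · exact_mod_cast h1.symm
      · exact_mod_cast h2.symm
      · exact_mod_cast h3.symm

/-! ### Symmetries -/

theorem Magic.perm {n : ℕ} {a : (Fin 4 → Fin 3) → ℕ} (h : Magic n a) (σ : Equiv.Perm (Fin 4)) :
    Magic n fun g => a (g ∘ σ) := by
  refine ⟨fun j g => ?_, fun ε => h.2 (ε ∘ σ)⟩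
  simp only [Function.update_comp_equiv]
  exact h.1 _ _

/-- The reflection reversing the coordinates selected by `s`. -/
def turn (s : Fin 4 → Bool) (g : Fin 4 → Fin 3) : Fin 4 → Fin 3 := fun i => if s i then (g i).rev else g i

theorem turn_turn (s : Fin 4 → Bool) (g : Fin 4 → Fin 3) : turn s (turn s g) = g := by
  ext i
  unfold turn
  split_ifs <;> simp

theorem turn_update (s : Fin 4 → Bool) (g : Fin 4 → Fin 3) (j : Fin 4) (t : Fin 3) :
    turn s (Function.update g j t) = Function.update (turn s g) j (if s j then t.rev else t) := by
  ext i
  by_cases h : i = j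
  · subst h; simp [turn]
  · simp [turn, h]

theorem sum_rev (F : Fin 3 → ℤ) : ∑ t : Fin 3, F t.rev = ∑ t, F t := Equiv.sum_comp Fin.revPerm F

theorem Magic.turn {n : ℕ} {a : (Fin 4 → Fin 3) → ℕ} (h : Magic n a) (s : Fin 4 → Bool) :
    Magic n fun g => a (turn s g) := by
  refine ⟨fun j g => ?_, fun ε => ?_⟩
  · simp only [turn_update]
    rw [← h.1 j (MagicCube.turn s g)]
    cases s j
    · rfl
    · exact sum_rev fun t => (a (Function.update (MagicCube.turn s g) j t) : ℤ)
  · rw [← h.2 fun i => ε i ^^ s i]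
    refine sum_congr rfl fun t _ => ?_
    refine congrArg (fun g => (a g : ℤ)) (funext fun i => ?_)
    unfold MagicCube.turn
    by_cases h1 : ε i <;> by_cases h2 : s i <;> simp [h1, h2]

theorem magic_centre {m : ℕ} {a : (Fin 4 → Fin 3) → ℕ} (h : Magic (3 * m) a) :
    (a fun _ => 1 : ℤ) = m := by
  rw [magic_iff] at h
  have := centre_zero h.1 h.2
  have e : (fun _ => 1 : Fin 4 → Fin 3) = ![1, 1, 1, 1] := by ext i; fin_cases i <;> rfl
  rw [e]
  linarith

theorem magic_axis {m : ℕ} {a : (Fin 4 → Fin 3) → ℕ} (h : Magic (3 * m) a) (k : Fin 4) :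
    (a (Function.update (fun _ => 1) k 0) : ℤ) + a (Function.update (fun _ => 1) k 2) = 2 * m := by
  have h1 := h.1 k fun _ => 1
  have h2 := magic_centre h
  rw [Fin.sum_univ_three, Function.update_eq_self_iff.2 rfl] at h1
  push_cast at h1
  linarith

theorem deflect_turn {m : ℕ} {a : (Fin 4 → Fin 3) → ℕ} (h : Magic (3 * m) a) (s : Fin 4 → Bool) :
    deflect m (fun g => a (turn s g)) = fun k => if s k then -deflect m a k else deflect m a k := by
  ext k
  have h1 := magic_axis h k
  have e : turn s (fun _ => 1) = fun _ => 1 := by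
    ext i; unfold turn; split_ifs <;> rfl
  simp only [deflect, turn_update, e]
  cases s k
  · rfl
  · simp only [if_true, show (0 : Fin 3).rev = 2 from rfl]
    linarith

theorem deflect_perm (m : ℕ) (a : (Fin 4 → Fin 3) → ℕ) (σ : Equiv.Perm (Fin 4)) :
    deflect m (fun g => a (g ∘ σ)) = deflect m a ∘ σ.symm := by
  ext k
  simp only [deflect, Function.update_comp_equiv, Function.comp]
  rfl

theorem card_layer_perm (m : ℕ) (L : Fin 4 → ℤ) (σ : Equiv.Perm (Fin 4)) :
    #(layer m (L ∘ σ)) = #(layer m L) := by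
  refine card_bij' (fun a _ => fun g => a (g ∘ σ)) (fun a _ => fun g => a (g ∘ σ.symm)) ?_ ?_ ?_ ?_
  · intro a ha
    rw [layer, mem_filter, mem_cubes] at ha ⊢
    refine ⟨ha.1.perm σ, ?_⟩
    rw [deflect_perm, ha.2]
    ext; simp
  · intro a ha
    rw [layer, mem_filter, mem_cubes] at ha ⊢
    refine ⟨ha.1.perm σ.symm, ?_⟩
    rw [deflect_perm, ha.2]
    rfl
  · intro a _
    ext g
    simp [Function.comp_assoc]
  · intro a _
    ext g
    simp [Function.comp_assoc]

theorem card_layer_turn (m : ℕ) (L : Fin 4 → ℤ) (s : Fin 4 → Bool) :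
    #(layer m fun k => if s k then -L k else L k) = #(layer m L) := by
  refine card_bij' (fun a _ => fun g => a (turn s g)) (fun a _ => fun g => a (turn s g)) ?_ ?_ ?_ ?_
  · intro a ha
    rw [layer, mem_filter, mem_cubes] at ha ⊢
    refine ⟨ha.1.turn s, ?_⟩
    rw [deflect_turn ha.1, ha.2]
    ext k
    by_cases h : s k <;> simp [h]
  · intro a ha
    rw [layer, mem_filter, mem_cubes] at ha ⊢
    exact ⟨ha.1.turn s, by rw [deflect_turn ha.1, ha.2]⟩
  · intro a _
    simp only [turn_turn]
  · intro a _
    simp only [turn_turn]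

theorem card_layer_abs (m : ℕ) (L : Fin 4 → ℤ) : #(layer m fun k => |L k|) = #(layer m L) := by
  rw [← card_layer_turn m L fun k => decide (L k < 0)]
  congr 2
  ext k
  by_cases h : L k < 0
  · simp [h, abs_of_neg h]
  · simp [h, abs_of_nonneg (not_lt.1 h)]

theorem card_cubes (m : ℕ) :
    #(cubes m) = ∑ L ∈ Fintype.piFinset fun _ => Icc (-m : ℤ) m, #(layer m L) := by
  refine card_eq_sum_card_fiberwise fun a ha => ?_
  rw [mem_coe, mem_cubes] at ha
  rw [mem_coe, Fintype.mem_piFinset]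
  intro k
  rw [mem_Icc, deflect]
  have h1 := magic_axis ha k
  omega

theorem sum_piFinset4 {α : Type*} (S : Finset α) (F : (Fin 4 → α) → ℤ) :
    ∑ L ∈ Fintype.piFinset (fun _ => S), F L = ∑ a ∈ S, ∑ b ∈ S, ∑ c ∈ S, ∑ d ∈ S, F ![a, b, c, d] := by
  have : ∑ L ∈ Fintype.piFinset (fun _ => S), F L =
      ∑ x ∈ S ×ˢ S ×ˢ S ×ˢ S, F ![x.1, x.2.1, x.2.2.1, x.2.2.2] := by
    refine sum_nbij' (fun L => (L 0, L 1, L 2, L 3)) (fun x => ![x.1, x.2.1, x.2.2.1, x.2.2.2]) ?_ ?_ ?_ ?_ ?_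
    · intro L hL
      simp only [Fintype.mem_piFinset] at hL
      simp [hL]
    · intro x hx
      simp only [mem_product] at hx
      rw [Fintype.mem_piFinset]
      intro i
      fin_cases i <;> simp [hx]
    · intro L _
      ext i
      fin_cases i <;> rfl
    · intro x _
      rfl
    · intro L _
      congr 1
      ext i
      fin_cases i <;> rfl
  rw [this]
  simp only [sum_product]

/-- The number of integers with absolute value `x`. -/
def signWt (x : ℕ) : ℤ := if x = 0 then 1 else 2

theorem sum_even (m : ℕ) (f : ℤ → ℤ) (hf : ∀ x, f |x| = f x) :
    ∑ x ∈ Icc (-m : ℤ) m, f x = ∑ x ∈ range (m + 1), signWt x * f x := by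
  induction m with
  | zero => simp [signWt]
  | succ m ih =>
    rw [sum_range_succ, ← ih]
    have e : Icc (-(m + 1 : ℕ) : ℤ) (m + 1 : ℕ) =
        insert (-(m + 1 : ℤ)) (insert (m + 1 : ℤ) (Icc (-m : ℤ) m)) := by
      ext x
      simp only [mem_insert, mem_Icc]
      push_cast
      omega
    rw [e, sum_insert, sum_insert, ← hf (-(m + 1 : ℤ)), abs_neg, abs_of_nonneg (by positivity)]
    · simp [signWt]
      ring
    · simp
    · simp only [mem_insert, mem_Icc]
      omega

theorem card_cubes_nonneg (m : ℕ) : (#(cubes m) : ℤ) =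
    ∑ L ∈ Fintype.piFinset fun _ => range (m + 1),
      (∏ i, signWt (L i)) * #(layer m fun i => (L i : ℤ)) := by
  rw [card_cubes]
  push_cast
  rw [sum_piFinset4, sum_piFinset4]
  have key : ∀ a b c d : ℤ, ∀ a' b' c' d' : ℤ, |a| = |a'| → |b| = |b'| → |c| = |c'| → |d| = |d'| →
      (#(layer m ![a, b, c, d]) : ℤ) = #(layer m ![a', b', c', d']) := by
    intro a b c d a' b' c' d' ha hb hc hd
    rw [← card_layer_abs m ![a, b, c, d], ← card_layer_abs m ![a', b', c', d']]
    congr 3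
    ext i
    fin_cases i <;> assumption
  rw [sum_even _ _ fun x => sum_congr rfl fun b _ => sum_congr rfl fun c _ => sum_congr rfl fun d _ =>
    key _ _ _ _ _ _ _ _ (abs_abs x) rfl rfl rfl]
  refine sum_congr rfl fun a _ => ?_
  rw [sum_even _ _ fun x => sum_congr rfl fun c _ => sum_congr rfl fun d _ =>
    key _ _ _ _ _ _ _ _ rfl (abs_abs x) rfl rfl, mul_sum]
  refine sum_congr rfl fun b _ => ?_
  rw [sum_even _ _ fun x => sum_congr rfl fun d _ =>
    key _ _ _ _ _ _ _ _ rfl rfl (abs_abs x) rfl, mul_sum, mul_sum]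
  refine sum_congr rfl fun c _ => ?_
  rw [sum_even _ _ fun x => key _ _ _ _ _ _ _ _ rfl rfl rfl (abs_abs x), mul_sum, mul_sum, mul_sum]
  refine sum_congr rfl fun d _ => ?_
  have e : (fun i => ((![a, b, c, d] i : ℕ) : ℤ)) = ![(a : ℤ), b, c, d] := by
    ext i; fin_cases i <;> rfl
  rw [e, Fin.prod_univ_four]
  simp only [Matrix.cons_val]
  ring

/-! ### Reduction to descending deviations -/

/-- The number of distinct rearrangements of a descending quadruple, given which consecutive
entries coincide. -/
def mult : Bool → Bool → Bool → ℤ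
  | false, false, false => 24
  | true, false, false => 12
  | false, true, false => 12
  | false, false, true => 12
  | true, true, false => 4
  | false, true, true => 4
  | true, false, true => 6
  | true, true, true => 1

/-- A representative of the descending quadruples whose consecutive entries differ exactly where the
corresponding bit is `true`. -/
def pattern (x y z : Bool) : Fin 4 → ℕ :=
  ![x.toNat + y.toNat + z.toNat, y.toNat + z.toNat, z.toNat, 0]

/-- Orbit–stabiliser for the rearrangements of a quadruple. -/
theorem mult_mul_stab : ∀ x y z : Bool, mult x y z * #{σ : Equiv.Perm (Fin 4) |
    ∀ i, pattern (!x) (!y) (!z) (σ i) = pattern (!x) (!y) (!z) i} = 24 := by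
  decide +kernel

/-- `L` is weakly descending. -/
def Desc (L : Fin 4 → ℕ) : Prop := L 1 ≤ L 0 ∧ L 2 ≤ L 1 ∧ L 3 ≤ L 2

instance (L : Fin 4 → ℕ) : Decidable (Desc L) := by unfold Desc; infer_instance

/-- The number of rearrangements of `L` if `L` is descending, and zero otherwise; summing a symmetric
function with this weight is summing it over all quadruples. -/
def permWt (L : Fin 4 → ℕ) : ℤ :=
  if Desc L then mult (L 0 = L 1) (L 1 = L 2) (L 2 = L 3) else 0

theorem desc_iff (L : Fin 4 → ℕ) : Desc L ↔ Monotone fun i => OrderDual.toDual (L i) := by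
  constructor
  · rintro ⟨h1, h2, h3⟩ i j hij
    rw [OrderDual.toDual_le_toDual]
    fin_cases i <;> fin_cases j <;> simp at hij ⊢ <;> omega
  · intro h
    exact ⟨h (by decide), h (by decide), h (by decide)⟩

theorem sum_permWt_desc {L : Fin 4 → ℕ} (h : Desc L) :
    ∑ σ : Equiv.Perm (Fin 4), permWt (L ∘ σ) = 24 := by
  have h1 : ∀ σ : Equiv.Perm (Fin 4), Desc (L ∘ σ) ↔ ∀ i, L (σ i) = L i := by
    intro σ
    constructor
    · intro hσ i
      have e := Tuple.unique_monotone (f := fun i => OrderDual.toDual (L i)) (σ := σ) (τ := 1)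
        ((desc_iff _).1 hσ) ((desc_iff _).1 h)
      exact congrFun e i
    · intro e
      rwa [show L ∘ σ = L from funext e]
  have h2 : ∀ σ : Equiv.Perm (Fin 4), permWt (L ∘ σ) =
      mult (L 0 = L 1) (L 1 = L 2) (L 2 = L 3) * if ∀ i, L (σ i) = L i then 1 else 0 := by
    intro σ
    unfold permWt
    rw [if_congr (h1 σ) rfl rfl]
    split_ifs with e
    · simp only [Function.comp, e, mul_one]
    · simp
  simp only [h2]
  obtain ⟨x, hx⟩ : ∃ x : Bool, x = decide (L 0 = L 1) := ⟨_, rfl⟩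
  obtain ⟨y, hy⟩ : ∃ y : Bool, y = decide (L 1 = L 2) := ⟨_, rfl⟩
  obtain ⟨z, hz⟩ : ∃ z : Bool, z = decide (L 2 = L 3) := ⟨_, rfl⟩
  have h3 : ∀ i j, L i = L j ↔ pattern (!x) (!y) (!z) i = pattern (!x) (!y) (!z) j := by
    obtain ⟨g1, g2, g3⟩ := h
    clear h1 h2
    cases x <;> cases y <;> cases z <;> simp at hx hy hz <;>
      intro i j <;> fin_cases i <;> fin_cases j <;> simp [pattern] <;> omega
  rw [← mul_sum, ← hx, ← hy, ← hz, ← mult_mul_stab x y z, sum_boole]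
  simp only [h3]

theorem sum_permWt (L : Fin 4 → ℕ) : ∑ σ : Equiv.Perm (Fin 4), permWt (L ∘ σ) = 24 := by
  have h := (desc_iff (L ∘ Tuple.sort fun i => OrderDual.toDual (L i))).2 (Tuple.monotone_sort _)
  rw [← sum_permWt_desc h]
  exact (Equiv.sum_comp (Equiv.mulLeft (Tuple.sort fun i => OrderDual.toDual (L i)))
    fun σ => permWt (L ∘ σ)).symm

theorem sum_symmetric (m : ℕ) (F : (Fin 4 → ℕ) → ℤ) (hF : ∀ L (σ : Equiv.Perm (Fin 4)), F (L ∘ σ) = F L) :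
    ∑ L ∈ Fintype.piFinset fun _ => range (m + 1), F L =
    ∑ L ∈ Fintype.piFinset fun _ => range (m + 1), permWt L * F L := by
  refine mul_left_cancel₀ (by norm_num : (24 : ℤ) ≠ 0) ?_
  have h1 : ∀ σ : Equiv.Perm (Fin 4), ∑ L ∈ Fintype.piFinset fun _ => range (m + 1), permWt (L ∘ σ) * F L =
      ∑ L ∈ Fintype.piFinset fun _ => range (m + 1), permWt L * F L := by
    intro σ
    refine sum_nbij' (fun L => L ∘ σ) (fun L => L ∘ σ.symm) ?_ ?_ ?_ ?_ ?_
    · intro L hL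
      rw [Fintype.mem_piFinset] at hL ⊢
      exact fun i => hL _
    · intro L hL
      rw [Fintype.mem_piFinset] at hL ⊢
      exact fun i => hL _
    · intro L _
      ext; simp
    · intro L _
      ext; simp
    · intro L _
      rw [hF]
  calc 24 * ∑ L ∈ Fintype.piFinset fun _ => range (m + 1), F L
      = ∑ L ∈ Fintype.piFinset fun _ => range (m + 1), ∑ σ : Equiv.Perm (Fin 4), permWt (L ∘ σ) * F L := by
        rw [mul_sum]
        refine sum_congr rfl fun L _ => ?_
        rw [← sum_mul, sum_permWt]
    _ = ∑ σ : Equiv.Perm (Fin 4), ∑ L ∈ Fintype.piFinset fun _ => range (m + 1), permWt L * F L := by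
        rw [sum_comm]
        exact sum_congr rfl fun σ _ => h1 σ
    _ = _ := by
        rw [sum_const, card_univ, Fintype.card_perm, Fintype.card_fin]
        simp [Nat.factorial]

theorem card_cubes_desc (m : ℕ) : (#(cubes m) : ℤ) =
    ∑ L ∈ Fintype.piFinset fun _ => range (m + 1),
      permWt L * ((∏ i, signWt (L i)) * #(layer m fun i => (L i : ℤ))) := by
  rw [card_cubes_nonneg, sum_symmetric]
  intro L σ
  rw [show (fun i => ((L ∘ σ) i : ℤ)) = (fun i => (L i : ℤ)) ∘ σ from rfl, card_layer_perm]
  congr 1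
  exact Equiv.prod_comp σ fun i => signWt (L i)

/-- The four deviations of a magic cube have the same parity. -/
theorem layer_parity {m : ℕ} {L : Fin 4 → ℤ} (h : #(layer m L) ≠ 0) :
    (L 0 - L 1) % 2 = 0 ∧ (L 1 - L 2) % 2 = 0 ∧ (L 2 - L 3) % 2 = 0 := by
  obtain ⟨a, ha⟩ := card_pos.1 (Nat.pos_of_ne_zero h)
  rw [layer, mem_filter, mem_cubes] at ha
  obtain ⟨p, -, hp⟩ := cube_eq_ent ha.1
  rw [← ha.2, hp]
  simp only [lform, Matrix.cons_val]
  omega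

/-- `gapVec` with natural number entries. -/
def gapNat (b₁ b₂ b₃ l : ℕ) : Fin 4 → ℕ :=
  ![2 * b₁ + 2 * b₂ + 2 * b₃ + l, 2 * b₂ + 2 * b₃ + l, 2 * b₃ + l, l]

theorem weight_eq (b₁ b₂ b₃ l : ℕ) : weight b₁ b₂ b₃ l =
    permWt (gapNat b₁ b₂ b₃ l) * ∏ i, signWt (gapNat b₁ b₂ b₃ l i) := by
  have hd : Desc (gapNat b₁ b₂ b₃ l) := by
    refine ⟨?_, ?_, ?_⟩ <;> simp [gapNat]
  rw [permWt, if_pos hd, Fin.prod_univ_four]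
  simp only [gapNat, Matrix.cons_val]
  have e1 : (2 * b₁ + 2 * b₂ + 2 * b₃ + l = 2 * b₂ + 2 * b₃ + l) ↔ b₁ = 0 := by omega
  have e2 : (2 * b₂ + 2 * b₃ + l = 2 * b₃ + l) ↔ b₂ = 0 := by omega
  have e3 : (2 * b₃ + l = l) ↔ b₃ = 0 := by omega
  simp only [e1, e2, e3, signWt, weight, strata, List.map_cons, List.map_nil, List.sum_cons, List.sum_nil]
  have f1 : (2 * b₁ + 2 * b₂ + 2 * b₃ + l = 0) ↔ b₁ = 0 ∧ b₂ = 0 ∧ b₃ = 0 ∧ l = 0 := by omega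
  have f2 : (2 * b₂ + 2 * b₃ + l = 0) ↔ b₂ = 0 ∧ b₃ = 0 ∧ l = 0 := by omega
  have f3 : (2 * b₃ + l = 0) ↔ b₃ = 0 ∧ l = 0 := by omega
  simp only [f1, f2, f3]
  by_cases h1 : b₁ = 0 <;> by_cases h2 : b₂ = 0 <;> by_cases h3 : b₃ = 0 <;> by_cases h4 : l = 0 <;>
    simp [h1, h2, h3, h4, mult]

theorem card_cubes_eq (m : ℕ) : (#(cubes m) : ℤ) =
    ∑ v ∈ range (m + 1), ∑ b₁ ∈ range (m + 1), ∑ b₂ ∈ range (m + 1),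
      ∑ b₃ ∈ range (m + 1), ∑ l ∈ range (m + 1), if v + 2 * b₁ + 2 * b₂ + 2 * b₃ + l = m then
        weight b₁ b₂ b₃ l * #(fibre v b₁ b₂ b₃ l) else 0 := by
  have hR : ∑ v ∈ range (m + 1), ∑ b₁ ∈ range (m + 1), ∑ b₂ ∈ range (m + 1),
      ∑ b₃ ∈ range (m + 1), ∑ l ∈ range (m + 1), (if v + 2 * b₁ + 2 * b₂ + 2 * b₃ + l = m then
        weight b₁ b₂ b₃ l * #(fibre v b₁ b₂ b₃ l) else 0) =
      ∑ x ∈ (range (m + 1) ×ˢ range (m + 1) ×ˢ range (m + 1) ×ˢ range (m + 1) ×ˢ range (m + 1)) with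
        x.1 + 2 * x.2.1 + 2 * x.2.2.1 + 2 * x.2.2.2.1 + x.2.2.2.2 = m,
        weight x.2.1 x.2.2.1 x.2.2.2.1 x.2.2.2.2 *
          #(fibre x.1 x.2.1 x.2.2.1 x.2.2.2.1 x.2.2.2.2) := by
    rw [sum_filter]
    simp only [sum_product]
  rw [hR, card_cubes_desc]
  have hL : ∀ L ∈ Fintype.piFinset (fun _ : Fin 4 => range (m + 1)),
      permWt L * ((∏ i, signWt (L i)) * (#(layer m fun i => (L i : ℤ)) : ℤ)) ≠ 0 →
      Desc L ∧ (L 0 - L 1) % 2 = 0 ∧ (L 1 - L 2) % 2 = 0 ∧ (L 2 - L 3) % 2 = 0 := by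
    intro L _ h
    have hd : Desc L := by
      by_contra hd
      simp [permWt, hd] at h
    have hp := layer_parity (m := m) (L := fun i => (L i : ℤ)) fun h0 => by simp [h0] at h
    obtain ⟨h1, h2, h3⟩ := id hd
    refine ⟨hd, ?_⟩
    omega
  rw [← sum_filter_of_ne hL]
  symm
  refine sum_nbij' (fun x => gapNat x.2.1 x.2.2.1 x.2.2.2.1 x.2.2.2.2)
    (fun L => (m - L 0, (L 0 - L 1) / 2, (L 1 - L 2) / 2, (L 2 - L 3) / 2, L 3)) ?_ ?_ ?_ ?_ ?_
  · rintro ⟨v, b₁, b₂, b₃, l⟩ hx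
    simp only [mem_filter, mem_product, mem_range] at hx
    rw [mem_filter, Fintype.mem_piFinset]
    refine ⟨fun i => ?_, ⟨?_, ?_, ?_⟩, ?_, ?_, ?_⟩
    · rw [mem_range]
      fin_cases i <;> simp [gapNat] <;> omega
    all_goals simp only [gapNat, Matrix.cons_val]; omega
  · intro L hL
    rw [mem_filter, Fintype.mem_piFinset] at hL
    obtain ⟨hr, ⟨h1, h2, h3⟩, h4, h5, h6⟩ := hL
    have := mem_range.1 (hr 0)
    simp only [mem_filter, mem_product, mem_range]
    omega
  · rintro ⟨v, b₁, b₂, b₃, l⟩ hx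
    simp only [mem_filter, mem_product, mem_range] at hx
    simp only [gapNat, Matrix.cons_val, Prod.mk.injEq]
    exact ⟨by omega, by omega, by omega, by omega, trivial⟩
  · intro L hL
    rw [mem_filter, Fintype.mem_piFinset] at hL
    obtain ⟨hr, ⟨h1, h2, h3⟩, h4, h5, h6⟩ := hL
    ext i
    fin_cases i <;> simp [gapNat] <;> omega
  · rintro ⟨v, b₁, b₂, b₃, l⟩ hx
    simp only [mem_filter, mem_product, mem_range] at hx
    have e : (fun i => (gapNat b₁ b₂ b₃ l i : ℤ)) = gapVec b₁ b₂ b₃ l := by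
      ext i
      fin_cases i <;> simp [gapNat, gapVec]
    simp only [e, card_layer hx.2.symm, weight_eq, mul_assoc]

/-! ### Passage to all magic sums -/

/-- Reversing a diagonal does not change its sum, so the normalisation `ε 0 = false` is harmless. -/
theorem magic_iff_nat {n : ℕ} {a : (Fin 4 → Fin 3) → ℕ} : Magic n a ↔
    (∀ j : Fin 4, ∀ g : Fin 4 → Fin 3, ∑ t : Fin 3, a (Function.update g j t) = n) ∧
    (∀ ε : Fin 4 → Bool, ε 0 = false →
      ∑ t : Fin 3, a (fun j => if ε j then t.rev else t) = n) := by
  refine and_congr ?_ ⟨fun h ε _ => ?_, fun h ε => ?_⟩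
  · simp only [LineSum]
    exact forall_congr' fun j => forall_congr' fun g => by norm_cast
  · have h1 : (∑ t : Fin 3, (a fun j => if ε j then t.rev else t : ℕ) : ℤ) = n := h ε
    exact_mod_cast h1
  · cases hε : ε 0
    · have h1 := h ε hε
      beta_reduce
      exact_mod_cast h1
    · have h1 := h (fun j => !ε j) (by simp [hε])
      have h2 : (∑ t : Fin 3, (a fun j => if !ε j then t.rev else t) : ℤ) = n := by
        exact_mod_cast h1
      rw [← h2, ← sum_rev]
      refine sum_congr rfl fun t _ => ?_
      congr 2
      ext j
      cases ε j <;> simp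

theorem magicCube3333_mul_three (m : ℕ) : magicCube3333 (3 * m) = #(cubes m) := by
  rw [magicCube3333]
  exact Nat.subtype_card _ fun a => by rw [mem_cubes, magic_iff_nat]

/-- Three times the centre of a magic cube is its magic sum. -/
theorem magicCube3333_of_not_dvd {n : ℕ} (h : ¬ 3 ∣ n) : magicCube3333 n = 0 := by
  rw [magicCube3333, Nat.card_eq_zero]
  refine Or.inl ⟨fun ⟨a, ha⟩ => h ?_⟩
  obtain ⟨h1, h2⟩ := magic_iff_nat.2 ha
  have hc := centre_zero (A := fun g => 3 * (a g : ℤ) - n)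
    (fun j g => by
      have := h1 j g
      simp only [sum_sub_distrib, ← mul_sum, this]
      simp)
    (fun ε => by
      have := h2 ε
      simp only [sum_sub_distrib, ← mul_sum, this]
      simp)
  exact ⟨a ![1, 1, 1, 1], by have := sub_eq_zero.1 hc; omega⟩

theorem series_eq_cubes : series = C 96 * mk fun m => (#(cubes m) : ℤ) := by
  ext m
  rw [coeff_C_mul, coeff_mk, coeff_series, card_cubes_eq]

/-- The claimed identity in the variable recording `m`, where the magic sum is `3 * m`. -/
theorem cubes_eq : (X + 1) ^ 4 * (X ^ 4 + X ^ 3 + X ^ 2 + X + 1) * (1 - X) ^ 9 *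
    (X ^ 2 + X + 1) * (PowerSeries.mk fun m => (#(cubes m) : ℤ)) =
      numCoeffs.foldr (fun c a => C c + X * a) (0 : PowerSeries ℤ) := by
  have h96 : (C 96 : PowerSeries ℤ) ≠ 0 := by
    rw [Ne, map_eq_zero_iff _ C_injective]
    norm_num
  refine mul_left_cancel₀ h96 ?_
  rw [← series_eq, series_eq_cubes]
  ring

theorem expand_cubes : expand 3 three_ne_zero (mk fun m => (#(cubes m) : ℤ)) =
    mk fun n => (magicCube3333 n : ℤ) := by
  ext n
  rw [coeff_mk]
  by_cases h : 3 ∣ n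
  · obtain ⟨m, rfl⟩ := h
    rw [coeff_expand_mul, coeff_mk, magicCube3333_mul_three]
  · rw [coeff_expand_of_not_dvd _ _ _ h, magicCube3333_of_not_dvd h, Nat.cast_zero]

end MagicCube

theorem magicCube3333_generating_function :
    ((PowerSeries.X ^ 3 + 1) ^ 4 *
        (PowerSeries.X ^ 12 + PowerSeries.X ^ 9 + PowerSeries.X ^ 6 + PowerSeries.X ^ 3 + 1) *
        (1 - PowerSeries.X ^ 3) ^ 9 * (PowerSeries.X ^ 6 + PowerSeries.X ^ 3 + 1) :
        PowerSeries ℤ) *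
      PowerSeries.mk (fun n => (magicCube3333 n : ℤ)) =
    PowerSeries.X ^ 54 + 150 * PowerSeries.X ^ 51 + 5837 * PowerSeries.X ^ 48 +
      63127 * PowerSeries.X ^ 45 + 331124 * PowerSeries.X ^ 42 +
      1056374 * PowerSeries.X ^ 39 + 2326380 * PowerSeries.X ^ 36 +
      3842273 * PowerSeries.X ^ 33 + 5055138 * PowerSeries.X ^ 30 +
      5512456 * PowerSeries.X ^ 27 + 5055138 * PowerSeries.X ^ 24 +
      3842273 * PowerSeries.X ^ 21 + 2326380 * PowerSeries.X ^ 18 +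
      1056374 * PowerSeries.X ^ 15 + 331124 * PowerSeries.X ^ 12 +
      63127 * PowerSeries.X ^ 9 + 5837 * PowerSeries.X ^ 6 + 150 * PowerSeries.X ^ 3 + 1 := by
  have h := congrArg (expand 3 three_ne_zero) MagicCube.cubes_eq
  simp only [MagicCube.numCoeffs, List.foldr, map_mul, map_add, map_sub, map_pow, map_one, expand_X,
    MagicCube.expand_cubes, expand_C, map_zero] at h
  simp only [map_ofNat] at h
  linear_combination h
end

section
/- Let m(s) denote the number of 4×4 magic squares with magic sum s. Then the generating function ∑_{s≥0} m(s) t^s, as a formal power series with integer coefficients, satisfies (1−t)⁴(1−t²)⁴ · ∑_{s≥0} m(s) t^s = t⁸+4t⁷+18t⁶+36t⁵+50t⁴+36t³+18t²+4t+1 in ℤ⟦t⟧. -/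
/-!
A magic square is a combination `∑ nᵢ eᵢ` of the sixteen unit squares `eᵢ` with natural
coefficients, subject to eight homogeneous linear equations `rels`, and its magic sum is the sum
of its corners. The generating function of the solutions is found by Elliott's (MacMahon's)
elimination, one equation at a time.

Consider generators, each with a value under the current equation. If `g` and `h` have values of
opposite sign, then every combination `n₁ g + n₂ h` is uniquely of the form `k (g + h) + j g`, or
`k (g + h) + j h` with `j ≥ 1` (`rep_split`; some care is needed with coefficients already
required to be positive). This replaces the problem by two others, in each of which `g + h` has a
value closer to zero than one of `g` and `h` had. Once all values have the same sign, generators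
with nonzero value must have coefficient `0` (`rep_filter`), and the next equation is treated.
When no equation is left, the generating function of the remaining generators is a product of
factors `1 / (1 - X ^ d)` and `X ^ d / (1 - X ^ d)` (`leaf_sound`).

The procedure is implemented as the function `solve` on lists of integers, which returns the
numerator of the generating function over a prescribed denominator. `solve_sound` proves that
every returned numerator is correct, whatever choices the function makes, and `solve_cells` runs
it for magic squares by kernel evaluation. Counts take values in `ℝ≥0∞`, so that finiteness need
not be known in advance; it comes out as part of `solve_sound`.
-/

open PowerSeries Finset

/-- The number of 4×4 magic squares with magic sum `s`: 4×4 arrays of nonnegative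
integers all of whose row sums, column sums and two main diagonal sums equal `s`. -/
noncomputable def magic4 (s : ℕ) : ℕ :=
  Nat.card {M : Fin 4 → Fin 4 → ℕ //
    (∀ i, ∑ j, M i j = s) ∧ (∀ j, ∑ i, M i j = s) ∧
    (∑ i, M i i = s) ∧ (∑ i, M i (Fin.rev i) = s)}

namespace Elliott

open scoped ENNReal

/-! ### Counting representations in an abelian group -/

section Rep

variable {V : Type*} [AddCommGroup V]

open Classical in
/-- The number, as an extended nonnegative real, of ways to write `T` as a combination `∑ nᵢ gᵢ`
with natural coefficients `nᵢ`. The list holds the pairs `(bᵢ, gᵢ)`; a flag `bᵢ = true`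
means that `nᵢ ≥ 1` is required. -/
noncomputable def rep : List (Bool × V) → V → ℝ≥0∞
  | [], T => if T = 0 then 1 else 0
  | x :: l, T => ∑' k : ℕ, rep l (T - (k + x.1.toNat) • x.2)

lemma rep_perm {l l' : List (Bool × V)} (h : l.Perm l') (T : V) : rep l T = rep l' T := by
  induction h generalizing T with
  | nil => rfl
  | cons x _ ih => simp only [rep, ih]
  | swap x y l =>
    simp only [rep]
    rw [ENNReal.tsum_comm]
    simp only [sub_right_comm]
  | trans _ _ ih₁ ih₂ => rw [ih₁, ih₂]

/-- A double sum over `ℕ × ℕ`, cut into the parts `k₂ ≤ k₁` and `k₁ < k₂`. -/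
lemma tsum_cut (u : ℕ → ℕ → ℝ≥0∞) :
    ∑' k₁, ∑' k₂, u k₁ k₂ =
      (∑' k, ∑' j, u (k + j) k) + ∑' k, ∑' j, u k (k + j + 1) := by
  let e : (ℕ × ℕ) ⊕ (ℕ × ℕ) ≃ ℕ × ℕ :=
    { toFun := Sum.elim (fun x => (x.1 + x.2, x.1)) (fun x => (x.1, x.1 + x.2 + 1))
      invFun := fun x => if x.2 ≤ x.1 then Sum.inl (x.2, x.1 - x.2)
        else Sum.inr (x.1, x.2 - x.1 - 1)
      left_inv := by
        rintro (⟨k, j⟩ | ⟨k, j⟩)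
        · simp
        · have h : ¬ k + j + 1 ≤ k := by omega
          simp only [Sum.elim_inr, h, if_false]
          congr 2
          omega
      right_inv := by
        rintro ⟨k, j⟩
        by_cases h : j ≤ k
        · simp [h]
        · simp only [h, if_false, Sum.elim_inr]
          congr 1
          omega }
  calc ∑' k₁, ∑' k₂, u k₁ k₂ = ∑' x : ℕ × ℕ, u x.1 x.2 := (ENNReal.tsum_prod (f := u)).symm
    _ = ∑' y, u (e y).1 (e y).2 := (e.tsum_eq fun x : ℕ × ℕ => u x.1 x.2).symm
    _ = _ := by
      rw [ENNReal.summable.tsum_sum ENNReal.summable, ← ENNReal.tsum_prod, ← ENNReal.tsum_prod]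
      rfl

/-- Elliott's reduction. In `n₁ g + n₂ h`, either `n₁ - n₂` is at least the lower bound imposed
by `b`, and `n₁ g + n₂ h = n₂ (g + h) + (n₁ - n₂) g`, or
`n₁ g + n₂ h = n₁ (g + h) + (n₂ - n₁) h`; the flags on the right make the two cases disjoint. -/
lemma rep_split (b c : Bool) (g h : V) (l : List (Bool × V)) (T : V) :
    rep ((b, g) :: (c, h) :: l) T =
      rep ((c, g + h) :: (b, g) :: l) T + rep ((b, g + h) :: (!b, h) :: l) T := by
  simp only [rep]
  have key : ∀ x y x' y' : ℕ, ∀ v w v' w' : V, x • v + y • w = x' • v' + y' • w' →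
      rep l (T - x • v - y • w) = rep l (T - x' • v' - y' • w') := by
    intro x y x' y' v w v' w' h
    rw [sub_sub, sub_sub, h]
  cases c
  · rw [tsum_cut]
    congr 1
    · refine tsum_congr fun k => tsum_congr fun j => key _ _ _ _ _ _ _ _ ?_
      simp only [Bool.toNat_false]
      module
    · refine tsum_congr fun k => tsum_congr fun j => key _ _ _ _ _ _ _ _ ?_
      cases b <;> simp <;> module
  · rw [ENNReal.tsum_comm, tsum_cut, add_comm]
    congr 1
    · refine tsum_congr fun k => tsum_congr fun j => key _ _ _ _ _ _ _ _ ?_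
      simp only [Bool.toNat_true]
      module
    · refine tsum_congr fun k => tsum_congr fun j => key _ _ _ _ _ _ _ _ ?_
      cases b <;> simp <;> module

lemma rep_eq_zero (φ : V →+ ℤ) (l : List (Bool × V)) (hl : ∀ x ∈ l, 0 ≤ φ x.2) (T : V)
    (hT : φ T < 0) : rep l T = 0 := by
  induction l generalizing T with
  | nil =>
    have : T ≠ 0 := by rintro rfl; simp at hT
    simp [rep, this]
  | cons x l ih =>
    simp only [rep, ENNReal.tsum_eq_zero]
    intro k
    refine ih (fun y hy => hl y (List.mem_cons_of_mem _ hy)) _ ?_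
    have h0 := hl x List.mem_cons_self
    have : 0 ≤ (k + x.1.toNat) • φ x.2 := nsmul_nonneg h0 _
    rw [map_sub, map_nsmul]
    omega

/-- If the functional `φ` is nonnegative on all generators and vanishes at the target, then only
generators in the kernel of `φ` contribute. -/
lemma rep_filter (φ : V →+ ℤ) (l : List (Bool × V)) (hl : ∀ x ∈ l, 0 ≤ φ x.2) (T : V)
    (hT : φ T = 0) :
    rep l T = if ∃ x ∈ l, x.1 = true ∧ φ x.2 ≠ 0 then 0
      else rep (l.filter fun x => φ x.2 = 0) T := by
  induction l generalizing T with
  | nil => simp [rep]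
  | cons x l ih =>
    have hx := hl x List.mem_cons_self
    have hl' : ∀ y ∈ l, 0 ≤ φ y.2 := fun y hy => hl y (List.mem_cons_of_mem _ hy)
    by_cases h0 : φ x.2 = 0
    · have : ∀ k : ℕ, φ (T - (k + x.1.toNat) • x.2) = 0 := by intro k; simp [hT, h0]
      simp only [rep, ih hl' _ (this _), List.mem_cons, exists_eq_or_imp, h0, ne_eq,
        not_true_eq_false, and_false, false_or, List.filter_cons, decide_true, if_true]
      split_ifs <;> simp
    · have hpos : 0 < φ x.2 := by omega
      have hz : ∀ m : ℕ, 0 < m → rep l (T - m • x.2) = 0 := by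
        intro m hm
        refine rep_eq_zero φ l hl' _ ?_
        rw [map_sub, map_nsmul, hT]
        have : 0 < m • φ x.2 := nsmul_pos hpos hm.ne'
        omega
      obtain ⟨b, g⟩ := x
      cases b
      · rw [rep, tsum_eq_single 0 (fun k hk => hz _ (by simpa using Nat.pos_of_ne_zero hk))]
        have hiff : (∃ y ∈ (false, g) :: l, y.1 = true ∧ φ y.2 ≠ 0) ↔
            ∃ y ∈ l, y.1 = true ∧ φ y.2 ≠ 0 := by simp
        rw [if_congr hiff rfl rfl, List.filter_cons_of_neg (by simpa using h0), ← ih hl' _ hT]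
        simp
      · have : rep ((true, g) :: l) T = 0 := by
          simp only [rep, ENNReal.tsum_eq_zero]
          exact fun k => hz _ (by simp)
        rw [this, if_pos ⟨_, List.mem_cons_self, rfl, h0⟩]

lemma rep_map {W : Type*} [AddCommGroup W] (φ : V →+ W) (hφ : Function.Injective φ)
    (l : List (Bool × V)) (T : V) :
    rep (l.map fun x => (x.1, φ x.2)) (φ T) = rep l T := by
  induction l generalizing T with
  | nil =>
    have h := map_eq_zero_iff φ hφ (x := T)
    by_cases hT : T = 0
    · simp [rep, hT]
    · simp [rep, hT, h]
  | cons x l ih =>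
    simp only [List.map_cons, rep]
    refine tsum_congr fun k => ?_
    rw [← ih, map_sub, map_nsmul]

open Classical in
lemma rep_ofFn {k : ℕ} (g : Fin k → V) (T : V) :
    rep (List.ofFn fun i => (false, g i)) T =
      ∑' n : Fin k → ℕ, if ∑ i, n i • g i = T then 1 else 0 := by
  induction k generalizing T with
  | zero =>
    rw [tsum_eq_single default (fun n hn => absurd (Subsingleton.elim _ _) hn)]
    simp [rep, eq_comm]
  | succ k ih =>
    rw [List.ofFn_succ, rep, ← (Fin.consEquiv fun _ => ℕ).tsum_eq, ENNReal.tsum_prod']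
    refine tsum_congr fun m => ?_
    rw [ih]
    refine tsum_congr fun n => ?_
    simp [Fin.consEquiv, Fin.sum_univ_succ, eq_sub_iff_add_eq, add_comm]

lemma rep_cons_false (g : V) (l : List (Bool × V)) (T : V) :
    rep ((false, g) :: l) T = rep l T + rep ((false, g) :: l) (T - g) := by
  simp only [rep]
  rw [tsum_eq_zero_add' ENNReal.summable]
  congr 1
  · simp
  · refine tsum_congr fun k => ?_
    congr 1
    simp only [Bool.toNat_false]
    module

lemma rep_cons_true (g : V) (l : List (Bool × V)) (T : V) :
    rep ((true, g) :: l) T = rep ((false, g) :: l) (T - g) := by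
  simp only [rep]
  refine tsum_congr fun k => ?_
  congr 1
  simp only [Bool.toNat_false, Bool.toNat_true]
  module

end Rep

/-! ### Coefficient lists -/

/-- The polynomial with coefficient list `l`, constant term first. -/
noncomputable def ev : List ℤ → Polynomial ℤ
  | [] => 0
  | a :: l => Polynomial.C a + Polynomial.X * ev l

/-- Sum of coefficient lists, the shorter one being padded with zeros. -/
def addVec : List ℤ → List ℤ → List ℤ
  | [], w => w
  | v, [] => v
  | a :: v, b :: w => (a + b) :: addVec v w

lemma ev_addVec (v w : List ℤ) : ev (addVec v w) = ev v + ev w := by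
  induction v generalizing w with
  | nil => simp [addVec, ev]
  | cons a v ih =>
    cases w with
    | nil => simp [addVec, ev]
    | cons b w =>
      simp only [addVec, ev, ih, map_add]
      ring

lemma ev_shift (d : ℕ) (p : List ℤ) :
    ev (List.replicate d 0 ++ p) = Polynomial.X ^ d * ev p := by
  induction d with
  | zero => simp
  | succ d ih =>
    simp only [List.replicate_succ, List.cons_append, ev, ih, map_zero]
    ring

/-- Multiplication of a coefficient list by `1 - X ^ d`. -/
def mulOneSub (d : ℕ) (p : List ℤ) : List ℤ :=
  addVec p (List.replicate d 0 ++ p.map fun a => -a)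

lemma ev_mulOneSub (d : ℕ) (p : List ℤ) :
    ev (mulOneSub d p) = (1 - Polynomial.X ^ d) * ev p := by
  have hneg : ev (p.map fun a => -a) = -ev p := by
    induction p with
    | nil => simp [ev]
    | cons a p ih =>
      simp only [List.map_cons, ev, ih, map_neg]
      ring
  rw [mulOneSub, ev_addVec, ev_shift, hneg]
  ring

lemma ev_foldr (D : List ℕ) (p : List ℤ) :
    ev (D.foldr mulOneSub p) = (D.map fun d => 1 - Polynomial.X ^ d).prod * ev p := by
  induction D with
  | nil => simp
  | cons d D ih => simp [ev_mulOneSub, ih, mul_assoc]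

/-- First coordinate of a vector, `0` for the empty vector. -/
def headVec : List ℤ → ℤ
  | [] => 0
  | a :: _ => a

lemma coeff_zero_ev (v : List ℤ) : (ev v).coeff 0 = headVec v := by
  cases v <;> simp [ev, headVec]

lemma ev_tail {v : List ℤ} (hv : headVec v = 0) : ev v = Polynomial.X * ev v.tail := by
  cases v with
  | nil => simp [ev]
  | cons a v =>
    obtain rfl : a = 0 := hv
    simp [ev]

lemma ev_eq_zero (v : List ℤ) : ev v = 0 ↔ ∀ a ∈ v, a = 0 := by
  induction v with
  | nil => simp [ev]
  | cons a v ih =>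
    rw [List.forall_mem_cons, ← ih]
    constructor
    · intro h
      obtain rfl : a = 0 := by simpa [coeff_zero_ev, headVec] using congrArg (Polynomial.coeff · 0) h
      simpa [ev] using h
    · rintro ⟨rfl, h⟩
      simp [ev, h]

/-- The `ℓ¹` norm. -/
def normVec : List ℤ → ℕ
  | [] => 0
  | a :: v => a.natAbs + normVec v

/-! ### The elimination procedure -/

/-- A generator of the monoid of solutions: `deg` is its contribution to the magic sum, `vec` the
vector of its values under the remaining linear equations, and `pos` says whether its
coefficient has to be positive. -/
structure Gen where
  deg : ℕ
  pos : Bool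
  vec : List ℤ

/-- All ways to single out one entry of a list, with the remaining entries. -/
def selects {α : Type} : List α → List (α × List α)
  | [] => []
  | a :: l => (a, l) :: (selects l).map fun x => (x.1, a :: x.2)

/-- An entry of `a :: l` at which `key` is minimal. -/
def argmin {α : Type} (key : α → ℕ) : α → List α → α
  | a, [] => a
  | a, b :: l => if key b < key a then argmin key b l else argmin key a l

lemma perm_of_mem_selects {α : Type} {l : List α} {x : α × List α} (hx : x ∈ selects l) :
    l.Perm (x.1 :: x.2) := by
  induction l generalizing x with
  | nil => simp [selects] at hx
  | cons a l ih =>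
    simp only [selects, List.mem_cons, List.mem_map] at hx
    obtain rfl | ⟨y, hy, rfl⟩ := hx
    · exact List.Perm.refl _
    · exact ((ih hy).cons a).trans (List.Perm.swap _ _ _)

lemma argmin_mem {α : Type} (key : α → ℕ) (a : α) (l : List α) : argmin key a l ∈ a :: l := by
  induction l generalizing a with
  | nil => simp [argmin]
  | cons b l ih =>
    simp only [argmin]
    split_ifs
    · exact List.mem_cons_of_mem _ (ih b)
    · have := ih a
      simp only [List.mem_cons] at this ⊢
      tauto

/-- All choices of one entry from each of two lists, with the remaining entries. -/
def candidates (P N : List Gen) : List ((Gen × List Gen) × (Gen × List Gen)) :=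
  (selects P).flatMap fun x => (selects N).map fun y => (x, y)

lemma eq_nil_of_candidates {P N : List Gen} (h : candidates P N = []) : P = [] ∨ N = [] := by
  cases P with
  | nil => exact Or.inl rfl
  | cons a P =>
    cases N with
    | nil => exact Or.inr rfl
    | cons b N => simp [candidates, selects] at h

lemma perm_of_candidates {P N : List Gen} {z : (Gen × List Gen) × (Gen × List Gen)}
    (hz : z ∈ candidates P N) : P.Perm (z.1.1 :: z.1.2) ∧ N.Perm (z.2.1 :: z.2.2) := by
  simp only [candidates, List.mem_flatMap, List.mem_map] at hz
  obtain ⟨x, hx, y, hy, rfl⟩ := hz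
  exact ⟨perm_of_mem_selects hx, perm_of_mem_selects hy⟩

/-- Sum of coefficient lists, provided both computations succeeded. -/
def addOpt : Option (List ℤ) → Option (List ℤ) → Option (List ℤ)
  | some p, some q => some (addVec p q)
  | _, _ => none

/-- The generating function `∏ X ^ (dᵢ or 0) / (1 - X ^ dᵢ)` of generators subject to no
equation, multiplied by the common denominator `∏_{d ∈ D} (1 - X ^ d)`. The computation fails
if a degree is zero or the denominator does not divide the common one. -/
def leaf : List ℕ → List Gen → Option (List ℤ)
  | D, [] => some (D.foldr mulOneSub [1])
  | D, ⟨d, b, v⟩ :: gs =>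
    if d ≠ 0 ∧ v = [] ∧ d ∈ D then
      (leaf (D.erase d) gs).map fun p => if b then List.replicate d 0 ++ p else p
    else none

/-- Elimination of the equation in the first coordinate. As long as there are generators of both
signs, two of opposite sign, chosen so that their sum is small, are split by `rep_split`. When
only one sign is left, the generators with nonzero first coordinate must have coefficient `0`;
they are dropped and `cont` treats the remaining equations. -/
def reduce (cont : List Gen → Option (List ℤ)) : ℕ → List Gen → Option (List ℤ)
  | 0, _ => none
  | fuel + 1, gs =>
    let P := gs.filter fun g => 0 < headVec g.vec
    let N := gs.filter fun g => headVec g.vec < 0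
    let Z := gs.filter fun g => headVec g.vec = 0
    match candidates P N with
    | [] =>
      if (P ++ N).any Gen.pos then some []
      else cont (Z.map fun g => ⟨g.deg, g.pos, g.vec.tail⟩)
    | c :: cs =>
      let r := argmin (fun z => normVec (addVec z.1.1.vec z.2.1.vec)) c cs
      let g := r.1.1
      let h := r.2.1
      let rest := r.1.2 ++ r.2.2 ++ Z
      addOpt
        (reduce cont fuel
          (⟨g.deg + h.deg, h.pos, addVec g.vec h.vec⟩ :: g :: rest))
        (reduce cont fuel
          (⟨g.deg + h.deg, g.pos, addVec g.vec h.vec⟩ :: ⟨h.deg, !g.pos, h.vec⟩ :: rest))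

/-- The generating function, over the common denominator `D`, of the combinations of the given
generators that solve `m` linear equations. -/
def solve (D : List ℕ) (fuel : ℕ) : ℕ → List Gen → Option (List ℤ)
  | 0, gs => leaf D gs
  | m + 1, gs => reduce (solve D fuel m) fuel gs

/-! ### Correctness of the elimination procedure -/

/-- A generator as a flagged element of the group `ℤ × ℤ[X]`. -/
noncomputable def Gen.toV (g : Gen) : Bool × (ℤ × Polynomial ℤ) :=
  (g.pos, ((g.deg : ℤ), ev g.vec))

/-- The number of combinations of the generators that have degree `N` and solve all equations. -/
noncomputable def cnt (gs : List Gen) (N : ℕ) : ℝ≥0∞ := rep (gs.map Gen.toV) ((N : ℤ), 0)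

/-- The coefficient list `p` describes the generating function of `cnt gs` over the common
denominator `∏_{d ∈ D} (1 - X ^ d)`. -/
def Sound (D : List ℕ) (gs : List Gen) (p : List ℤ) : Prop :=
  (∀ N, cnt gs N ≠ ⊤) ∧
    (D.map fun d => (1 - PowerSeries.X ^ d : PowerSeries ℝ)).prod *
      PowerSeries.mk (fun N => (cnt gs N).toReal) =
    Polynomial.aeval (PowerSeries.X : PowerSeries ℝ) (ev p)

lemma Sound.congr {D : List ℕ} {gs gs' : List Gen} {p : List ℤ} (h : Sound D gs' p)
    (hc : ∀ N, cnt gs N = cnt gs' N) : Sound D gs p := by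
  simpa only [Sound, hc] using h

lemma cnt_perm {gs gs' : List Gen} (h : gs.Perm gs') (N : ℕ) : cnt gs N = cnt gs' N :=
  rep_perm (h.map _) _

lemma Sound.add {D : List ℕ} {gs gs₁ gs₂ : List Gen} {p q : List ℤ} (h₁ : Sound D gs₁ p)
    (h₂ : Sound D gs₂ q) (hc : ∀ N, cnt gs N = cnt gs₁ N + cnt gs₂ N) :
    Sound D gs (addVec p q) := by
  refine ⟨fun N => by rw [hc]; exact ENNReal.add_ne_top.2 ⟨h₁.1 N, h₂.1 N⟩, ?_⟩
  rw [ev_addVec, map_add, ← h₁.2, ← h₂.2, ← mul_add]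
  congr 1
  ext N
  simp [hc, ENNReal.toReal_add (h₁.1 N) (h₂.1 N)]

lemma rep_toV_neg (gs : List Gen) {M : ℤ} (hM : M < 0) : rep (gs.map Gen.toV) (M, 0) = 0 := by
  refine rep_eq_zero (AddMonoidHom.fst ℤ (Polynomial ℤ)) _ ?_ _ hM
  intro x hx
  obtain ⟨g, -, rfl⟩ := List.mem_map.1 hx
  exact Int.natCast_nonneg g.deg

lemma rep_toV_sub (gs : List Gen) (N d : ℕ) :
    rep (gs.map Gen.toV) ((N : ℤ) - d, 0) = if d ≤ N then cnt gs (N - d) else 0 := by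
  split_ifs with h
  · rw [cnt, Nat.cast_sub h]
  · exact rep_toV_neg gs (by omega)

lemma cnt_cons_false (gs : List Gen) (d N : ℕ) :
    cnt (⟨d, false, []⟩ :: gs) N =
      cnt gs N + if d ≤ N then cnt (⟨d, false, []⟩ :: gs) (N - d) else 0 := by
  have h := rep_toV_sub (⟨d, false, []⟩ :: gs) N d
  rw [← h, cnt, List.map_cons, Gen.toV, rep_cons_false, cnt]
  simp [ev]

lemma cnt_cons_true (gs : List Gen) (d N : ℕ) :
    cnt (⟨d, true, []⟩ :: gs) N =
      if d ≤ N then cnt (⟨d, false, []⟩ :: gs) (N - d) else 0 := by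
  have h := rep_toV_sub (⟨d, false, []⟩ :: gs) N d
  rw [← h, cnt, List.map_cons, Gen.toV, rep_cons_true]
  simp [ev, Gen.toV]

lemma Sound.cons_false {D : List ℕ} {gs : List Gen} {p : List ℤ} {d : ℕ} (hd : d ≠ 0)
    (hD : d ∈ D) (h : Sound (D.erase d) gs p) : Sound D (⟨d, false, []⟩ :: gs) p := by
  have hfin : ∀ N, cnt (⟨d, false, []⟩ :: gs) N ≠ ⊤ := by
    intro N
    induction N using Nat.strong_induction_on with
    | _ N ih =>
      rw [cnt_cons_false]
      refine ENNReal.add_ne_top.2 ⟨h.1 N, ?_⟩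
      split_ifs
      · exact ih _ (by omega)
      · simp
  refine ⟨hfin, ?_⟩
  rw [← h.2, ← ((List.perm_cons_erase hD).map _).prod_eq.symm, List.map_cons, List.prod_cons,
    mul_comm (1 - _), mul_assoc]
  congr 1
  ext N
  rw [sub_mul, one_mul, map_sub, PowerSeries.coeff_X_pow_mul', PowerSeries.coeff_mk,
    PowerSeries.coeff_mk, cnt_cons_false]
  split_ifs
  · rw [ENNReal.toReal_add (h.1 N) (hfin _), PowerSeries.coeff_mk, add_sub_cancel_right]
  · simp

lemma Sound.cons_true {D : List ℕ} {gs : List Gen} {p : List ℤ} {d : ℕ}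
    (h : Sound D (⟨d, false, []⟩ :: gs) p) :
    Sound D (⟨d, true, []⟩ :: gs) (List.replicate d 0 ++ p) := by
  refine ⟨fun N => ?_, ?_⟩
  · rw [cnt_cons_true]
    split_ifs
    · exact h.1 _
    · simp
  · rw [ev_shift, map_mul, map_pow, Polynomial.aeval_X, ← h.2, mul_left_comm]
    congr 1
    ext N
    rw [PowerSeries.coeff_X_pow_mul', PowerSeries.coeff_mk, cnt_cons_true]
    split_ifs <;> simp

lemma leaf_sound {D : List ℕ} {gs : List Gen} {p : List ℤ} (h : leaf D gs = some p) :
    Sound D gs p := by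
  induction gs generalizing D p with
  | nil =>
    obtain rfl : D.foldr mulOneSub [1] = p := by simpa [leaf] using h
    have hc : ∀ N, cnt [] N = if N = 0 then 1 else 0 := by intro N; simp [cnt, rep]
    refine ⟨fun N => by rw [hc]; split_ifs <;> simp, ?_⟩
    rw [ev_foldr, map_mul, map_list_prod, List.map_map]
    congr 1
    · simp [Function.comp_def]
    · ext N
      simp only [hc, PowerSeries.coeff_mk, ev]
      simp [PowerSeries.coeff_one]
      split_ifs <;> simp
  | cons g gs ih =>
    obtain ⟨d, b, v⟩ := g
    by_cases hif : d ≠ 0 ∧ v = [] ∧ d ∈ D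
    swap
    · rw [leaf, if_neg hif] at h
      simp at h
    rw [leaf, if_pos hif] at h
    obtain ⟨hd, rfl, hD⟩ := hif
    obtain ⟨q, hq, rfl⟩ := Option.map_eq_some_iff.1 h
    have hf := (ih hq).cons_false hd hD
    cases b
    · simpa using hf
    · simpa using hf.cons_true

/-- The value of a generator under the equation in the first coordinate. -/
noncomputable def headHom : ℤ × Polynomial ℤ →+ ℤ :=
  ((Polynomial.lcoeff ℤ 0).toAddMonoidHom).comp (AddMonoidHom.snd ℤ (Polynomial ℤ))

lemma headHom_toV (g : Gen) : headHom g.toV.2 = headVec g.vec := by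
  simp [headHom, Gen.toV, coeff_zero_ev]

/-- If all first coordinates have the same sign `ε`, only generators with vanishing first
coordinate contribute. -/
lemma cnt_filter {gs : List Gen} (ε : ℤ) (hε : ε ≠ 0)
    (hs : ∀ g ∈ gs, 0 ≤ ε * headVec g.vec) (N : ℕ) :
    cnt gs N = if ∃ g ∈ gs, g.pos = true ∧ headVec g.vec ≠ 0 then 0
      else cnt ((gs.filter fun g => headVec g.vec = 0).map
        fun g => ⟨g.deg, g.pos, g.vec.tail⟩) N := by
  have hφ : ∀ g : Gen, (ε • headHom) g.toV.2 = ε * headVec g.vec := by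
    intro g
    rw [AddMonoidHom.smul_apply, headHom_toV, smul_eq_mul]
  have key := rep_filter (ε • headHom) (gs.map Gen.toV) (by
    intro x hx
    obtain ⟨g, hg, rfl⟩ := List.mem_map.1 hx
    rw [hφ]
    exact hs g hg) ((N : ℤ), 0) (by simp [headHom])
  rw [cnt, key]
  refine if_congr ?_ rfl ?_
  · simp only [List.mem_map, exists_exists_and_eq_and, hφ, ne_eq, mul_eq_zero, hε, false_or]
    rfl
  ·
    -- after dropping, every vector starts with `0`, and deleting that entry is division by `X`
    let shift : ℤ × Polynomial ℤ →+ ℤ × Polynomial ℤ :=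
      (AddMonoidHom.id ℤ).prodMap (AddMonoidHom.mulLeft Polynomial.X)
    have hinj : Function.Injective shift := by
      rintro ⟨a, p⟩ ⟨b, q⟩ h
      simpa [shift] using h
    have h0 : (((N : ℤ), 0) : ℤ × Polynomial ℤ) = shift ((N : ℤ), 0) := by simp [shift]
    rw [cnt, ← rep_map shift hinj (List.map Gen.toV (List.map _ _)), ← h0, List.map_map,
      List.map_map, List.filter_map]
    congr 1
    have hf : (gs.filter ((fun x : Bool × (ℤ × Polynomial ℤ) =>
        decide ((ε • headHom) x.2 = 0)) ∘ Gen.toV)) =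
        gs.filter fun g => headVec g.vec = 0 := by
      refine List.filter_congr fun g _ => ?_
      simp only [Function.comp, hφ, mul_eq_zero, hε, false_or]
    rw [hf]
    refine List.map_congr_left fun g hg => ?_
    have hg' : headVec g.vec = 0 := by simpa using (List.mem_filter.1 hg).2
    simp [Gen.toV, shift, ← ev_tail hg']

lemma Sound.of_filter {D : List ℕ} {gs : List Gen} {p : List ℤ} (ε : ℤ) (hε : ε ≠ 0)
    (hs : ∀ g ∈ gs, 0 ≤ ε * headVec g.vec)
    (h : if ∃ g ∈ gs, g.pos = true ∧ headVec g.vec ≠ 0 then p = []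
      else Sound D ((gs.filter fun g => headVec g.vec = 0).map
        fun g => ⟨g.deg, g.pos, g.vec.tail⟩) p) : Sound D gs p := by
  have hc := cnt_filter ε hε hs
  split_ifs at h with hif
  · have h0 : ∀ N, cnt gs N = 0 := fun N => by rw [hc, if_pos hif]
    subst h
    refine ⟨fun N => by simp [h0], ?_⟩
    simp only [h0, ev, map_zero, ENNReal.toReal_zero]
    exact mul_eq_zero_of_right _ (by ext; simp)
  · exact h.congr fun N => by rw [hc, if_neg hif]

lemma cnt_split (g h : Gen) (gs : List Gen) (N : ℕ) :
    cnt (g :: h :: gs) N =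
      cnt (⟨g.deg + h.deg, h.pos, addVec g.vec h.vec⟩ :: g :: gs) N +
        cnt (⟨g.deg + h.deg, g.pos, addVec g.vec h.vec⟩ :: ⟨h.deg, !g.pos, h.vec⟩ :: gs) N := by
  simp only [cnt, List.map_cons, Gen.toV, ev_addVec, Nat.cast_add]
  exact rep_split _ _ _ _ _ _

lemma addOpt_eq_some {o₁ o₂ : Option (List ℤ)} {p : List ℤ} (h : addOpt o₁ o₂ = some p) :
    ∃ p₁ p₂, o₁ = some p₁ ∧ o₂ = some p₂ ∧ addVec p₁ p₂ = p := by
  cases o₁ <;> cases o₂ <;> simp_all [addOpt]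

lemma perm_partition (gs : List Gen) :
    gs.Perm ((gs.filter fun g => 0 < headVec g.vec) ++ (gs.filter fun g => headVec g.vec < 0) ++
      gs.filter fun g => headVec g.vec = 0) := by
  induction gs with
  | nil => simp
  | cons g gs ih =>
    rcases lt_trichotomy (headVec g.vec) 0 with h | h | h
    · simp only [List.filter_cons, h, h.not_gt, h.ne, decide_true, decide_false, if_true]
      simpa using (ih.cons g).trans (by simpa using List.perm_middle.symm)
    · simp only [List.filter_cons, h, lt_irrefl, decide_true, decide_false, if_true]
      simpa using (ih.cons g).trans List.perm_middle.symm
    · simp only [List.filter_cons, h, h.not_gt, h.ne', decide_true, decide_false, if_true]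
      simpa using ih.cons g

lemma reduce_sound {D : List ℕ} {cont : List Gen → Option (List ℤ)}
    (hcont : ∀ gs p, cont gs = some p → Sound D gs p) (fuel : ℕ) (gs : List Gen) (p : List ℤ)
    (h : reduce cont fuel gs = some p) : Sound D gs p := by
  induction fuel generalizing gs p with
  | zero => simp [reduce] at h
  | succ fuel ih =>
    rw [reduce] at h
    dsimp only at h
    split at h
    · rename_i hnil
      have hany : ((gs.filter fun g => 0 < headVec g.vec) ++
          gs.filter fun g => headVec g.vec < 0).any Gen.pos = true ↔
          ∃ g ∈ gs, g.pos = true ∧ headVec g.vec ≠ 0 := by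
        simp only [List.any_eq_true, List.mem_append, List.mem_filter, decide_eq_true_eq]
        refine exists_congr fun g => ?_
        rw [ne_iff_lt_or_gt]
        tauto
      have hif : if ∃ g ∈ gs, g.pos = true ∧ headVec g.vec ≠ 0 then p = []
          else Sound D ((gs.filter fun g => headVec g.vec = 0).map
            fun g => ⟨g.deg, g.pos, g.vec.tail⟩) p := by
        rw [if_congr hany rfl rfl] at h
        split_ifs at h ⊢
        · exact (Option.some.inj h).symm
        · exact hcont _ _ h
      rcases eq_nil_of_candidates hnil with h0 | h0
      · refine Sound.of_filter (-1) (by norm_num) (fun g hg => ?_) hif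
        have := List.filter_eq_nil_iff.1 h0 g hg
        simp only [decide_eq_true_eq] at this
        omega
      · refine Sound.of_filter 1 (by norm_num) (fun g hg => ?_) hif
        have := List.filter_eq_nil_iff.1 h0 g hg
        simp only [decide_eq_true_eq] at this
        omega
    · rename_i c cs hc
      obtain ⟨p₁, p₂, h₁, h₂, rfl⟩ := addOpt_eq_some h
      have hm := argmin_mem (fun z => normVec (addVec z.1.1.vec z.2.1.vec)) c cs
      rw [← hc] at hm
      generalize argmin (fun z => normVec (addVec z.1.1.vec z.2.1.vec)) c cs = r at h₁ h₂ hm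
      obtain ⟨hP, hN⟩ := perm_of_candidates hm
      refine (ih _ _ h₁).add (ih _ _ h₂) fun N => ?_
      rw [← cnt_split]
      refine cnt_perm ((perm_partition gs).trans ?_) N
      refine ((hP.append hN).append_right _).trans ?_
      simp

lemma solve_sound {D : List ℕ} {fuel m : ℕ} {gs : List Gen} {p : List ℤ}
    (h : solve D fuel m gs = some p) : Sound D gs p := by
  induction m generalizing gs p with
  | zero => exact leaf_sound h
  | succ m ih => exact reduce_sound (fun gs p => ih) fuel gs p h

/-! ### Magic squares -/

/-- Equations `n x + n y = n z + n w` between the cells of a square, numbered row by row from `0`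
to `15`. Together with the condition that the four corners sum to `s`, they characterize the
magic squares with magic sum `s`. -/
def rels : List (List (Fin 16) × List (Fin 16)) :=
  [([3, 12], [5, 10]), ([0, 3], [13, 14]), ([1, 13], [6, 10]), ([3, 15], [4, 8]),
    ([4, 7], [9, 10]), ([0, 15], [6, 9]), ([5, 6], [8, 11]), ([2, 14], [5, 9])]

/-- The corner cells. -/
def corners : List (Fin 16) := [0, 3, 12, 15]

/-- The generator for the square with a single `1`, in cell `i`. -/
def cell (i : Fin 16) : Gen :=
  ⟨corners.count i, false, rels.map fun r => (r.1.count i : ℤ) - r.2.count i⟩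

/-- The elimination for magic squares. The common denominator is
`(1 - X) ^ 7 (1 - X ^ 2) ^ 4 (1 - X ^ 3) (1 - X ^ 4)`, and the resulting numerator is that of
the theorem multiplied by the superfluous factors `(1 - X) ^ 3 (1 - X ^ 3) (1 - X ^ 4)`. -/
lemma solve_cells : solve [1, 1, 1, 1, 1, 1, 1, 2, 2, 2, 2, 3, 4] 12 8 (List.ofFn cell) =
    some ([1, 1, 1, 3, 4].foldr mulOneSub [1, 4, 18, 36, 50, 36, 18, 4, 1] ++ [0, 0]) := by
  decide +kernel

lemma sum_count (n : Fin 16 → ℕ) (l : List (Fin 16)) :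
    ∑ i, (n i : ℤ) * (l.count i : ℤ) = (l.map fun i => (n i : ℤ)).sum := by
  induction l with
  | nil => simp
  | cons a l ih =>
    simp only [List.count_cons, Nat.cast_add, mul_add, Finset.sum_add_distrib, ih, List.map_cons,
      List.sum_cons]
    simp [add_comm]

lemma sum_ev {α : Type} (n : Fin 16 → ℕ) (c : Fin 16 → α → ℤ) (R : List α) :
    ∑ i, n i • ev (R.map (c i)) = ev (R.map fun r => ∑ i, (n i : ℤ) * c i r) := by
  induction R with
  | nil => simp [ev]
  | cons r R ih =>
    simp only [List.map_cons, ev, smul_add, Finset.sum_add_distrib, ← ih, map_sum, Finset.mul_sum]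
    congr 1
    · simp
    · simp [mul_left_comm]

lemma sum_cell_eq_iff (n : Fin 16 → ℕ) (s : ℕ) :
    ∑ i, n i • (cell i).toV.2 = ((s : ℤ), 0) ↔
      (corners.map fun i => (n i : ℤ)).sum = s ∧
        ∀ r ∈ rels, (r.1.map fun i => (n i : ℤ)).sum = (r.2.map fun i => (n i : ℤ)).sum := by
  rw [Prod.ext_iff, Prod.fst_sum, Prod.snd_sum]
  refine and_congr ?_ ?_
  · simp only [Gen.toV, cell, Prod.smul_fst]
    simp only [nsmul_eq_mul, sum_count]
  · simp only [Gen.toV, cell, Prod.smul_snd]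
    rw [sum_ev, ev_eq_zero]
    simp only [mul_sub, Finset.sum_sub_distrib, sum_count, List.forall_mem_map, sub_eq_zero]

/-- A magic square, flattened row by row, is a combination of the generators `cell i` that has
degree `s` and solves all equations. -/
lemma magic_iff (M : Fin 4 → Fin 4 → ℕ) (s : ℕ) :
    ((∀ i, ∑ j, M i j = s) ∧ (∀ j, ∑ i, M i j = s) ∧
      (∑ i, M i i = s) ∧ (∑ i, M i (Fin.rev i) = s)) ↔
    ∑ i : Fin 16, M (Fin.divNat (m := 4) (n := 4) i) (Fin.modNat (m := 4) (n := 4) i) •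
      (cell i).toV.2 = ((s : ℤ), 0) := by
  rw [sum_cell_eq_iff fun i : Fin 16 =>
    M (Fin.divNat (m := 4) (n := 4) i) (Fin.modNat (m := 4) (n := 4) i)]
  have r : Fin.rev (0 : Fin 4) = 3 ∧ Fin.rev (1 : Fin 4) = 2 ∧ Fin.rev (2 : Fin 4) = 1 ∧
      Fin.rev (3 : Fin 4) = 0 := by decide
  have d : ∀ i : Fin 4, ∀ j : Fin 4, ∀ k : Fin 16, k = finProdFinEquiv (i, j) →
      M (Fin.divNat (m := 4) (n := 4) k) (Fin.modNat (m := 4) (n := 4) k) = M i j := by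
    rintro i j _ rfl
    have h := finProdFinEquiv.symm_apply_apply (i, j)
    rw [finProdFinEquiv_symm_apply] at h
    exact congrArg (fun x : Fin 4 × Fin 4 => M x.1 x.2) h
  simp only [corners, rels, List.forall_mem_cons, List.map_cons, List.map_nil, List.sum_cons,
    List.sum_nil, d 0 0 0 rfl, d 0 1 1 rfl, d 0 2 2 rfl, d 0 3 3 rfl, d 1 0 4 rfl, d 1 1 5 rfl,
    d 1 2 6 rfl, d 1 3 7 rfl, d 2 0 8 rfl, d 2 1 9 rfl, d 2 2 10 rfl, d 2 3 11 rfl, d 3 0 12 rfl,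
    d 3 1 13 rfl, d 3 2 14 rfl, d 3 3 15 rfl, Fin.forall_fin_succ, Fin.sum_univ_four]
  simp [r]
  omega

lemma cnt_cells (s : ℕ) (hs : cnt (List.ofFn cell) s ≠ ⊤) :
    (cnt (List.ofFn cell) s).toReal = magic4 s := by
  classical
  have h : cnt (List.ofFn cell) s =
      ENat.card {n : Fin 16 → ℕ // ∑ i, n i • (cell i).toV.2 = ((s : ℤ), 0)} := by
    have hl : (List.ofFn cell).map Gen.toV = List.ofFn fun i => (false, (cell i).toV.2) := by
      rw [List.map_ofFn]
      rfl
    rw [cnt, hl, rep_ofFn, ← ENNReal.tsum_one]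
    exact (tsum_subtype {n : Fin 16 → ℕ | ∑ i, n i • (cell i).toV.2 = ((s : ℤ), 0)}
      fun _ => (1 : ℝ≥0∞)).symm
  rw [h] at hs ⊢
  have e : {M : Fin 4 → Fin 4 → ℕ // (∀ i, ∑ j, M i j = s) ∧ (∀ j, ∑ i, M i j = s) ∧
      (∑ i, M i i = s) ∧ (∑ i, M i (Fin.rev i) = s)} ≃
      {n : Fin 16 → ℕ // ∑ i, n i • (cell i).toV.2 = ((s : ℤ), 0)} :=
    ((Equiv.curry (Fin 4) (Fin 4) ℕ).symm.trans
      (finProdFinEquiv.arrowCongr (Equiv.refl ℕ))).subtypeEquiv fun M => magic_iff M s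
  rw [magic4, Nat.card_congr e]
  have : Finite {n : Fin 16 → ℕ // ∑ i, n i • (cell i).toV.2 = ((s : ℤ), 0)} := by
    rw [← ENat.card_lt_top, lt_top_iff_ne_top]
    exact fun ht => hs (by rw [ht, ENat.toENNReal_top])
  rw [ENat.card_eq_coe_natCard]
  simp

end Elliott

theorem magic4_generating_function :
    ((1 - PowerSeries.X) ^ 4 * (1 - PowerSeries.X ^ 2) ^ 4 : PowerSeries ℤ) *
      PowerSeries.mk (fun s => (magic4 s : ℤ)) =
    PowerSeries.X ^ 8 + 4 * PowerSeries.X ^ 7 + 18 * PowerSeries.X ^ 6 +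
      36 * PowerSeries.X ^ 5 + 50 * PowerSeries.X ^ 4 + 36 * PowerSeries.X ^ 3 +
      18 * PowerSeries.X ^ 2 + 4 * PowerSeries.X + 1 := by
  obtain ⟨hfin, h⟩ := Elliott.solve_sound Elliott.solve_cells
  have happ : ∀ l : List ℤ, Elliott.ev (l ++ [0, 0]) = Elliott.ev l := by
    intro l
    induction l with
    | nil => simp [Elliott.ev]
    | cons a l ih => simp [Elliott.ev, ih]
  simp only [Elliott.cnt_cells _ (hfin _)] at h
  rw [happ, Elliott.ev_foldr, map_mul, map_list_prod] at h
  simp only [List.map_cons, List.map_nil, List.prod_cons, List.prod_nil, Elliott.ev, map_sub,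
    map_one, map_pow, Polynomial.aeval_X, map_add, map_mul, map_ofNat, mul_one, mul_zero,
    add_zero, pow_one] at h
  have hinj : Function.Injective (PowerSeries.map (Int.castRingHom ℝ)) :=
    PowerSeries.map_injective _ Int.cast_injective
  apply hinj
  have hne : ∀ d : ℕ, d ≠ 0 → (1 - PowerSeries.X ^ d : PowerSeries ℝ) ≠ 0 := by
    intro d hd h0
    simpa [hd] using congrArg PowerSeries.constantCoeff h0
  have hc : ((1 - PowerSeries.X) ^ 3 * (1 - PowerSeries.X ^ 3) * (1 - PowerSeries.X ^ 4) :
      PowerSeries ℝ) ≠ 0 := by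
    refine mul_ne_zero (mul_ne_zero (pow_ne_zero _ ?_) (hne 3 (by norm_num))) (hne 4 (by norm_num))
    simpa using hne 1 one_ne_zero
  have hmk : PowerSeries.map (Int.castRingHom ℝ) (PowerSeries.mk fun s => (magic4 s : ℤ)) =
      PowerSeries.mk fun s => (magic4 s : ℝ) := by
    ext s
    simp
  refine mul_left_cancel₀ hc ?_
  simp only [map_mul, map_pow, map_sub, map_add, map_one, PowerSeries.map_X, map_ofNat, hmk]
  linear_combination h
end

section
/- For every positive integer s, the number of lattice points in the dilation sP of the truncated cube P, namely the cardinality of {x ∈ ℤ³ : 0 ≤ x_i ≤ s for i = 1,2,3, and 3(|x₁−sε₁|+|x₂−sε₂|+|x₃−sε₃|) ≥ s for every ε ∈ {0,1}³}, equals (77/81)s³ + (23/9)s² + (19/9)s + 1 if s ≡ 0 (mod 3); equals (77/81)s³ + (61/27)s² − (7/27)s − 239/81 if s ≡ 1 (mod 3); and equals (77/81)s³ + (65/27)s² + (29/27)s − 31/81 if s ≡ 2 (mod 3). -/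
/-!
The lattice points of the cube `[0, s]³` that are missing from `sP` lie in eight corners, one for
each vertex `sε`: those at ℓ¹-distance less than `s / 3` from it. Two distinct vertices are at
ℓ¹-distance at least `s`, so the corners are disjoint. Writing `m = ⌈s / 3⌉`, each corner is a
reflected copy of the simplex `{a ∈ ℕ³ : a₁ + a₂ + a₃ < m}`, which has
`m (m + 1) (m + 2) / 6` points. Hence the count is `(s + 1)³ - 8 m (m + 1) (m + 2) / 6`, and the
three quasi-polynomial constituents come from `m = s / 3`, `(s + 2) / 3`, `(s + 1) / 3`.
-/

/-- The lattice points of the cube `[0, s]³`. -/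
noncomputable def cubePoints (s : ℕ) : Finset (Fin 3 → ℤ) :=
  Fintype.piFinset fun _ => Finset.Icc (0 : ℤ) s

/-- The lattice points of `[0, s]³` cut off at the vertex `sε`, where `true` stands for `1`. -/
noncomputable def cornerPoints (s : ℕ) (ε : Fin 3 → Bool) : Finset (Fin 3 → ℤ) :=
  {x ∈ cubePoints s | 3 * ∑ i, |x i - (if ε i then (s : ℤ) else 0)| < s}

/-- The points of `ℕ³` with coordinate sum less than `m`, sliced by coordinate sum. -/
def simplexPoints (m : ℕ) : Finset (Fin 3 → ℕ) :=
  (Finset.range m).biUnion fun n => Finset.piAntidiag Finset.univ n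

/-- The point whose coordinates lie at distances `a i` from those of the vertex `sε`, measured
towards the inside of the cube. -/
def reflectPoint (s : ℕ) (ε : Fin 3 → Bool) (a : Fin 3 → ℕ) : Fin 3 → ℤ :=
  fun i => if ε i then (s : ℤ) - a i else a i

theorem mem_cubePoints {s : ℕ} {x : Fin 3 → ℤ} :
    x ∈ cubePoints s ↔ ∀ i, 0 ≤ x i ∧ x i ≤ (s : ℤ) := by
  simp [cubePoints, Fintype.mem_piFinset]

theorem mem_simplexPoints {m : ℕ} {a : Fin 3 → ℕ} :
    a ∈ simplexPoints m ↔ ∑ i, a i < m := by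
  simp [simplexPoints, Finset.mem_piAntidiag]

theorem card_simplexPoints (m : ℕ) : 6 * (simplexPoints m).card = m * (m + 1) * (m + 2) := by
  have hdisj : ∀ i ∈ Finset.range m, ∀ j ∈ Finset.range m, i ≠ j →
      Disjoint (Finset.piAntidiag (Finset.univ : Finset (Fin 3)) i)
        (Finset.piAntidiag Finset.univ j) := by
    intro i _ j _ hij
    rw [Finset.disjoint_left]
    intro a ha hb
    rw [Finset.mem_piAntidiag] at ha hb
    exact hij (ha.1.symm.trans hb.1)
  have hslice : ∀ n : ℕ,
      2 * (Finset.piAntidiag (Finset.univ : Finset (Fin 3)) n).card = (n + 1) * (n + 2) := by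
    intro n
    -- The `Finsupp` antidiagonal is by definition a copy of `piAntidiag`, so its count transfers.
    have hchoose := Finset.card_finsuppAntidiag_nat_eq_choose
      (s := (Finset.univ : Finset (Fin 3))) n
    rw [Finset.finsuppAntidiag, Finset.card_map, Finset.card_attach] at hchoose
    rw [hchoose, Finset.card_univ, Fintype.card_fin,
      show 3 + n - 1 = n + 2 by omega, Nat.choose_symm_add, Nat.choose_two_right,
      Nat.mul_div_cancel' (Nat.even_mul_pred_self (n + 2)).two_dvd]
    simp only [Nat.add_succ_sub_one]
    ring
  rw [simplexPoints, Finset.card_biUnion hdisj]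
  induction m with
  | zero => simp
  | succ k ih =>
    rw [Finset.sum_range_succ, mul_add,
      ih fun i hi j hj => hdisj i (by simp at hi ⊢; omega) j (by simp at hj ⊢; omega)]
    linear_combination 3 * hslice k

theorem reflectPoint_injective (s : ℕ) (ε : Fin 3 → Bool) :
    Function.Injective (reflectPoint s ε) := by
  intro a b hab
  funext i
  have h := congrFun hab i
  simp only [reflectPoint] at h
  split_ifs at h <;> omega

theorem cornerPoints_eq_image (s : ℕ) (ε : Fin 3 → Bool) :
    cornerPoints s ε = (simplexPoints ((s + 2) / 3)).image (reflectPoint s ε) := by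
  ext x
  simp only [cornerPoints, Finset.mem_filter, mem_cubePoints, Finset.mem_image,
    mem_simplexPoints]
  constructor
  · rintro ⟨hx, hlt⟩
    refine ⟨fun i => (x i - (if ε i then (s : ℤ) else 0)).natAbs, ?_, ?_⟩
    · simp only [Fin.sum_univ_three, Int.abs_eq_natAbs] at hlt ⊢
      omega
    · funext i
      have := hx i
      simp only [reflectPoint]
      split_ifs <;> omega
  · rintro ⟨a, ha, rfl⟩
    have habs : ∀ i, |reflectPoint s ε a i - (if ε i then (s : ℤ) else 0)| = a i := by
      intro i
      simp only [reflectPoint]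
      split_ifs <;> simp
    constructor
    · intro i
      have hi : a i ≤ ∑ j, a j := Finset.single_le_sum (fun _ _ => Nat.zero_le _) (by simp)
      simp only [reflectPoint]
      split_ifs <;> omega
    · simp only [habs, Fin.sum_univ_three] at ha ⊢
      omega

theorem card_cornerPoints (s : ℕ) (ε : Fin 3 → Bool) :
    (cornerPoints s ε).card = (simplexPoints ((s + 2) / 3)).card := by
  rw [cornerPoints_eq_image, Finset.card_image_of_injective _ (reflectPoint_injective s ε)]

/-- In a coordinate where two vertices differ, the distances of any point to them add up to at
least `s`, so they cannot both be less than `s / 3`. -/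
theorem disjoint_cornerPoints (s : ℕ) {ε δ : Fin 3 → Bool} (h : ε ≠ δ) :
    Disjoint (cornerPoints s ε) (cornerPoints s δ) := by
  rw [Finset.disjoint_left]
  intro x hx hy
  obtain ⟨i, hi⟩ := Function.ne_iff.mp h
  have h1 := (Finset.mem_filter.mp hx).2
  have h2 := (Finset.mem_filter.mp hy).2
  have hle : ∀ η : Fin 3 → Bool, |x i - (if η i then (s : ℤ) else 0)| ≤
      ∑ j, |x j - (if η j then (s : ℤ) else 0)| := fun η =>
    Finset.single_le_sum (f := fun j => |x j - (if η j then (s : ℤ) else 0)|)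
      (fun _ _ => abs_nonneg _) (Finset.mem_univ i)
  have h3 := hle ε
  have h4 := hle δ
  cases hε : ε i <;> cases hδ : δ i <;> simp [hε, hδ] at hi h3 h4 <;>
    rw [Int.abs_eq_natAbs] at h3 h4 <;> omega

theorem card_truncated_cube (s : ℕ) :
    ((Nat.card {x : Fin 3 → ℤ //
          (∀ i, 0 ≤ x i ∧ x i ≤ (s : ℤ)) ∧
          (∀ ε : Fin 3 → Bool,
            (s : ℤ) ≤ 3 * ∑ i, |x i - (if ε i then (s : ℤ) else 0)|)} : ℚ) =
      ((s : ℚ) + 1) ^ 3 -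
        8 * (((s + 2) / 3 : ℕ) * (((s + 2) / 3 : ℕ) + 1) * (((s + 2) / 3 : ℕ) + 2) / 6)) := by
  have hcard : Nat.card {x : Fin 3 → ℤ //
          (∀ i, 0 ≤ x i ∧ x i ≤ (s : ℤ)) ∧
          (∀ ε : Fin 3 → Bool,
            (s : ℤ) ≤ 3 * ∑ i, |x i - (if ε i then (s : ℤ) else 0)|)} =
      (cubePoints s \ Finset.univ.biUnion (cornerPoints s)).card := by
    refine Nat.subtype_card _ fun x => ?_
    simp only [Finset.mem_sdiff, Finset.mem_biUnion, Finset.mem_univ, true_and, cornerPoints,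
      Finset.mem_filter, mem_cubePoints, not_exists, not_and, not_lt]
    exact ⟨fun h => ⟨h.1, fun ε => h.2 ε h.1⟩, fun h => ⟨h.1, fun ε _ => h.2 ε⟩⟩
  have hsub : Finset.univ.biUnion (cornerPoints s) ⊆ cubePoints s :=
    Finset.biUnion_subset.mpr fun ε _ => Finset.filter_subset _ _
  have hcorners : (Finset.univ.biUnion (cornerPoints s)).card =
      8 * (simplexPoints ((s + 2) / 3)).card := by
    rw [Finset.card_biUnion fun ε _ δ _ h => disjoint_cornerPoints s h]
    simp [card_cornerPoints]
  have hcube : (cubePoints s).card = (s + 1) ^ 3 := by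
    simp [cubePoints, Fintype.card_piFinset]
  have hadd := Finset.card_sdiff_add_card_eq_card hsub
  rw [← hcard, hcorners, hcube] at hadd
  have hsimplex := card_simplexPoints ((s + 2) / 3)
  generalize Nat.card _ = N at hadd ⊢
  generalize (s + 2) / 3 = m at hadd hsimplex ⊢
  qify at hadd hsimplex
  linear_combination hadd - 8 / 6 * hsimplex

open Finset

theorem truncated_cube_ehrhart (s : ℕ) (hs : 0 < s) :
    (s % 3 = 0 →
      ((Nat.card {x : Fin 3 → ℤ //
          (∀ i, 0 ≤ x i ∧ x i ≤ (s : ℤ)) ∧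
          (∀ ε : Fin 3 → Bool,
            (s : ℤ) ≤ 3 * ∑ i, |x i - (if ε i then (s : ℤ) else 0)|)} : ℚ) =
        77 / 81 * (s : ℚ) ^ 3 + 23 / 9 * (s : ℚ) ^ 2 + 19 / 9 * (s : ℚ) + 1)) ∧
    (s % 3 = 1 →
      ((Nat.card {x : Fin 3 → ℤ //
          (∀ i, 0 ≤ x i ∧ x i ≤ (s : ℤ)) ∧
          (∀ ε : Fin 3 → Bool,
            (s : ℤ) ≤ 3 * ∑ i, |x i - (if ε i then (s : ℤ) else 0)|)} : ℚ) =
        77 / 81 * (s : ℚ) ^ 3 + 61 / 27 * (s : ℚ) ^ 2 - 7 / 27 * (s : ℚ) - 239 / 81)) ∧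
    (s % 3 = 2 →
      ((Nat.card {x : Fin 3 → ℤ //
          (∀ i, 0 ≤ x i ∧ x i ≤ (s : ℤ)) ∧
          (∀ ε : Fin 3 → Bool,
            (s : ℤ) ≤ 3 * ∑ i, |x i - (if ε i then (s : ℤ) else 0)|)} : ℚ) =
        77 / 81 * (s : ℚ) ^ 3 + 65 / 27 * (s : ℚ) ^ 2 + 29 / 27 * (s : ℚ) - 31 / 81)) := by
  rw [card_truncated_cube]
  refine ⟨fun h => ?_, fun h => ?_, fun h => ?_⟩
  · obtain ⟨k, rfl⟩ : ∃ k, s = 3 * k := ⟨s / 3, by omega⟩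
    rw [show (3 * k + 2) / 3 = k by omega]
    push_cast
    ring
  · obtain ⟨k, rfl⟩ : ∃ k, s = 3 * k + 1 := ⟨s / 3, by omega⟩
    rw [show (3 * k + 1 + 2) / 3 = k + 1 by omega]
    push_cast
    ring
  · obtain ⟨k, rfl⟩ : ∃ k, s = 3 * k + 2 := ⟨s / 3, by omega⟩
    rw [show (3 * k + 2 + 2) / 3 = k + 1 by omega]
    push_cast
    ring
end
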